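/- Let K be a common function of the two sources, i.e., K = f(S1) = g(S2) almost surely for deterministic maps f, g. Suppose there exist finite-alphabet auxiliary random variables (U0,U1,U2) and a conditional pmf p(u0,u1,u2,x|s1,s2) such that, under the joint distribution p(s1,s2)·p(u0,u1,u2,x|s1,s2)·p(y1,y2|x), the following five strict inequalities hold: H(S1) < I(U0,U1,S1;Y1) − I(U0,U1;S2|S1); H(S2) < I(U0,U2,S2;Y2) − I(U0,U2;S1|S2); H(S1,S2) < I(K,U0,U1,S1;Y1) + I(U2,S2;Y2|K,U0) − I(U1,S1;U2,S2|K,U0); H(S1,S2) < I(U1,S1;Y1|K,U0) + I(K,U0,U2,S2;Y2) − I(U1,S1;U2,S2|K,U0); H(S1,S2) < I(U0,U1,S1;Y1) + I(U0,U2,S2;Y2) − I(U1,S1;U2,S2|K,U0) − I(S1,S2;K,U0). Then the sources (S1,S2) can be reliably transmitted over the DM-BC p(y1,y2|x). -/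

import Mathlib

/-!
The proof is a one-shot random coding argument, evaluated on blocks of length `n` with the weak law
of large numbers.

**Code.** Random hashes `h1, h2` of the source blocks select, together with a free index, a common
codeword `u0` drawn from the marginal law of `U0`. For each receiver `i` the codewords
`ui(si, n0, mi)` are drawn from the law of `Ui` given `(Si, U0)`, one family for every source block
`si`, every common index `n0` and every private index `mi`. Given the source pair, a Marton-type
encoder has the free choice of the indices and of the channel input. Receiver `i` looks for a block
`si` having a codeword pair with the hash of `si` that is jointly typical with its output.

**Encoder.** Instead of fixing an encoding rule, the channel input with the least conditional error
probability is used. It is no worse than the average of the error with respect to the likelihood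
ratios of the target law to the law of the codewords (`min_bound`), provided that the total
likelihood weight is close to one; the latter is a second-moment estimate (`covering`,
`cover_target`). Under the likelihood weights the codewords, the input and the outputs have exactly
the target joint law, so the rest is a union bound over wrong source blocks (`packing`), in which
the wrong block uses either another common codeword or, after a collision of hashes, the same one.

**Rates.** On typical sets all the probability ratios are exponentials of entropies, so that the
error vanishes under eight linear inequalities on five rates (`reliable_of_rates`). Eliminating the
rates (`exists_rates`) leaves five inequalities (`reliable_of_five`). They become the five
hypotheses once the common function `K` is made part of `U0`: since `K` is a function of either
source, it can be inserted into or removed from every entropy in which a source occurs.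
-/

open Real Filter

attribute [local instance] Classical.propDecidable

noncomputable section

namespace CSBC

/-- A probability mass function on a finite type. -/
def IsPMF {Ω : Type*} [Fintype Ω] (p : Ω → ℝ) : Prop :=
  (∀ ω, 0 ≤ p ω) ∧ ∑ ω, p ω = 1

/-- Distribution (pushforward pmf) of a random variable `X` under pmf `p`. -/
def dist {Ω A : Type*} [Fintype Ω] [Fintype A] (p : Ω → ℝ) (X : Ω → A) : A → ℝ :=
  fun a => ∑ ω, if X ω = a then p ω else 0

/-- Shannon entropy of the random variable `X` under the pmf `p`. -/
def H {Ω A : Type*} [Fintype Ω] [Fintype A] (p : Ω → ℝ) (X : Ω → A) : ℝ :=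
  -∑ a, dist p X a * Real.log (dist p X a)

/-- Mutual information `I(X;Y)` under the pmf `p`. -/
def I2 {Ω A B : Type*} [Fintype Ω] [Fintype A] [Fintype B]
    (p : Ω → ℝ) (X : Ω → A) (Y : Ω → B) : ℝ :=
  H p X + H p Y - H p (fun ω => (X ω, Y ω))

/-- Conditional mutual information `I(X;Y|Z)` under the pmf `p`. -/
def CI {Ω A B C : Type*} [Fintype Ω] [Fintype A] [Fintype B] [Fintype C]
    (p : Ω → ℝ) (X : Ω → A) (Y : Ω → B) (Z : Ω → C) : ℝ :=
  H p (fun ω => (X ω, Z ω)) + H p (fun ω => (Y ω, Z ω))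
    - H p (fun ω => (X ω, Y ω, Z ω)) - H p Z

end CSBC

open CSBC
namespace CSBC

/-- The five inequalities of Han and Costa's theorem for sources `S1, S2`,
auxiliary triple `U0, U1, U2`, common variable `K`, and channel outputs `Y1, Y2`. -/
def HCfive {Ω A1 A2 B0 B1 B2 C1 C2 Kt : Type*} [Fintype Ω] [Fintype A1] [Fintype A2]
    [Fintype B0] [Fintype B1] [Fintype B2] [Fintype C1] [Fintype C2] [Fintype Kt]
    (p : Ω → ℝ) (S1 : Ω → A1) (S2 : Ω → A2) (U0 : Ω → B0) (U1 : Ω → B1) (U2 : Ω → B2)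
    (Y1 : Ω → C1) (Y2 : Ω → C2) (K : Ω → Kt) : Prop :=
  H p S1 < I2 p (fun ω => (U0 ω, U1 ω, S1 ω)) Y1
      - CI p (fun ω => (U0 ω, U1 ω)) S2 S1 ∧
  H p S2 < I2 p (fun ω => (U0 ω, U2 ω, S2 ω)) Y2
      - CI p (fun ω => (U0 ω, U2 ω)) S1 S2 ∧
  H p (fun ω => (S1 ω, S2 ω)) < I2 p (fun ω => (K ω, U0 ω, U1 ω, S1 ω)) Y1
      + CI p (fun ω => (U2 ω, S2 ω)) Y2 (fun ω => (K ω, U0 ω))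
      - CI p (fun ω => (U1 ω, S1 ω)) (fun ω => (U2 ω, S2 ω)) (fun ω => (K ω, U0 ω)) ∧
  H p (fun ω => (S1 ω, S2 ω)) < CI p (fun ω => (U1 ω, S1 ω)) Y1 (fun ω => (K ω, U0 ω))
      + I2 p (fun ω => (K ω, U0 ω, U2 ω, S2 ω)) Y2
      - CI p (fun ω => (U1 ω, S1 ω)) (fun ω => (U2 ω, S2 ω)) (fun ω => (K ω, U0 ω)) ∧
  H p (fun ω => (S1 ω, S2 ω)) < I2 p (fun ω => (U0 ω, U1 ω, S1 ω)) Y1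
      + I2 p (fun ω => (U0 ω, U2 ω, S2 ω)) Y2
      - CI p (fun ω => (U1 ω, S1 ω)) (fun ω => (U2 ω, S2 ω)) (fun ω => (K ω, U0 ω))
      - I2 p (fun ω => (S1 ω, S2 ω)) (fun ω => (K ω, U0 ω))

end CSBC
namespace CSBC

/-- Joint law `p(s1,s2) · p(u0,u1,u2,x|s1,s2) · p(y1,y2|x)` on the product space. -/
def jointLaw {σ1 σ2 𝒰0 𝒰1 𝒰2 𝒳 𝒴1 𝒴2 : Type*}
    (q : σ1 × σ2 → ℝ) (r : σ1 × σ2 → 𝒰0 × 𝒰1 × 𝒰2 × 𝒳 → ℝ) (W : 𝒳 → 𝒴1 × 𝒴2 → ℝ) :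
    σ1 × σ2 × 𝒰0 × 𝒰1 × 𝒰2 × 𝒳 × 𝒴1 × 𝒴2 → ℝ :=
  fun ω => q (ω.1, ω.2.1) * r (ω.1, ω.2.1) (ω.2.2.1, ω.2.2.2.1, ω.2.2.2.2.1, ω.2.2.2.2.2.1)
    * W ω.2.2.2.2.2.1 (ω.2.2.2.2.2.2.1, ω.2.2.2.2.2.2.2)

/-- Average probability of error of a length-`n` code `(enc, dec1, dec2)` for transmitting
the i.i.d. source with per-letter pmf `q` over the DM-BC with per-letter law `W`. -/
def errProb {σ1 σ2 𝒳 𝒴1 𝒴2 : Type*} [Fintype σ1] [Fintype σ2] [Fintype 𝒳]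
    [Fintype 𝒴1] [Fintype 𝒴2]
    (q : σ1 × σ2 → ℝ) (W : 𝒳 → 𝒴1 × 𝒴2 → ℝ) (n : ℕ)
    (enc : (Fin n → σ1 × σ2) → Fin n → 𝒳)
    (dec1 : (Fin n → 𝒴1) → Fin n → σ1)
    (dec2 : (Fin n → 𝒴2) → Fin n → σ2) : ℝ :=
  ∑ s : Fin n → σ1 × σ2, ∑ y : Fin n → 𝒴1 × 𝒴2,
    (∏ i, q (s i)) * (∏ i, W (enc s i) (y i)) *
      (if dec1 (fun i => (y i).1) = (fun i => (s i).1) ∧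
          dec2 (fun i => (y i).2) = (fun i => (s i).2) then 0 else 1)

/-- The sources with joint pmf `q` can be reliably transmitted over the DM-BC `W`:
there is a sequence of codes whose average probability of error tends to `0`. -/
def Reliable {σ1 σ2 𝒳 𝒴1 𝒴2 : Type*} [Fintype σ1] [Fintype σ2] [Fintype 𝒳]
    [Fintype 𝒴1] [Fintype 𝒴2]
    (q : σ1 × σ2 → ℝ) (W : 𝒳 → 𝒴1 × 𝒴2 → ℝ) : Prop :=
  ∃ (enc : (n : ℕ) → (Fin n → σ1 × σ2) → Fin n → 𝒳)
    (dec1 : (n : ℕ) → (Fin n → 𝒴1) → Fin n → σ1)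
    (dec2 : (n : ℕ) → (Fin n → 𝒴2) → Fin n → σ2),
    Tendsto (fun n => errProb q W n (enc n) (dec1 n) (dec2 n)) atTop (nhds 0)

end CSBC

/-! ### Finite expectations and product weights -/

namespace CSBC

/-- Expectation of `F` with respect to the weight function `w` on a finite type. -/
def Ex {Ω : Type*} [Fintype Ω] (w F : Ω → ℝ) : ℝ := ∑ ω, w ω * F ω

/-- Product weight on functions: independent coordinates `c i` with law `μ i`. -/
def wpi {ι A : Type*} [Fintype ι] (μ : ι → A → ℝ) : (ι → A) → ℝ := fun c => ∏ i, μ i (c i)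

/-- Product weight on a pair: independent components. -/
def wprod {A B : Type*} (w : A → ℝ) (v : B → ℝ) : A × B → ℝ := fun x => w x.1 * v x.2

/-- Indicator of a proposition. -/
def ind (P : Prop) : ℝ := if P then 1 else 0

lemma ind_true {P : Prop} (h : P) : ind P = 1 := if_pos h

lemma ind_false {P : Prop} (h : ¬ P) : ind P = 0 := if_neg h

lemma ind_nonneg (P : Prop) : 0 ≤ ind P := by unfold ind; split_ifs <;> norm_num

lemma ind_le_one (P : Prop) : ind P ≤ 1 := by unfold ind; split_ifs <;> norm_num

lemma ind_mono {P Q : Prop} (h : P → Q) : ind P ≤ ind Q := by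
  by_cases hP : P
  · rw [ind_true hP, ind_true (h hP)]
  · rw [ind_false hP]; exact ind_nonneg Q

lemma ind_and (P Q : Prop) : ind (P ∧ Q) = ind P * ind Q := by
  by_cases hP : P <;> by_cases hQ : Q <;> simp [ind, hP, hQ]

lemma sum_ind_eq {A : Type*} [Fintype A] (a : A) : ∑ x, ind (a = x) = 1 := by
  simp [ind]

section Ex
variable {Ω A B ι : Type*} [Fintype Ω] [Fintype A] [Fintype B] [Fintype ι] [DecidableEq ι]

lemma Ex_add (w F G : Ω → ℝ) : Ex w (fun ω => F ω + G ω) = Ex w F + Ex w G := by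
  simp [Ex, mul_add, Finset.sum_add_distrib]

lemma Ex_mul_left (w F : Ω → ℝ) (k : ℝ) : Ex w (fun ω => k * F ω) = k * Ex w F := by
  simp only [Ex, Finset.mul_sum]
  exact Finset.sum_congr rfl fun _ _ => by ring

lemma Ex_mul_right (w F : Ω → ℝ) (k : ℝ) : Ex w (fun ω => F ω * k) = Ex w F * k := by
  simp only [Ex, Finset.sum_mul]
  exact Finset.sum_congr rfl fun _ _ => by ring

lemma Ex_sum {κ : Type*} (t : Finset κ) (w : Ω → ℝ) (F : κ → Ω → ℝ) :
    Ex w (fun ω => ∑ k ∈ t, F k ω) = ∑ k ∈ t, Ex w (F k) := by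
  simp only [Ex, Finset.mul_sum]
  exact Finset.sum_comm

lemma Ex_const {w : Ω → ℝ} (hw : IsPMF w) (k : ℝ) : Ex w (fun _ => k) = k := by
  simp [Ex, ← Finset.sum_mul, hw.2]

lemma Ex_mono {w F G : Ω → ℝ} (hw : ∀ ω, 0 ≤ w ω) (h : ∀ ω, F ω ≤ G ω) : Ex w F ≤ Ex w G :=
  Finset.sum_le_sum fun ω _ => mul_le_mul_of_nonneg_left (h ω) (hw ω)

lemma Ex_nonneg {w F : Ω → ℝ} (hw : ∀ ω, 0 ≤ w ω) (h : ∀ ω, 0 ≤ F ω) : 0 ≤ Ex w F :=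
  Finset.sum_nonneg fun ω _ => mul_nonneg (hw ω) (h ω)

lemma Ex_congr {w F G : Ω → ℝ} (h : ∀ ω, F ω = G ω) : Ex w F = Ex w G := by
  rw [funext h]

lemma Ex_exists {w F : Ω → ℝ} (hw : IsPMF w) {b : ℝ} (h : Ex w F ≤ b) : ∃ ω, F ω ≤ b := by
  by_contra hc
  push Not at hc
  obtain ⟨ω₀, h₀⟩ : ∃ ω, 0 < w ω := by
    by_contra hn
    push Not at hn
    have := Finset.sum_nonpos (s := Finset.univ) fun ω _ => hn ω
    rw [hw.2] at this
    linarith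
  have h1 : Ex w (fun _ => b) < Ex w F :=
    Finset.sum_lt_sum (fun ω _ => mul_le_mul_of_nonneg_left (hc ω).le (hw.1 ω))
      ⟨ω₀, Finset.mem_univ _, mul_lt_mul_of_pos_left (hc ω₀) h₀⟩
  rw [Ex_const hw] at h1
  linarith

lemma Ex_comm (w : A → ℝ) (v : B → ℝ) (F : A → B → ℝ) :
    Ex w (fun a => Ex v (fun b => F a b)) = Ex v (fun b => Ex w (fun a => F a b)) := by
  simp only [Ex, Finset.mul_sum]
  rw [Finset.sum_comm]
  exact Finset.sum_congr rfl fun _ _ => Finset.sum_congr rfl fun _ _ => by ring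

lemma Ex_wprod (w : A → ℝ) (v : B → ℝ) (F : A × B → ℝ) :
    Ex (wprod w v) F = Ex w (fun a => Ex v (fun b => F (a, b))) := by
  simp only [Ex, wprod, Fintype.sum_prod_type, Finset.mul_sum]
  exact Finset.sum_congr rfl fun _ _ => Finset.sum_congr rfl fun _ _ => by ring

lemma sum_wpi (μ : ι → A → ℝ) : ∑ c, wpi μ c = ∏ i, ∑ a, μ i a := by
  simp only [wpi]
  rw [Finset.prod_univ_sum]
  simp

lemma IsPMF.wprod {w : A → ℝ} {v : B → ℝ} (hw : IsPMF w) (hv : IsPMF v) :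
    IsPMF (wprod w v) := by
  refine ⟨fun x => mul_nonneg (hw.1 _) (hv.1 _), ?_⟩
  simp [CSBC.wprod, Fintype.sum_prod_type, ← Finset.mul_sum, hv.2, hw.2]

lemma IsPMF.wpi {μ : ι → A → ℝ} (h : ∀ i, IsPMF (μ i)) : IsPMF (wpi μ) := by
  refine ⟨fun c => Finset.prod_nonneg fun i _ => (h i).1 _, ?_⟩
  rw [sum_wpi]
  exact Finset.prod_eq_one fun i _ => (h i).2

/-- The joint law of two distinct coordinates of a product weight. -/
lemma wpi_two {μ : ι → A → ℝ} (h : ∀ i, IsPMF (μ i)) {i j : ι} (hij : i ≠ j)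
    (F : A → A → ℝ) :
    Ex (wpi μ) (fun c => F (c i) (c j)) = Ex (μ i) (fun a => Ex (μ j) (fun b => F a b)) := by
  classical
  have key : ∀ a b, ∑ c, wpi μ c * ((if c i = a then 1 else 0) * (if c j = b then 1 else 0))
      = μ i a * μ j b := by
    intro a b
    have e : ∀ c : ι → A, wpi μ c * ((if c i = a then 1 else 0) * (if c j = b then 1 else 0))
        = wpi (fun k x => μ k x * ((if k = i then (if x = a then 1 else 0) else 1)
            * (if k = j then (if x = b then 1 else 0) else 1))) c := by
      intro c
      simp only [wpi, Finset.prod_mul_distrib]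
      simp
    rw [Finset.sum_congr rfl fun c _ => e c, sum_wpi]
    rw [← Finset.prod_subset (Finset.subset_univ {i, j})]
    · rw [Finset.prod_pair hij]
      simp [hij, hij.symm]
    · intro k _ hk
      simp only [Finset.mem_insert, Finset.mem_singleton, not_or] at hk
      simp [hk.1, hk.2, (h k).2]
  have e2 : ∀ c : ι → A, wpi μ c * F (c i) (c j) = ∑ a, ∑ b,
      (wpi μ c * ((if c i = a then 1 else 0) * (if c j = b then 1 else 0))) * F a b := by
    intro c
    rw [Finset.sum_eq_single (c i), Finset.sum_eq_single (c j)]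
    · simp
    · intro b _ hb; simp [hb.symm]
    · simp
    · intro a _ ha; simp [ha.symm]
    · simp
  unfold Ex
  rw [Finset.sum_congr rfl fun c _ => e2 c, Finset.sum_comm]
  refine Finset.sum_congr rfl fun a _ => ?_
  rw [Finset.sum_comm, Finset.mul_sum]
  refine Finset.sum_congr rfl fun b _ => ?_
  rw [← Finset.sum_mul, key]
  ring

/-- The law of one coordinate of a product weight. -/
lemma wpi_one {μ : ι → A → ℝ} (h : ∀ i, IsPMF (μ i)) (i : ι) (F : A → ℝ) :
    Ex (wpi μ) (fun c => F (c i)) = Ex (μ i) F := by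
  classical
  have key : ∀ a, ∑ c, wpi μ c * (if c i = a then 1 else 0) = μ i a := by
    intro a
    have e : ∀ c : ι → A, wpi μ c * (if c i = a then 1 else 0)
        = wpi (fun k x => μ k x * (if k = i then (if x = a then 1 else 0) else 1)) c := by
      intro c
      simp only [wpi, Finset.prod_mul_distrib]
      simp
    rw [Finset.sum_congr rfl fun c _ => e c, sum_wpi]
    rw [Finset.prod_eq_single i]
    · simp
    · intro k _ hk
      simp [hk, (h k).2]
    · simp
  have e2 : ∀ c : ι → A, wpi μ c * F (c i) = ∑ a,
      (wpi μ c * (if c i = a then 1 else 0)) * F a := by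
    intro c
    rw [Finset.sum_eq_single (c i)]
    · simp
    · intro a _ ha; simp [ha.symm]
    · simp
  unfold Ex
  rw [Finset.sum_congr rfl fun c _ => e2 c, Finset.sum_comm]
  refine Finset.sum_congr rfl fun a _ => ?_
  rw [← Finset.sum_mul, key]

end Ex
end CSBC

/-! ### Random codebooks and covering -/

namespace CSBC

/-- Codebooks: the codewords `u0(n0)`, and tables from which `u1(s1, n0, m1)` and `u2(s2, n0, m2)`
are read. The tables are also indexed by the value of `u0(n0)`, so that all entries are
independent. -/
abbrev Cb (S1 S2 U0 U1 U2 N0 M1 M2 : Type*) :=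
  (N0 → U0) × (S1 × U0 × N0 × M1 → U1) × (S2 × U0 × N0 × M2 → U2)

section Codebook
variable {S1 S2 U0 U1 U2 N0 M0 M1 M2 : Type*} [Fintype S1] [Fintype S2] [Fintype U0] [Fintype U1]
  [Fintype U2] [Fintype N0] [Fintype M0] [Fintype M1] [Fintype M2]

/-- Law of the random codebook: `u0(n0) ∼ Q0`, and the table entries at `(s1, u0, n0, m1)` and
`(s2, u0, n0, m2)` have laws `Q1 s1 u0` and `Q2 s2 u0`, all independent. -/
def wC (Q0 : U0 → ℝ) (Q1 : S1 → U0 → U1 → ℝ) (Q2 : S2 → U0 → U2 → ℝ) :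
    Cb S1 S2 U0 U1 U2 N0 M1 M2 → ℝ :=
  wprod (wpi fun _ => Q0) (wprod (wpi fun i => Q1 i.1 i.2.1) (wpi fun i => Q2 i.1 i.2.1))

/-- The codeword `u1(s1, n0, m1)`. -/
def cw1 (c : Cb S1 S2 U0 U1 U2 N0 M1 M2) (s1 : S1) (n0 : N0) (m1 : M1) : U1 :=
  c.2.1 (s1, c.1 n0, n0, m1)

/-- The codeword `u2(s2, n0, m2)`. -/
def cw2 (c : Cb S1 S2 U0 U1 U2 N0 M1 M2) (s2 : S2) (n0 : N0) (m2 : M2) : U2 :=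
  c.2.2 (s2, c.1 n0, n0, m2)

variable {Q0 : U0 → ℝ} {Q1 : S1 → U0 → U1 → ℝ} {Q2 : S2 → U0 → U2 → ℝ}
  (h0 : IsPMF Q0) (h1 : ∀ s u, IsPMF (Q1 s u)) (h2 : ∀ s u, IsPMF (Q2 s u))

include h0 h1 h2

lemma isPMF_wC : IsPMF (wC Q0 Q1 Q2 : Cb S1 S2 U0 U1 U2 N0 M1 M2 → ℝ) :=
  (IsPMF.wpi fun _ => h0).wprod ((IsPMF.wpi fun _ => h1 _ _).wprod (IsPMF.wpi fun _ => h2 _ _))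

omit h0 h1 h2 in
lemma Ex_wC (F : Cb S1 S2 U0 U1 U2 N0 M1 M2 → ℝ) :
    Ex (wC Q0 Q1 Q2) F = Ex (wpi fun _ => Q0) fun c0 =>
      Ex (wpi fun i : S1 × U0 × N0 × M1 => Q1 i.1 i.2.1) fun c1 =>
      Ex (wpi fun i : S2 × U0 × N0 × M2 => Q2 i.1 i.2.1) fun c2 => F (c0, c1, c2) := by
  rw [wC, Ex_wprod]
  exact Ex_congr fun _ => Ex_wprod _ _ _

/-- Law of one triple of codewords. -/
lemma Ex_wC_one (s1 : S1) (s2 : S2) (n : N0) (m1 : M1) (m2 : M2) (F : U0 → U1 → U2 → ℝ) :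
    Ex (wC Q0 Q1 Q2) (fun c => F (c.1 n) (cw1 c s1 n m1) (cw2 c s2 n m2)) =
      Ex Q0 fun u0 => Ex (Q1 s1 u0) fun u1 => Ex (Q2 s2 u0) fun u2 => F u0 u1 u2 := by
  rw [Ex_wC]
  simp only [cw1, cw2]
  rw [← wpi_one (fun _ : N0 => h0) n]
  refine Ex_congr fun c0 => ?_
  rw [← wpi_one (fun i : S1 × U0 × N0 × M1 => h1 i.1 i.2.1) (s1, c0 n, n, m1)]
  exact Ex_congr fun c1 =>
    wpi_one (fun i : S2 × U0 × N0 × M2 => h2 i.1 i.2.1) (s2, c0 n, n, m2) _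

/-- Same `n`, same `m1`, distinct `m2`. -/
lemma Ex_wC_same1 (s1 : S1) (s2 : S2) (n : N0) (m1 : M1) {m2 m2' : M2} (hm : m2 ≠ m2')
    (F : U0 → U1 → U2 → ℝ) :
    Ex (wC Q0 Q1 Q2) (fun c => F (c.1 n) (cw1 c s1 n m1) (cw2 c s2 n m2) *
        F (c.1 n) (cw1 c s1 n m1) (cw2 c s2 n m2')) =
      Ex Q0 fun u0 => Ex (Q1 s1 u0) fun u1 => (Ex (Q2 s2 u0) fun u2 => F u0 u1 u2) ^ 2 := by
  rw [Ex_wC]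
  simp only [cw1, cw2]
  rw [← wpi_one (fun _ : N0 => h0) n]
  refine Ex_congr fun c0 => ?_
  rw [← wpi_one (fun i : S1 × U0 × N0 × M1 => h1 i.1 i.2.1) (s1, c0 n, n, m1)]
  refine Ex_congr fun c1 => ?_
  rw [wpi_two (fun i : S2 × U0 × N0 × M2 => h2 i.1 i.2.1)
    (i := (s2, c0 n, n, m2)) (j := (s2, c0 n, n, m2')) (by simpa using hm)
    (fun b b' => F (c0 n) (c1 (s1, c0 n, n, m1)) b * F (c0 n) (c1 (s1, c0 n, n, m1)) b')]
  simp only [Ex_mul_left, Ex_mul_right, sq]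

/-- Same `n`, distinct `m1`, same `m2`. -/
lemma Ex_wC_same2 (s1 : S1) (s2 : S2) (n : N0) {m1 m1' : M1} (m2 : M2) (hm : m1 ≠ m1')
    (F : U0 → U1 → U2 → ℝ) :
    Ex (wC Q0 Q1 Q2) (fun c => F (c.1 n) (cw1 c s1 n m1) (cw2 c s2 n m2) *
        F (c.1 n) (cw1 c s1 n m1') (cw2 c s2 n m2)) =
      Ex Q0 fun u0 => Ex (Q2 s2 u0) fun u2 => (Ex (Q1 s1 u0) fun u1 => F u0 u1 u2) ^ 2 := by
  rw [Ex_wC]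
  simp only [cw1, cw2]
  rw [← wpi_one (fun _ : N0 => h0) n]
  refine Ex_congr fun c0 => ?_
  rw [Ex_comm, ← wpi_one (fun i : S2 × U0 × N0 × M2 => h2 i.1 i.2.1) (s2, c0 n, n, m2)]
  refine Ex_congr fun c2 => ?_
  rw [wpi_two (fun i : S1 × U0 × N0 × M1 => h1 i.1 i.2.1)
    (i := (s1, c0 n, n, m1)) (j := (s1, c0 n, n, m1')) (by simpa using hm)
    (fun b b' => F (c0 n) b (c2 (s2, c0 n, n, m2)) * F (c0 n) b' (c2 (s2, c0 n, n, m2)))]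
  simp only [Ex_mul_left, Ex_mul_right, sq]

omit h0 in
/-- For fixed `u0`-codewords, two triples without common table entries are independent. -/
lemma Ex_tables (i i' : S1 × U0 × N0 × M1) (k k' : S2 × U0 × N0 × M2) (hi : i ≠ i') (hk : k ≠ k')
    (F G : U1 → U2 → ℝ) :
    (Ex (wpi fun i : S1 × U0 × N0 × M1 => Q1 i.1 i.2.1) fun c1 =>
      Ex (wpi fun i : S2 × U0 × N0 × M2 => Q2 i.1 i.2.1) fun c2 =>
        F (c1 i) (c2 k) * G (c1 i') (c2 k')) =
    (Ex (Q1 i.1 i.2.1) fun u1 => Ex (Q2 k.1 k.2.1) fun u2 => F u1 u2) *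
    (Ex (Q1 i'.1 i'.2.1) fun u1 => Ex (Q2 k'.1 k'.2.1) fun u2 => G u1 u2) := by
  have e : ∀ c1 : S1 × U0 × N0 × M1 → U1,
      (Ex (wpi fun i : S2 × U0 × N0 × M2 => Q2 i.1 i.2.1) fun c2 =>
        F (c1 i) (c2 k) * G (c1 i') (c2 k')) =
      (Ex (Q2 k.1 k.2.1) fun u2 => F (c1 i) u2) * (Ex (Q2 k'.1 k'.2.1) fun u2 => G (c1 i') u2) := by
    intro c1
    rw [wpi_two (fun i : S2 × U0 × N0 × M2 => h2 i.1 i.2.1) hk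
      (fun b b' => F (c1 i) b * G (c1 i') b')]
    simp only [Ex_mul_left, Ex_mul_right]
  rw [Ex_congr e, wpi_two (fun i : S1 × U0 × N0 × M1 => h1 i.1 i.2.1) hi
    (fun a a' => (Ex (Q2 k.1 k.2.1) fun u2 => F a u2) * (Ex (Q2 k'.1 k'.2.1) fun u2 => G a' u2))]
  simp only [Ex_mul_left, Ex_mul_right]

/-- Same `n`, distinct `m1`, distinct `m2`. -/
lemma Ex_wC_same0 (s1 : S1) (s2 : S2) (n : N0) {m1 m1' : M1} {m2 m2' : M2} (hm : m1 ≠ m1')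
    (hm2 : m2 ≠ m2') (F : U0 → U1 → U2 → ℝ) :
    Ex (wC Q0 Q1 Q2) (fun c => F (c.1 n) (cw1 c s1 n m1) (cw2 c s2 n m2) *
        F (c.1 n) (cw1 c s1 n m1') (cw2 c s2 n m2')) =
      Ex Q0 fun u0 => (Ex (Q1 s1 u0) fun u1 => Ex (Q2 s2 u0) fun u2 => F u0 u1 u2) ^ 2 := by
  rw [Ex_wC]
  simp only [cw1, cw2]
  rw [← wpi_one (fun _ : N0 => h0) n]
  refine Ex_congr fun c0 => ?_
  rw [Ex_tables h1 h2 (s1, c0 n, n, m1) (s1, c0 n, n, m1') (s2, c0 n, n, m2) (s2, c0 n, n, m2')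
    (by simpa using hm) (by simpa using hm2) (F (c0 n)) (F (c0 n)), sq]

/-- Distinct `n`. -/
lemma Ex_wC_diff (s1 : S1) (s2 : S2) {n n' : N0} (hn : n ≠ n') (m1 m1' : M1) (m2 m2' : M2)
    (F : U0 → U1 → U2 → ℝ) :
    Ex (wC Q0 Q1 Q2) (fun c => F (c.1 n) (cw1 c s1 n m1) (cw2 c s2 n m2) *
        F (c.1 n') (cw1 c s1 n' m1') (cw2 c s2 n' m2')) =
      (Ex Q0 fun u0 => Ex (Q1 s1 u0) fun u1 => Ex (Q2 s2 u0) fun u2 => F u0 u1 u2) ^ 2 := by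
  rw [Ex_wC]
  simp only [cw1, cw2]
  have e : ∀ c0 : N0 → U0, _ := fun c0 =>
    Ex_tables h1 h2 (s1, c0 n, n, m1) (s1, c0 n', n', m1') (s2, c0 n, n, m2) (s2, c0 n', n', m2')
    (by simp [hn]) (by simp [hn]) (F (c0 n)) (F (c0 n'))
  rw [Ex_congr e]
  rw [wpi_two (fun _ : N0 => h0) hn (fun a b =>
    (Ex (Q1 s1 a) fun u1 => Ex (Q2 s2 a) fun u2 => F a u1 u2) *
    (Ex (Q1 s1 b) fun u1 => Ex (Q2 s2 b) fun u2 => F b u1 u2))]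
  simp only [Ex_mul_left, Ex_mul_right, sq]

/-- Second-moment (mutual covering) bound: the normalised sum of the likelihood weights of all the
codeword triples available for one source pair is close to one. -/
lemma covering (j : M0 → N0) (hj : Function.Injective j) [Nonempty M0] [Nonempty M1] [Nonempty M2]
    (s1 : S1) (s2 : S2) (ℓ : U0 → U1 → U2 → ℝ) (t K0 K01 K02 K012 : ℝ)
    (ht : (Ex Q0 fun u0 => Ex (Q1 s1 u0) fun u1 => Ex (Q2 s2 u0) fun u2 => ℓ u0 u1 u2) = t)
    (ht0 : 0 ≤ t) (ht1 : t ≤ 1)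
    (hK0 : (Ex Q0 fun u0 => (Ex (Q1 s1 u0) fun u1 => Ex (Q2 s2 u0) fun u2 => ℓ u0 u1 u2) ^ 2) ≤ K0)
    (hK01 : (Ex Q0 fun u0 => Ex (Q1 s1 u0) fun u1 => (Ex (Q2 s2 u0) fun u2 => ℓ u0 u1 u2) ^ 2)
      ≤ K01)
    (hK02 : (Ex Q0 fun u0 => Ex (Q2 s2 u0) fun u2 => (Ex (Q1 s1 u0) fun u1 => ℓ u0 u1 u2) ^ 2)
      ≤ K02)
    (hK012 : (Ex Q0 fun u0 => Ex (Q1 s1 u0) fun u1 => Ex (Q2 s2 u0) fun u2 => ℓ u0 u1 u2 ^ 2)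
      ≤ K012)
    (k0 : 0 ≤ K0) (k1 : 0 ≤ K01) (k2 : 0 ≤ K02) :
    Ex (wC Q0 Q1 Q2) (fun c => ((∑ m0 : M0, ∑ m1 : M1, ∑ m2 : M2,
        ℓ (c.1 (j m0)) (cw1 c s1 (j m0) m1) (cw2 c s2 (j m0) m2)) /
        (Fintype.card M0 * Fintype.card M1 * Fintype.card M2 : ℝ) - 1) ^ 2) ≤
      2 * (1 - t) + K0 / Fintype.card M0 + K01 / (Fintype.card M0 * Fintype.card M1)
        + K02 / (Fintype.card M0 * Fintype.card M2)
        + K012 / (Fintype.card M0 * Fintype.card M1 * Fintype.card M2) := by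
  set X : M0 × M1 × M2 → Cb S1 S2 U0 U1 U2 N0 M1 M2 → ℝ := fun m c =>
    ℓ (c.1 (j m.1)) (cw1 c s1 (j m.1) m.2.1) (cw2 c s2 (j m.1) m.2.2) with hX
  set b0 : ℝ := (Fintype.card M0 : ℝ)
  set b1 : ℝ := (Fintype.card M1 : ℝ)
  set b2 : ℝ := (Fintype.card M2 : ℝ)
  have p0 : 0 < b0 := by simp [b0, Fintype.card_pos]
  have p1 : 0 < b1 := by simp [b1, Fintype.card_pos]
  have p2 : 0 < b2 := by simp [b2, Fintype.card_pos]
  have hone : ∀ m, Ex (wC Q0 Q1 Q2) (X m) = t := by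
    intro m
    rw [← ht]
    exact Ex_wC_one h0 h1 h2 s1 s2 (j m.1) m.2.1 m.2.2 ℓ
  have hpair : ∀ m m' : M0 × M1 × M2, Ex (wC Q0 Q1 Q2) (fun c => X m c * X m' c) ≤
      1 + ind (m.1 = m'.1) * (K0 + ind (m.2.1 = m'.2.1) * K01 +
        ind (m.2.2 = m'.2.2) * K02 +
        ind (m.2.1 = m'.2.1) * ind (m.2.2 = m'.2.2) * K012) := by
    rintro ⟨a, b, d⟩ ⟨a', b', d'⟩
    simp only [hX]
    by_cases ha : a = a'
    · subst ha
      by_cases hb : b = b'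
      · subst hb
        by_cases hd : d = d'
        · subst hd
          simp only [← sq]
          rw [Ex_wC_one h0 h1 h2 s1 s2 (j a) b d (fun a b c => ℓ a b c ^ 2)]
          simp only [ind_true]
          linarith
        · rw [Ex_wC_same1 h0 h1 h2 s1 s2 (j a) b hd ℓ]
          simp only [ind_true, ind_false hd]
          linarith
      · by_cases hd : d = d'
        · subst hd
          rw [Ex_wC_same2 h0 h1 h2 s1 s2 (j a) d hb ℓ]
          simp only [ind_true, ind_false hb]
          linarith
        · rw [Ex_wC_same0 h0 h1 h2 s1 s2 (j a) hb hd ℓ]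
          simp only [ind_true, ind_false hb, ind_false hd]
          linarith
    · rw [Ex_wC_diff h0 h1 h2 s1 s2 (fun h => ha (hj h)) b b' d d' ℓ, ht]
      simp only [ind_false ha]
      nlinarith
  have e : ∀ c : Cb S1 S2 U0 U1 U2 N0 M1 M2, ((∑ m0 : M0, ∑ m1 : M1, ∑ m2 : M2,
        ℓ (c.1 (j m0)) (cw1 c s1 (j m0) m1) (cw2 c s2 (j m0) m2)) / (b0 * b1 * b2) - 1) ^ 2 =
      (1 / (b0 * b1 * b2) ^ 2) * (∑ m, ∑ m', X m c * X m' c) +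
        ((-(2 / (b0 * b1 * b2))) * (∑ m, X m c) + 1) := by
    intro c
    rw [← Finset.sum_mul_sum]
    simp only [hX, Fintype.sum_prod_type]
    field_simp
    ring
  rw [Ex_congr e, Ex_add, Ex_add, Ex_mul_left, Ex_mul_left, Ex_const (isPMF_wC h0 h1 h2), Ex_sum,
    Ex_sum, Finset.sum_congr rfl fun m _ => hone m]
  have hs : ∑ m, Ex (wC Q0 Q1 Q2) (fun c => ∑ m', X m c * X m' c) ≤
      (b0 * b1 * b2) ^ 2 + b0 * (b1 * b2) ^ 2 * K0 + b0 * b1 * b2 ^ 2 * K01 + b0 * b1 ^ 2 * b2 * K02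
        + b0 * b1 * b2 * K012 := by
    have : ∑ m, Ex (wC Q0 Q1 Q2) (fun c => ∑ m', X m c * X m' c) ≤ ∑ m : M0 × M1 × M2,
       ∑ m' : M0 × M1 × M2, (1 + ind (m.1 = m'.1) *
        (K0 + ind (m.2.1 = m'.2.1) * K01 +
        ind (m.2.2 = m'.2.2) * K02 +
        ind (m.2.1 = m'.2.1) * ind (m.2.2 = m'.2.2) * K012)) := by
      refine Finset.sum_le_sum fun m _ => ?_
      rw [Ex_sum]
      exact Finset.sum_le_sum fun m' _ => hpair m m'
    refine this.trans (le_of_eq ?_)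
    have inner : ∀ m : M0 × M1 × M2, ∑ m' : M0 × M1 × M2, (1 + ind (m.1 = m'.1) *
        (K0 + ind (m.2.1 = m'.2.1) * K01 +
        ind (m.2.2 = m'.2.2) * K02 +
        ind (m.2.1 = m'.2.1) * ind (m.2.2 = m'.2.2) * K012)) =
        b0 * b1 * b2 + (b1 * b2 * K0 + b2 * K01 + b1 * K02 + K012) := by
      rintro ⟨a, b, d⟩
      simp only [Fintype.sum_prod_type, Finset.sum_add_distrib, ← Finset.mul_sum,
        ← Finset.sum_mul, sum_ind_eq, Finset.sum_const, Finset.card_univ, nsmul_eq_mul,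
        Fintype.card_prod, Nat.cast_mul]
      simp only [b0, b1, b2]
      ring
    simp only [inner, Finset.sum_const, Finset.card_univ, nsmul_eq_mul, Fintype.card_prod,
      Nat.cast_mul]
    simp only [b0, b1, b2]
    ring
  simp only [Finset.sum_const, Finset.card_univ, nsmul_eq_mul, Fintype.card_prod, Nat.cast_mul]
  have hm := mul_le_mul_of_nonneg_left hs (by positivity : 0 ≤ 1 / (b0 * b1 * b2) ^ 2)
  refine (add_le_add_left hm _).trans (le_of_eq ?_)
  simp only [b0, b1, b2] at p0 p1 p2 ⊢
  field_simp
  ring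

end Codebook
end CSBC

/-! ### Packing -/

namespace CSBC

section Packing
variable {S1 S2 U0 U1 U2 N0 M0 M1 M2 L1 L2 : Type*} [Fintype S1] [Fintype S2] [Fintype U0]
  [Fintype U1] [Fintype U2] [Fintype N0] [Fintype M0] [Fintype M1] [Fintype M2] [Fintype L1]
  [Fintype L2]
  {Q0 : U0 → ℝ} {Q1 : S1 → U0 → U1 → ℝ} {Q2 : S2 → U0 → U2 → ℝ}
  (h0 : IsPMF Q0) (h1 : ∀ s u, IsPMF (Q1 s u)) (h2 : ∀ s u, IsPMF (Q2 s u))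

include h0 h1 h2

/-- Joint law of the transmitted codeword triple and a pair of codewords of a wrong `s1'`. The
second summand covers the case in which both use the same `u0`-codeword. -/
lemma pack_pair {s1 s1' : S1} (hs : s1' ≠ s1) (s2 : S2) (n n' : N0) (m1 m1' : M1) (m2 : M2)
    (g : U0 → U1 → U2 → ℝ) (hg : ∀ a b c, 0 ≤ g a b c) (d : U0 → U1 → ℝ) (hd : ∀ a b, 0 ≤ d a b) :
    Ex (wC Q0 Q1 Q2) (fun c => g (c.1 n) (cw1 c s1 n m1) (cw2 c s2 n m2) *
        d (c.1 n') (cw1 c s1' n' m1')) ≤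
      (Ex Q0 fun u0 => Ex (Q1 s1 u0) fun u1 => Ex (Q2 s2 u0) fun u2 => g u0 u1 u2 *
        Ex Q0 fun v0 => Ex (Q1 s1' v0) fun v1 => d v0 v1) +
      ind (n = n') * (Ex Q0 fun u0 => Ex (Q1 s1 u0) fun u1 => Ex (Q2 s2 u0) fun u2 => g u0 u1 u2 *
        Ex (Q1 s1' u0) fun v1 => d u0 v1) := by
  rw [Ex_wC]
  simp only [cw1, cw2]
  have e : ∀ c0 : N0 → U0,
      (Ex (wpi fun i : S1 × U0 × N0 × M1 => Q1 i.1 i.2.1) fun c1 =>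
        Ex (wpi fun i : S2 × U0 × N0 × M2 => Q2 i.1 i.2.1) fun c2 =>
          g (c0 n) (c1 (s1, c0 n, n, m1)) (c2 (s2, c0 n, n, m2)) *
            d (c0 n') (c1 (s1', c0 n', n', m1'))) =
      (Ex (Q1 s1 (c0 n)) fun u1 => Ex (Q2 s2 (c0 n)) fun u2 => g (c0 n) u1 u2) *
        Ex (Q1 s1' (c0 n')) fun v1 => d (c0 n') v1 := by
    intro c0
    have e1 : ∀ c1 : S1 × U0 × N0 × M1 → U1,
        (Ex (wpi fun i : S2 × U0 × N0 × M2 => Q2 i.1 i.2.1) fun c2 =>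
          g (c0 n) (c1 (s1, c0 n, n, m1)) (c2 (s2, c0 n, n, m2)) *
            d (c0 n') (c1 (s1', c0 n', n', m1'))) =
        (Ex (Q2 s2 (c0 n)) fun u2 => g (c0 n) (c1 (s1, c0 n, n, m1)) u2) *
          d (c0 n') (c1 (s1', c0 n', n', m1')) := by
      intro c1
      rw [Ex_mul_right]
      congr 1
      exact wpi_one (fun i : S2 × U0 × N0 × M2 => h2 i.1 i.2.1) (s2, c0 n, n, m2)
        (fun b => g (c0 n) (c1 (s1, c0 n, n, m1)) b)
    rw [Ex_congr e1, wpi_two (fun i : S1 × U0 × N0 × M1 => h1 i.1 i.2.1)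
      (i := (s1, c0 n, n, m1)) (j := (s1', c0 n', n', m1')) (by simp [hs.symm])
      (fun a a' => (Ex (Q2 s2 (c0 n)) fun u2 => g (c0 n) a u2) * d (c0 n') a')]
    simp only [Ex_mul_left, Ex_mul_right]
  rw [Ex_congr e]
  have n1 : 0 ≤ (Ex Q0 fun u0 => Ex (Q1 s1 u0) fun u1 => Ex (Q2 s2 u0) fun u2 => g u0 u1 u2 *
        Ex Q0 fun v0 => Ex (Q1 s1' v0) fun v1 => d v0 v1) :=
    Ex_nonneg h0.1 fun _ => Ex_nonneg (h1 _ _).1 fun _ => Ex_nonneg (h2 _ _).1 fun _ =>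
      mul_nonneg (hg _ _ _) (Ex_nonneg h0.1 fun _ => Ex_nonneg (h1 _ _).1 fun _ => hd _ _)
  by_cases hn : n = n'
  · subst hn
    rw [ind_true rfl, one_mul]
    refine le_trans (le_of_eq ?_) (le_add_of_nonneg_left n1)
    rw [wpi_one (fun _ : N0 => h0) n (fun a =>
      (Ex (Q1 s1 a) fun u1 => Ex (Q2 s2 a) fun u2 => g a u1 u2) * Ex (Q1 s1' a) fun v1 => d a v1)]
    simp only [Ex_mul_right]
  · rw [ind_false hn, zero_mul, add_zero]
    rw [wpi_two (fun _ : N0 => h0) hn (fun a b =>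
      (Ex (Q1 s1 a) fun u1 => Ex (Q2 s2 a) fun u2 => g a u1 u2) * Ex (Q1 s1' b) fun v1 => d b v1)]
    simp only [Ex_mul_left, Ex_mul_right]
    exact le_rfl

omit h0 h1 h2 in
/-- Two distinct points collide under a uniformly random hash with probability `1 / |L1|`. -/
lemma hash_collision [Nonempty L1] {s s' : S1} (hs : s ≠ s') :
    Ex (wpi fun (_ : S1) (_ : L1) => (1 / Fintype.card L1 : ℝ)) (fun h => ind (h s = h s')) =
      1 / Fintype.card L1 := by
  have hp : (0 : ℝ) < Fintype.card L1 := by simp [Fintype.card_pos]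
  have hu : IsPMF (fun _ : L1 => (1 / Fintype.card L1 : ℝ)) := by
    refine ⟨fun _ => by positivity, ?_⟩
    simp
  rw [wpi_two (fun _ => hu) hs (fun a b => ind (a = b))]
  have : ∀ a : L1, Ex (fun _ : L1 => (1 / Fintype.card L1 : ℝ)) (fun b => ind (a = b)) =
      1 / Fintype.card L1 := by
    intro a
    simp only [Ex]
    rw [← Finset.mul_sum, sum_ind_eq, mul_one]
  rw [Ex_congr this, Ex_const hu]

/-- Expected number of wrong candidates `s1'` at receiver 1, over hashes and codebooks. -/
lemma packing [Nonempty L1] (ν : L1 → L2 → M0 → N0)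
    (hν : ∀ a b c a' b' c', ν a b c = ν a' b' c' → a = a' ∧ b = b' ∧ c = c')
    (s1 : S1) (s2 : S2) (k2 : L2) (l0 : M0) (m1 : M1) (m2 : M2)
    (g : U0 → U1 → U2 → ℝ) (hg : ∀ a b c, 0 ≤ g a b c)
    (d : S1 → U0 → U1 → ℝ) (hd : ∀ s a b, 0 ≤ d s a b) :
    (Ex (wpi fun (_ : S1) (_ : L1) => (1 / Fintype.card L1 : ℝ)) fun h => Ex (wC Q0 Q1 Q2) fun c =>
      g (c.1 (ν (h s1) k2 l0)) (cw1 c s1 (ν (h s1) k2 l0) m1) (cw2 c s2 (ν (h s1) k2 l0) m2) *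
      ∑ s', ind (s' ≠ s1) * ∑ i : L2 × M0 × M1,
        d s' (c.1 (ν (h s') i.1 i.2.1)) (cw1 c s' (ν (h s') i.1 i.2.1) i.2.2)) ≤
    (Fintype.card L2 * Fintype.card M0 * Fintype.card M1 : ℝ) *
      (Ex Q0 fun u0 => Ex (Q1 s1 u0) fun u1 => Ex (Q2 s2 u0) fun u2 => g u0 u1 u2 *
        ∑ s', Ex Q0 fun v0 => Ex (Q1 s' v0) fun v1 => d s' v0 v1) +
    (Fintype.card M1 / Fintype.card L1 : ℝ) *
      (Ex Q0 fun u0 => Ex (Q1 s1 u0) fun u1 => Ex (Q2 s2 u0) fun u2 => g u0 u1 u2 *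
        ∑ s', Ex (Q1 s' u0) fun v1 => d s' u0 v1) := by
  set A : S1 → ℝ := fun s' => Ex Q0 fun u0 => Ex (Q1 s1 u0) fun u1 => Ex (Q2 s2 u0) fun u2 =>
    g u0 u1 u2 * Ex Q0 fun v0 => Ex (Q1 s' v0) fun v1 => d s' v0 v1 with hA
  set B : S1 → ℝ := fun s' => Ex Q0 fun u0 => Ex (Q1 s1 u0) fun u1 => Ex (Q2 s2 u0) fun u2 =>
    g u0 u1 u2 * Ex (Q1 s' u0) fun v1 => d s' u0 v1 with hB
  have A0 : ∀ s', 0 ≤ A s' := fun s' =>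
    Ex_nonneg h0.1 fun _ => Ex_nonneg (h1 _ _).1 fun _ => Ex_nonneg (h2 _ _).1 fun _ =>
      mul_nonneg (hg _ _ _) (Ex_nonneg h0.1 fun _ => Ex_nonneg (h1 _ _).1 fun _ => hd _ _ _)
  have B0 : ∀ s', 0 ≤ B s' := fun s' =>
    Ex_nonneg h0.1 fun _ => Ex_nonneg (h1 _ _).1 fun _ => Ex_nonneg (h2 _ _).1 fun _ =>
      mul_nonneg (hg _ _ _) (Ex_nonneg (h1 _ _).1 fun _ => hd _ _ _)
  have hp : (0 : ℝ) < Fintype.card L1 := by simp [Fintype.card_pos]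
  have hu : IsPMF (fun _ : L1 => (1 / Fintype.card L1 : ℝ)) := by
    refine ⟨fun _ => by positivity, ?_⟩
    simp
  have hw : IsPMF (wpi fun (_ : S1) (_ : L1) => (1 / Fintype.card L1 : ℝ)) := IsPMF.wpi fun _ => hu
  have step1 : ∀ h : S1 → L1, (Ex (wC Q0 Q1 Q2) fun c =>
      g (c.1 (ν (h s1) k2 l0)) (cw1 c s1 (ν (h s1) k2 l0) m1) (cw2 c s2 (ν (h s1) k2 l0) m2) *
      ∑ s', ind (s' ≠ s1) * ∑ i : L2 × M0 × M1,
        d s' (c.1 (ν (h s') i.1 i.2.1)) (cw1 c s' (ν (h s') i.1 i.2.1) i.2.2)) ≤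
      ∑ s', ((Fintype.card L2 * Fintype.card M0 * Fintype.card M1 : ℝ) * A s' +
        Fintype.card M1 * (ind (s' ≠ s1) * ind (h s1 = h s')) * B s') := by
    intro h
    simp only [Finset.mul_sum]
    rw [Ex_sum]
    refine Finset.sum_le_sum fun s' _ => ?_
    rw [Ex_sum]
    by_cases hs : s' ≠ s1
    · have : ∀ i : L2 × M0 × M1, (Ex (wC Q0 Q1 Q2) fun c =>
          g (c.1 (ν (h s1) k2 l0)) (cw1 c s1 (ν (h s1) k2 l0) m1) (cw2 c s2 (ν (h s1) k2 l0) m2) *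
          (ind (s' ≠ s1) *
          d s' (c.1 (ν (h s') i.1 i.2.1)) (cw1 c s' (ν (h s') i.1 i.2.1) i.2.2))) ≤
          A s' + ind (h s1 = h s') * (ind (k2 = i.1) * ind (l0 = i.2.1)) * B s' := by
        intro i
        simp only [ind_true hs, one_mul]
        refine (pack_pair h0 h1 h2 hs s2 _ _ m1 i.2.2 m2 g hg (d s') (hd s')).trans ?_
        gcongr
        · exact B0 s'
        · rw [← ind_and, ← ind_and]
          exact ind_mono fun hh => hν _ _ _ _ _ _ hh
      refine (Finset.sum_le_sum fun i _ => this i).trans (le_of_eq ?_)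
      rw [ind_true hs]
      simp only [Fintype.sum_prod_type, Finset.sum_add_distrib, ← Finset.mul_sum,
        ← Finset.sum_mul, sum_ind_eq, Finset.sum_const, Finset.card_univ, nsmul_eq_mul,
        Fintype.card_prod, Nat.cast_mul]
      ring
    · simp only [ind_false hs, zero_mul, mul_zero]
      have : Ex (wC Q0 Q1 Q2 : Cb S1 S2 U0 U1 U2 N0 M1 M2 → ℝ) (fun _ => (0 : ℝ)) = 0 := by
        simp [Ex]
      rw [this]
      simp only [Finset.sum_const_zero, add_zero]
      exact mul_nonneg (by positivity) (A0 s')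
  refine (Ex_mono hw.1 step1).trans ?_
  rw [Ex_sum]
  have step2 : ∀ s', (Ex (wpi fun (_ : S1) (_ : L1) => (1 / Fintype.card L1 : ℝ)) fun h =>
      ((Fintype.card L2 * Fintype.card M0 * Fintype.card M1 : ℝ) * A s' +
        Fintype.card M1 * (ind (s' ≠ s1) * ind (h s1 = h s')) * B s')) ≤
      (Fintype.card L2 * Fintype.card M0 * Fintype.card M1 : ℝ) * A s' +
        (Fintype.card M1 / Fintype.card L1 : ℝ) * B s' := by
    intro s'
    rw [Ex_add, Ex_const hw, Ex_mul_right, Ex_mul_left, Ex_mul_left]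
    by_cases hs : s' ≠ s1
    · rw [hash_collision hs.symm, ind_true hs]
      apply le_of_eq
      ring
    · rw [ind_false hs]
      simp only [zero_mul, mul_zero]
      have := B0 s'
      have : 0 ≤ (Fintype.card M1 / Fintype.card L1 : ℝ) * B s' := by positivity
      linarith
  refine (Finset.sum_le_sum fun s' _ => step2 s').trans (le_of_eq ?_)
  rw [Finset.sum_add_distrib, ← Finset.mul_sum, ← Finset.mul_sum]
  simp only [hA, hB, Finset.mul_sum, Ex_sum]

/-- `packing` with the roles of the two receivers exchanged. -/
lemma packing' [Nonempty L2] (ν : L1 → L2 → M0 → N0)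
    (hν : ∀ a b c a' b' c', ν a b c = ν a' b' c' → a = a' ∧ b = b' ∧ c = c')
    (s1 : S1) (s2 : S2) (k1 : L1) (l0 : M0) (m1 : M1) (m2 : M2)
    (g : U0 → U1 → U2 → ℝ) (hg : ∀ a b c, 0 ≤ g a b c)
    (d : S2 → U0 → U2 → ℝ) (hd : ∀ s a b, 0 ≤ d s a b) :
    (Ex (wpi fun (_ : S2) (_ : L2) => (1 / Fintype.card L2 : ℝ)) fun h => Ex (wC Q0 Q1 Q2) fun c =>
      g (c.1 (ν k1 (h s2) l0)) (cw1 c s1 (ν k1 (h s2) l0) m1) (cw2 c s2 (ν k1 (h s2) l0) m2) *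
      ∑ s', ind (s' ≠ s2) * ∑ i : L1 × M0 × M2,
        d s' (c.1 (ν i.1 (h s') i.2.1)) (cw2 c s' (ν i.1 (h s') i.2.1) i.2.2)) ≤
    (Fintype.card L1 * Fintype.card M0 * Fintype.card M2 : ℝ) *
      (Ex Q0 fun u0 => Ex (Q1 s1 u0) fun u1 => Ex (Q2 s2 u0) fun u2 => g u0 u1 u2 *
        ∑ s', Ex Q0 fun v0 => Ex (Q2 s' v0) fun v1 => d s' v0 v1) +
    (Fintype.card M2 / Fintype.card L2 : ℝ) *
      (Ex Q0 fun u0 => Ex (Q1 s1 u0) fun u1 => Ex (Q2 s2 u0) fun u2 => g u0 u1 u2 *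
        ∑ s', Ex (Q2 s' u0) fun v1 => d s' u0 v1) := by
  have key := packing h0 h2 h1 (fun a b c => ν b a c)
    (fun a b c a' b' c' h => by
      have := hν _ _ _ _ _ _ h
      tauto) s2 s1 k1 l0 m2 m1 (fun a b c => g a c b) (fun a b c => hg a c b) d hd
  have sw : ∀ F : Cb S1 S2 U0 U1 U2 N0 M1 M2 → ℝ, Ex (wC Q0 Q1 Q2) F =
      Ex (wC Q0 Q2 Q1) (fun c : Cb S2 S1 U0 U2 U1 N0 M2 M1 => F (c.1, c.2.2, c.2.1)) := by
    intro F
    rw [Ex_wC, Ex_wC]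
    exact Ex_congr fun _ => Ex_comm _ _ _
  simp only [sw]
  simp only [Ex_comm (Q2 s2 _) (Q1 s1 _)] at key
  exact key

end Packing

/-- A decoder that outputs a candidate: it errs only if the true value is not a candidate or some
wrong value is one. Candidates for `y` are the `s` with `D s i y` for some index `i`. -/
lemma exists_decoder {S Y I : Type*} [Fintype S] [Fintype I] [Nonempty S] (D : S → I → Y → Prop) :
    ∃ dec : Y → S, ∀ s y i, ind (dec y ≠ s) ≤
      ind (¬ D s i y) + ∑ s', ind (s' ≠ s) * ∑ i', ind (D s' i' y) := by
  refine ⟨fun y => if h : ∃ s, ∃ i, D s i y then h.choose else Classical.arbitrary S, ?_⟩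
  intro s y i
  have nn : ∀ s', 0 ≤ ind (s' ≠ s) * ∑ i', ind (D s' i' y) := fun s' =>
    mul_nonneg (ind_nonneg _) (Finset.sum_nonneg fun _ _ => ind_nonneg _)
  by_cases hD : D s i y
  · have hex : ∃ s, ∃ i, D s i y := ⟨s, i, hD⟩
    simp only [dif_pos hex]
    obtain ⟨i', hi'⟩ := hex.choose_spec
    by_cases hne : hex.choose ≠ s
    · have h1 : (1 : ℝ) ≤ ∑ i', ind (D hex.choose i' y) := by
        rw [← ind_true hi']
        exact Finset.single_le_sum (f := fun i' => ind (D hex.choose i' y))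
          (fun _ _ => ind_nonneg _) (Finset.mem_univ i')
      have h2 := Finset.single_le_sum (f := fun s' => ind (s' ≠ s) * ∑ i', ind (D s' i' y))
          (fun s' _ => nn s') (Finset.mem_univ hex.choose)
      simp only [ind_true hne, one_mul] at h2
      rw [ind_true hne]
      have := ind_nonneg (¬ D s i y)
      linarith
    · rw [ind_false hne]
      exact add_nonneg (ind_nonneg _) (Finset.sum_nonneg fun s' _ => nn s')
  · rw [ind_true hD]
    have := Finset.sum_nonneg fun s' (_ : s' ∈ Finset.univ) => nn s'
    have := ind_le_one ((if h : ∃ s, ∃ i, D s i y then h.choose else Classical.arbitrary S) ≠ s)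
    linarith

end CSBC

/-! ### Likelihood weights -/

namespace CSBC

section Weights
variable {U0 U1 U2 X : Type*} [Fintype U0] [Fintype U1] [Fintype U2] [Fintype X]
  (Q0 : U0 → ℝ) (q1 : U0 → U1 → ℝ) (q2 : U0 → U2 → ℝ)
  (T : U0 → U1 → U2 → Prop) (r : U0 → U1 → U2 → X → ℝ)

/-- Likelihood ratio, on the typical set `T`, of the target law `r` of `(u0, u1, u2, x)` to the law
`Q0 q1 q2` of a codeword triple. -/
def lam (u0 : U0) (u1 : U1) (u2 : U2) (x : X) : ℝ :=
  ind (T u0 u1 u2) * (r u0 u1 u2 x / (Q0 u0 * q1 u0 u1 * q2 u0 u2))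

variable {Q0 q1 q2 T r}

omit [Fintype U0] [Fintype U1] [Fintype U2] [Fintype X] in
lemma lam_nonneg (h0 : ∀ u, 0 ≤ Q0 u) (h1 : ∀ u v, 0 ≤ q1 u v) (h2 : ∀ u v, 0 ≤ q2 u v)
    (hr : ∀ u0 u1 u2 x, 0 ≤ r u0 u1 u2 x) (u0 : U0) (u1 : U1) (u2 : U2) (x : X) :
    0 ≤ lam Q0 q1 q2 T r u0 u1 u2 x :=
  mul_nonneg (ind_nonneg _) (div_nonneg (hr _ _ _ _)
    (mul_nonneg (mul_nonneg (h0 _) (h1 _ _)) (h2 _ _)))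

variable (hr : ∀ u0 u1 u2 x, 0 ≤ r u0 u1 u2 x) {K012 : ℝ}
  (hT012 : ∀ u0 u1 u2, T u0 u1 u2 → ∑ x, r u0 u1 u2 x ≤ K012 * (Q0 u0 * q1 u0 u1 * q2 u0 u2))

include hr hT012

omit [Fintype U0] [Fintype U1] [Fintype U2] in
/-- On `T` the target law is dominated by the law of the codewords, so the junk value of the division
by zero in `lam` is harmless. -/
lemma mul_lam (u0 : U0) (u1 : U1) (u2 : U2) (x : X) :
    Q0 u0 * q1 u0 u1 * q2 u0 u2 * lam Q0 q1 q2 T r u0 u1 u2 x = ind (T u0 u1 u2) * r u0 u1 u2 x := by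
  unfold lam
  by_cases hT : T u0 u1 u2
  · rw [ind_true hT]
    by_cases hP : Q0 u0 * q1 u0 u1 * q2 u0 u2 = 0
    · have h := hT012 _ _ _ hT
      rw [hP, mul_zero] at h
      have hx := Finset.single_le_sum (f := fun x => r u0 u1 u2 x) (fun x _ => hr u0 u1 u2 x)
        (Finset.mem_univ x)
      have : r u0 u1 u2 x = 0 := le_antisymm (hx.trans h) (hr _ _ _ _)
      rw [hP, this]; simp
    · rw [one_mul, one_mul, mul_div_cancel₀ _ hP]
  · rw [ind_false hT]; simp

/-- Change of measure from codeword triples to the target law. -/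
lemma Ex_lam (G : U0 → U1 → U2 → X → ℝ) :
    (Ex Q0 fun u0 => Ex (q1 u0) fun u1 => Ex (q2 u0) fun u2 =>
      ∑ x, lam Q0 q1 q2 T r u0 u1 u2 x * G u0 u1 u2 x) =
    ∑ u0, ∑ u1, ∑ u2, ∑ x, ind (T u0 u1 u2) * r u0 u1 u2 x * G u0 u1 u2 x := by
  simp only [Ex, Finset.mul_sum]
  refine Finset.sum_congr rfl fun u0 _ => Finset.sum_congr rfl fun u1 _ =>
    Finset.sum_congr rfl fun u2 _ => Finset.sum_congr rfl fun x _ => ?_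
  rw [← mul_lam hr hT012]
  ring

lemma Ex_lam_le (G : U0 → U1 → U2 → X → ℝ) (hG : ∀ u0 u1 u2 x, 0 ≤ G u0 u1 u2 x) :
    (Ex Q0 fun u0 => Ex (q1 u0) fun u1 => Ex (q2 u0) fun u2 =>
      ∑ x, lam Q0 q1 q2 T r u0 u1 u2 x * G u0 u1 u2 x) ≤
    ∑ u0, ∑ u1, ∑ u2, ∑ x, r u0 u1 u2 x * G u0 u1 u2 x := by
  rw [Ex_lam hr hT012]
  refine Finset.sum_le_sum fun u0 _ => Finset.sum_le_sum fun u1 _ =>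
    Finset.sum_le_sum fun u2 _ => Finset.sum_le_sum fun x _ => ?_
  have := mul_nonneg (hr u0 u1 u2 x) (hG u0 u1 u2 x)
  rw [mul_assoc]
  exact mul_le_of_le_one_left this (ind_le_one _)

variable (hr1 : ∑ u0, ∑ u1, ∑ u2, ∑ x, r u0 u1 u2 x = 1)
include hr1

lemma Ex_lam_bound (m : U0 → U1 → U2 → ℝ) (K : ℝ) (hK : 0 ≤ K)
    (hm : ∀ u0 u1 u2, T u0 u1 u2 → m u0 u1 u2 ≤ K) :
    (Ex Q0 fun u0 => Ex (q1 u0) fun u1 => Ex (q2 u0) fun u2 =>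
      (∑ x, lam Q0 q1 q2 T r u0 u1 u2 x) * m u0 u1 u2) ≤ K := by
  simp only [Finset.sum_mul]
  rw [Ex_lam hr hT012]
  calc _ ≤ ∑ u0, ∑ u1, ∑ u2, ∑ x, r u0 u1 u2 x * K := by
        refine Finset.sum_le_sum fun u0 _ => Finset.sum_le_sum fun u1 _ =>
          Finset.sum_le_sum fun u2 _ => Finset.sum_le_sum fun x _ => ?_
        by_cases hT : T u0 u1 u2
        · rw [ind_true hT, one_mul]
          exact mul_le_mul_of_nonneg_left (hm _ _ _ hT) (hr _ _ _ _)
        · rw [ind_false hT]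
          simpa using mul_nonneg (hr u0 u1 u2 x) hK
    _ = K := by simp only [← Finset.sum_mul, hr1, one_mul]

end Weights

lemma le_of_scaled {a m K : ℝ} (ha : 0 ≤ a) (hK : 0 ≤ K) (h : a * m ≤ K * a) (h0 : a = 0 → m = 0) :
    m ≤ K := by
  rcases ha.eq_or_lt with h' | h'
  · rw [h0 h'.symm]; exact hK
  · nlinarith

section CoverS
variable {S1 S2 U0 U1 U2 X N0 M0 M1 M2 : Type*} [Fintype S1] [Fintype S2] [Fintype U0] [Fintype U1]
  [Fintype U2] [Fintype X] [Fintype N0] [Fintype M0] [Fintype M1] [Fintype M2]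
  {Q0 : U0 → ℝ} {Q1 : S1 → U0 → U1 → ℝ} {Q2 : S2 → U0 → U2 → ℝ}

/-- Covering for one source pair, with the second moments controlled on the typical set. -/
lemma cover_target (h0 : IsPMF Q0) (h1 : ∀ s u, IsPMF (Q1 s u)) (h2 : ∀ s u, IsPMF (Q2 s u))
    (j : M0 → N0) (hj : Function.Injective j) [Nonempty M0] [Nonempty M1] [Nonempty M2]
    (s1 : S1) (s2 : S2) (T : U0 → U1 → U2 → Prop) (r : U0 → U1 → U2 → X → ℝ)
    (hr : ∀ u0 u1 u2 x, 0 ≤ r u0 u1 u2 x) (hr1 : ∑ u0, ∑ u1, ∑ u2, ∑ x, r u0 u1 u2 x = 1)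
    {K0 K01 K02 K012 : ℝ} (k0 : 0 ≤ K0) (k01 : 0 ≤ K01) (k02 : 0 ≤ K02) (k012 : 0 ≤ K012)
    (hT0 : ∀ u0 u1 u2, T u0 u1 u2 → ∑ u1, ∑ u2, ∑ x, r u0 u1 u2 x ≤ K0 * Q0 u0)
    (hT01 : ∀ u0 u1 u2, T u0 u1 u2 → ∑ u2, ∑ x, r u0 u1 u2 x ≤ K01 * (Q0 u0 * Q1 s1 u0 u1))
    (hT02 : ∀ u0 u1 u2, T u0 u1 u2 → ∑ u1, ∑ x, r u0 u1 u2 x ≤ K02 * (Q0 u0 * Q2 s2 u0 u2))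
    (hT012 : ∀ u0 u1 u2, T u0 u1 u2 →
      ∑ x, r u0 u1 u2 x ≤ K012 * (Q0 u0 * Q1 s1 u0 u1 * Q2 s2 u0 u2)) :
    Ex (wC Q0 Q1 Q2) (fun c => ((∑ m0 : M0, ∑ m1 : M1, ∑ m2 : M2, ∑ x,
        lam Q0 (Q1 s1) (Q2 s2) T r (c.1 (j m0)) (cw1 c s1 (j m0) m1) (cw2 c s2 (j m0) m2) x) /
        (Fintype.card M0 * Fintype.card M1 * Fintype.card M2 : ℝ) - 1) ^ 2) ≤
      2 * (∑ u0, ∑ u1, ∑ u2, ∑ x, r u0 u1 u2 x * ind (¬ T u0 u1 u2))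
        + K0 / Fintype.card M0 + K01 / (Fintype.card M0 * Fintype.card M1)
        + K02 / (Fintype.card M0 * Fintype.card M2)
        + K012 / (Fintype.card M0 * Fintype.card M1 * Fintype.card M2) := by
  set ℓ : U0 → U1 → U2 → ℝ := fun u0 u1 u2 => ∑ x, lam Q0 (Q1 s1) (Q2 s2) T r u0 u1 u2 x with hℓ
  have ml := fun u0 u1 u2 x => mul_lam hr hT012 u0 u1 u2 x
  have hℓP : ∀ u0 u1 u2, Q0 u0 * Q1 s1 u0 u1 * Q2 s2 u0 u2 * ℓ u0 u1 u2 ≤ ∑ x, r u0 u1 u2 x := by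
    intro u0 u1 u2
    rw [hℓ]
    simp only [Finset.mul_sum]
    refine Finset.sum_le_sum fun x _ => ?_
    rw [ml]
    exact mul_le_of_le_one_left (hr _ _ _ _) (ind_le_one _)
  have hℓ0 : ∀ u0 u1 u2, Q0 u0 * Q1 s1 u0 u1 * Q2 s2 u0 u2 = 0 → ℓ u0 u1 u2 = 0 := by
    intro u0 u1 u2 h
    refine Finset.sum_eq_zero fun x _ => ?_
    simp [lam, h]
  have n0 := h0.1
  have n1 := fun u v => (h1 s1 u).1 v
  have n2 := fun u v => (h2 s2 u).1 v
  have et : (Ex Q0 fun u0 => Ex (Q1 s1 u0) fun u1 => Ex (Q2 s2 u0) fun u2 => ℓ u0 u1 u2) =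
      1 - ∑ u0, ∑ u1, ∑ u2, ∑ x, r u0 u1 u2 x * ind (¬ T u0 u1 u2) := by
    have := Ex_lam hr hT012 (fun _ _ _ _ => 1)
    simp only [mul_one] at this
    rw [hℓ]
    simp only [this]
    rw [← hr1]
    simp only [← Finset.sum_sub_distrib]
    refine Finset.sum_congr rfl fun u0 _ => Finset.sum_congr rfl fun u1 _ =>
      Finset.sum_congr rfl fun u2 _ => Finset.sum_congr rfl fun x _ => ?_
    by_cases hT : T u0 u1 u2
    · rw [ind_true hT, ind_false (not_not.2 hT)]; ring
    · rw [ind_false hT, ind_true hT]; ring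
  have tn : 0 ≤ ∑ u0, ∑ u1, ∑ u2, ∑ x, r u0 u1 u2 x * ind (¬ T u0 u1 u2) :=
    Finset.sum_nonneg fun u0 _ => Finset.sum_nonneg fun u1 _ => Finset.sum_nonneg fun u2 _ =>
      Finset.sum_nonneg fun x _ => mul_nonneg (hr _ _ _ _) (ind_nonneg _)
  have tn' : 0 ≤ 1 - ∑ u0, ∑ u1, ∑ u2, ∑ x, r u0 u1 u2 x * ind (¬ T u0 u1 u2) := by
    rw [← et]
    exact Ex_nonneg n0 fun u0 => Ex_nonneg (n1 u0) fun u1 => Ex_nonneg (n2 u0) fun u2 =>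
      Finset.sum_nonneg fun x _ => lam_nonneg n0 n1 n2 hr _ _ _ _
  have key := covering h0 h1 h2 (M1 := M1) (M2 := M2) j hj s1 s2 ℓ _ K0 K01 K02 K012 et tn'
    (by linarith) ?_ ?_ ?_ ?_ k0 k01 k02
  · refine key.trans (le_of_eq ?_)
    ring
  · have := Ex_lam_bound hr hT012 hr1
      (fun u0 _ _ => Ex (Q1 s1 u0) fun u1 => Ex (Q2 s2 u0) fun u2 => ℓ u0 u1 u2) K0 k0 ?_
    · refine le_trans (le_of_eq ?_) this
      simp only [Ex_mul_right, sq]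
      rfl
    · intro u0 u1 u2 hT
      refine le_of_scaled (n0 u0) k0 (le_trans ?_ (hT0 u0 u1 u2 hT)) ?_
      · simp only [Ex, Finset.mul_sum]
        refine Finset.sum_le_sum fun v1 _ => ?_
        refine Finset.sum_le_sum fun v2 _ => ?_
        refine le_trans (le_of_eq ?_) (hℓP u0 v1 v2)
        ring
      · intro h
        refine Finset.sum_eq_zero fun v1 _ => ?_
        simp only [Ex]
        rw [Finset.sum_eq_zero, mul_zero]
        intro v2 _
        rw [hℓ0 u0 v1 v2 (by rw [h]; ring), mul_zero]
  · have := Ex_lam_bound hr hT012 hr1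
      (fun u0 u1 _ => Ex (Q2 s2 u0) fun u2 => ℓ u0 u1 u2) K01 k01 ?_
    · refine le_trans (le_of_eq ?_) this
      simp only [Ex_mul_right, sq]
      rfl
    · intro u0 u1 u2 hT
      refine le_of_scaled (mul_nonneg (n0 u0) (n1 u0 u1)) k01 (le_trans ?_ (hT01 u0 u1 u2 hT)) ?_
      · simp only [Ex, Finset.mul_sum]
        refine Finset.sum_le_sum fun v2 _ => ?_
        refine le_trans (le_of_eq ?_) (hℓP u0 u1 v2)
        ring
      · intro h
        refine Finset.sum_eq_zero fun v2 _ => ?_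
        exact mul_eq_zero_of_right _ (hℓ0 u0 u1 v2 (by rw [h]; ring))
  · have := Ex_lam_bound hr hT012 hr1
      (fun u0 _ u2 => Ex (Q1 s1 u0) fun u1 => ℓ u0 u1 u2) K02 k02 ?_
    · refine le_trans (le_of_eq ?_) this
      simp only [Ex_comm (Q1 s1 _) (Q2 s2 _), Ex_mul_right, sq]
      rfl
    · intro u0 u1 u2 hT
      refine le_of_scaled (mul_nonneg (n0 u0) (n2 u0 u2)) k02 (le_trans ?_ (hT02 u0 u1 u2 hT)) ?_
      · simp only [Ex, Finset.mul_sum]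
        refine Finset.sum_le_sum fun v1 _ => ?_
        refine le_trans (le_of_eq ?_) (hℓP u0 v1 u2)
        ring
      · intro h
        refine Finset.sum_eq_zero fun v1 _ => ?_
        exact mul_eq_zero_of_right _ (hℓ0 u0 v1 u2 (by linear_combination Q1 s1 u0 v1 * h))
  · have := Ex_lam_bound hr hT012 hr1 ℓ K012 k012 ?_
    · refine le_trans (le_of_eq ?_) this
      simp only [sq]
      rfl
    · intro u0 u1 u2 hT
      exact le_of_scaled (mul_nonneg (mul_nonneg (n0 u0) (n1 u0 u1)) (n2 u0 u2)) k012
        (le_trans (hℓP u0 u1 u2) (hT012 u0 u1 u2 hT)) (hℓ0 u0 u1 u2)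

end CoverS

/-- The best channel input is no worse than the likelihood-weighted average, up to a penalty that
is large only when the total weight `Z` is far from one. -/
lemma min_bound {X M : Type*} [Fintype X] [Fintype M] (e : X → ℝ) (lm : M → X → ℝ) (N : ℝ)
    (hN : 0 < N) (he0 : ∀ x, 0 ≤ e x) (he1 : ∀ x, e x ≤ 1) (hl : ∀ m x, 0 ≤ lm m x) (x0 : X)
    (hx0 : ∀ x, e x0 ≤ e x) :
    e x0 ≤ 4 * ((∑ m, ∑ x, lm m x) / N - 1) ^ 2 + 2 * ((∑ m, ∑ x, lm m x * e x) / N) := by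
  have h1 : (∑ m, ∑ x, lm m x) * e x0 ≤ ∑ m, ∑ x, lm m x * e x := by
    simp only [Finset.sum_mul]
    exact Finset.sum_le_sum fun m _ => Finset.sum_le_sum fun x _ =>
      mul_le_mul_of_nonneg_left (hx0 x) (hl m x)
  have h2 : (∑ m, ∑ x, lm m x) / N * e x0 ≤ (∑ m, ∑ x, lm m x * e x) / N := by
    rw [div_mul_eq_mul_div]
    exact div_le_div_of_nonneg_right h1 hN.le
  have h3 : 0 ≤ (∑ m, ∑ x, lm m x) / N := div_nonneg
    (Finset.sum_nonneg fun m _ => Finset.sum_nonneg fun x _ => hl m x) hN.le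
  set Z := (∑ m, ∑ x, lm m x) / N
  have := he0 x0
  have := he1 x0
  rcases le_total Z (1/2) with h | h
  · have : 0 ≤ Z * e x0 := by positivity
    nlinarith [mul_nonneg (sub_nonneg.2 h) (sub_nonneg.2 h)]
  · nlinarith [sq_nonneg (Z - 1)]

end CSBC

/-! ### Wrong candidates -/

namespace CSBC

lemma sum_swap_mul {X Y : Type*} [Fintype X] [Fintype Y] (l : X → ℝ) (W : X → Y → ℝ) (n : Y → ℝ) :
    ∑ x, l x * ∑ y, W x y * n y = ∑ y, (∑ x, l x * W x y) * n y := by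
  simp only [Finset.mul_sum, Finset.sum_mul]
  rw [Finset.sum_comm]
  simp only [mul_assoc]

section OneShot
variable {S1 S2 U0 U1 U2 X Y Y1 Y2 N0 M0 M1 M2 L1 L2 : Type*} [Fintype S1] [Fintype S2] [Fintype U0]
  [Fintype U1] [Fintype U2] [Fintype X] [Fintype Y] [Fintype N0] [Fintype M0] [Fintype M1] [Fintype M2]
  [Fintype L1] [Fintype L2]
  {Q0 : U0 → ℝ} {Q1 : S1 → U0 → U1 → ℝ} {Q2 : S2 → U0 → U2 → ℝ}

/-- Number of wrong candidates `(s1', n0, m1)` at receiver 1 whose codewords pass the test `D1`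
against `y1`; the index of the `u0`-codeword has the form `ν (h s1') k2 m0`. -/
def wrong1 (ν : L1 → L2 → M0 → N0) (D1 : S1 → U0 → U1 → Y1 → Prop) (c : Cb S1 S2 U0 U1 U2 N0 M1 M2)
    (h : S1 → L1) (s1 : S1) (y : Y1) : ℝ :=
  ∑ s', ind (s' ≠ s1) * ∑ i : L2 × M0 × M1,
    ind (D1 s' (c.1 (ν (h s') i.1 i.2.1)) (cw1 c s' (ν (h s') i.1 i.2.1) i.2.2) y)

/-- Number of wrong candidates at receiver 2. -/
def wrong2 (ν : L1 → L2 → M0 → N0) (D2 : S2 → U0 → U2 → Y2 → Prop) (c : Cb S1 S2 U0 U1 U2 N0 M1 M2)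
    (h : S2 → L2) (s2 : S2) (y : Y2) : ℝ :=
  ∑ s', ind (s' ≠ s2) * ∑ i : L1 × M0 × M2,
    ind (D2 s' (c.1 (ν i.1 (h s') i.2.1)) (cw2 c s' (ν i.1 (h s') i.2.1) i.2.2) y)

omit [Fintype S1] [Fintype S2] in
/-- Averaging the two packing terms over the channel output. -/
lemma packing_sum (h0 : IsPMF Q0) (h1 : ∀ s u, IsPMF (Q1 s u)) (h2 : ∀ s u, IsPMF (Q2 s u))
    (s1 : S1) (s2 : S2) {T : U0 → U1 → U2 → Prop} {r : U0 → U1 → U2 → X → ℝ}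
    (hr : ∀ u0 u1 u2 x, 0 ≤ r u0 u1 u2 x) (hr1 : ∑ u0, ∑ u1, ∑ u2, ∑ x, r u0 u1 u2 x = 1)
    {K012 : ℝ} (hT012 : ∀ u0 u1 u2, T u0 u1 u2 →
      ∑ x, r u0 u1 u2 x ≤ K012 * (Q0 u0 * Q1 s1 u0 u1 * Q2 s2 u0 u2))
    {W : X → Y → ℝ} (hW : ∀ x, IsPMF (W x)) (a : Y → ℝ) (b : U0 → Y → ℝ) {A B k l : ℝ}
    (ha : ∀ y, a y ≤ A) (hb : ∀ u y, b u y ≤ B) (hk : 0 ≤ k) (hl : 0 ≤ l) (hA : 0 ≤ A)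
    (hB : 0 ≤ B) :
    ∑ y, (k * (Ex Q0 fun u0 => Ex (Q1 s1 u0) fun u1 => Ex (Q2 s2 u0) fun u2 =>
        (∑ x, lam Q0 (Q1 s1) (Q2 s2) T r u0 u1 u2 x * W x y) * a y) +
      l * (Ex Q0 fun u0 => Ex (Q1 s1 u0) fun u1 => Ex (Q2 s2 u0) fun u2 =>
        (∑ x, lam Q0 (Q1 s1) (Q2 s2) T r u0 u1 u2 x * W x y) * b u0 y)) ≤ k * A + l * B := by
  have n0 := h0.1
  have n1 := fun u v => (h1 s1 u).1 v
  have n2 := fun u v => (h2 s2 u).1 v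
  have gn : ∀ u0 u1 u2 y, 0 ≤ ∑ x, lam Q0 (Q1 s1) (Q2 s2) T r u0 u1 u2 x * W x y :=
    fun u0 u1 u2 y => Finset.sum_nonneg fun x _ =>
      mul_nonneg (lam_nonneg n0 n1 n2 hr _ _ _ _) ((hW x).1 y)
  have mass : ∑ y, (Ex Q0 fun u0 => Ex (Q1 s1 u0) fun u1 => Ex (Q2 s2 u0) fun u2 =>
        ∑ x, lam Q0 (Q1 s1) (Q2 s2) T r u0 u1 u2 x * W x y) ≤ 1 := by
    have := Ex_lam_le hr hT012 (fun _ _ _ x => ∑ y, W x y)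
      (fun _ _ _ x => Finset.sum_nonneg fun y _ => (hW x).1 y)
    simp only [(hW _).2, mul_one] at this
    rw [hr1] at this
    refine le_trans (le_of_eq ?_) this
    simp only [← Ex_sum]
    refine Ex_congr fun u0 => Ex_congr fun u1 => Ex_congr fun u2 => ?_
    rw [Finset.sum_comm]
    refine Finset.sum_congr rfl fun x _ => ?_
    rw [← Finset.mul_sum, (hW x).2, mul_one]
  calc _ ≤ ∑ y, (k * A + l * B) * (Ex Q0 fun u0 => Ex (Q1 s1 u0) fun u1 => Ex (Q2 s2 u0) fun u2 =>
        ∑ x, lam Q0 (Q1 s1) (Q2 s2) T r u0 u1 u2 x * W x y) := by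
        refine Finset.sum_le_sum fun y _ => ?_
        rw [add_mul, mul_assoc, mul_assoc]
        refine add_le_add (mul_le_mul_of_nonneg_left ?_ hk) (mul_le_mul_of_nonneg_left ?_ hl)
        · rw [mul_comm, ← Ex_mul_right]
          refine Ex_mono n0 fun u0 => ?_
          rw [← Ex_mul_right]
          refine Ex_mono (n1 u0) fun u1 => ?_
          rw [← Ex_mul_right]
          exact Ex_mono (n2 u0) fun u2 => mul_le_mul_of_nonneg_left (ha y) (gn _ _ _ _)
        · rw [mul_comm, ← Ex_mul_right]
          refine Ex_mono n0 fun u0 => ?_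
          rw [← Ex_mul_right]
          refine Ex_mono (n1 u0) fun u1 => ?_
          rw [← Ex_mul_right]
          exact Ex_mono (n2 u0) fun u2 => mul_le_mul_of_nonneg_left (hb u0 y) (gn _ _ _ _)
    _ ≤ _ := by
        rw [← Finset.mul_sum]
        exact mul_le_of_le_one_right (by positivity) mass

variable (h0 : IsPMF Q0) (h1 : ∀ s u, IsPMF (Q1 s u)) (h2 : ∀ s u, IsPMF (Q2 s u))
    (s1 : S1) (s2 : S2) {T : U0 → U1 → U2 → Prop} {r : U0 → U1 → U2 → X → ℝ}
    (hr : ∀ u0 u1 u2 x, 0 ≤ r u0 u1 u2 x) (hr1 : ∑ u0, ∑ u1, ∑ u2, ∑ x, r u0 u1 u2 x = 1)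
    {K012 : ℝ} (hT012 : ∀ u0 u1 u2, T u0 u1 u2 →
      ∑ x, r u0 u1 u2 x ≤ K012 * (Q0 u0 * Q1 s1 u0 u1 * Q2 s2 u0 u2))
    {W : X → Y → ℝ} (hW : ∀ x, IsPMF (W x))

include h0 h1 h2 hr hr1 hT012 hW

/-- Under the likelihood weights, the expected number of wrong candidates at receiver 1. The two
summands come from wrong blocks with another `u0`-codeword and with the same one. -/
lemma wrong1_bound [Nonempty L1] (ν : L1 → L2 → M0 → N0)
    (hν : ∀ a b c a' b' c', ν a b c = ν a' b' c' → a = a' ∧ b = b' ∧ c = c')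
    (ρ1 : Y → Y1) (D1 : S1 → U0 → U1 → Y1 → Prop) {A1 B1 : ℝ}
    (hA0 : 0 ≤ A1) (hB0 : 0 ≤ B1)
    (hA : ∀ y, (∑ s', Ex Q0 fun v0 => Ex (Q1 s' v0) fun v1 => ind (D1 s' v0 v1 y)) ≤ A1)
    (hB : ∀ u0 y, (∑ s', Ex (Q1 s' u0) fun v1 => ind (D1 s' u0 v1 y)) ≤ B1)
    (k2 : L2) (l0 : M0) (m1 : M1) (m2 : M2) :
    (Ex (wpi fun (_ : S1) (_ : L1) => (1 / Fintype.card L1 : ℝ)) fun h => Ex (wC Q0 Q1 Q2) fun c =>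
      ∑ x, lam Q0 (Q1 s1) (Q2 s2) T r (c.1 (ν (h s1) k2 l0)) (cw1 c s1 (ν (h s1) k2 l0) m1)
        (cw2 c s2 (ν (h s1) k2 l0) m2) x * ∑ y, W x y * wrong1 ν D1 c h s1 (ρ1 y)) ≤
    (Fintype.card L2 * Fintype.card M0 * Fintype.card M1 : ℝ) * A1 +
    (Fintype.card M1 / Fintype.card L1 : ℝ) * B1 := by
  have n0 := h0.1
  have n1 := fun u v => (h1 s1 u).1 v
  have n2 := fun u v => (h2 s2 u).1 v
  have gn : ∀ y u0 u1 u2, 0 ≤ ∑ x, lam Q0 (Q1 s1) (Q2 s2) T r u0 u1 u2 x * W x y :=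
    fun y u0 u1 u2 => Finset.sum_nonneg fun x _ =>
      mul_nonneg (lam_nonneg n0 n1 n2 hr _ _ _ _) ((hW x).1 y)
  refine le_trans ?_ (packing_sum h0 h1 h2 s1 s2 hr hr1 hT012 hW
    (fun y => ∑ s', Ex Q0 fun v0 => Ex (Q1 s' v0) fun v1 => ind (D1 s' v0 v1 (ρ1 y)))
    (fun u0 y => ∑ s', Ex (Q1 s' u0) fun v1 => ind (D1 s' u0 v1 (ρ1 y)))
    (fun y => hA _) (fun u y => hB u _) (by positivity) (by positivity) hA0 hB0)
  refine le_trans (le_of_eq ?_) (Finset.sum_le_sum fun y _ =>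
    packing h0 h1 h2 ν hν s1 s2 k2 l0 m1 m2
    (fun u0 u1 u2 => ∑ x, lam Q0 (Q1 s1) (Q2 s2) T r u0 u1 u2 x * W x y) (gn y)
    (fun s' v0 v1 => ind (D1 s' v0 v1 (ρ1 y))) (fun _ _ _ => ind_nonneg _))
  simp only [← Ex_sum]
  refine Ex_congr fun h => Ex_congr fun c => ?_
  exact sum_swap_mul _ _ _

/-- `wrong1_bound` with the roles of the two receivers exchanged. -/
lemma wrong2_bound [Nonempty L2] (ν : L1 → L2 → M0 → N0)
    (hν : ∀ a b c a' b' c', ν a b c = ν a' b' c' → a = a' ∧ b = b' ∧ c = c')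
    (ρ2 : Y → Y2) (D2 : S2 → U0 → U2 → Y2 → Prop) {A2 B2 : ℝ}
    (hA0 : 0 ≤ A2) (hB0 : 0 ≤ B2)
    (hA : ∀ y, (∑ s', Ex Q0 fun v0 => Ex (Q2 s' v0) fun v2 => ind (D2 s' v0 v2 y)) ≤ A2)
    (hB : ∀ u0 y, (∑ s', Ex (Q2 s' u0) fun v2 => ind (D2 s' u0 v2 y)) ≤ B2)
    (k1 : L1) (l0 : M0) (m1 : M1) (m2 : M2) :
    (Ex (wpi fun (_ : S2) (_ : L2) => (1 / Fintype.card L2 : ℝ)) fun h => Ex (wC Q0 Q1 Q2) fun c =>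
      ∑ x, lam Q0 (Q1 s1) (Q2 s2) T r (c.1 (ν k1 (h s2) l0)) (cw1 c s1 (ν k1 (h s2) l0) m1)
        (cw2 c s2 (ν k1 (h s2) l0) m2) x * ∑ y, W x y * wrong2 ν D2 c h s2 (ρ2 y)) ≤
    (Fintype.card L1 * Fintype.card M0 * Fintype.card M2 : ℝ) * A2 +
    (Fintype.card M2 / Fintype.card L2 : ℝ) * B2 := by
  have n0 := h0.1
  have n1 := fun u v => (h1 s1 u).1 v
  have n2 := fun u v => (h2 s2 u).1 v
  have gn : ∀ y u0 u1 u2, 0 ≤ ∑ x, lam Q0 (Q1 s1) (Q2 s2) T r u0 u1 u2 x * W x y :=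
    fun y u0 u1 u2 => Finset.sum_nonneg fun x _ =>
      mul_nonneg (lam_nonneg n0 n1 n2 hr _ _ _ _) ((hW x).1 y)
  refine le_trans ?_ (packing_sum h0 h1 h2 s1 s2 hr hr1 hT012 hW
    (fun y => ∑ s', Ex Q0 fun v0 => Ex (Q2 s' v0) fun v1 => ind (D2 s' v0 v1 (ρ2 y)))
    (fun u0 y => ∑ s', Ex (Q2 s' u0) fun v1 => ind (D2 s' u0 v1 (ρ2 y)))
    (fun y => hA _) (fun u y => hB u _) (by positivity) (by positivity) hA0 hB0)
  refine le_trans (le_of_eq ?_) (Finset.sum_le_sum fun y _ =>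
    packing' h0 h1 h2 ν hν s1 s2 k1 l0 m1 m2
    (fun u0 u1 u2 => ∑ x, lam Q0 (Q1 s1) (Q2 s2) T r u0 u1 u2 x * W x y) (gn y)
    (fun s' v0 v1 => ind (D2 s' v0 v1 (ρ2 y))) (fun _ _ _ => ind_nonneg _))
  simp only [← Ex_sum]
  refine Ex_congr fun h => Ex_congr fun c => ?_
  exact sum_swap_mul _ _ _

end OneShot
end CSBC

/-! ### The one-shot coding theorem -/

namespace CSBC

lemma sum_mul_add3 {X : Type*} [Fintype X] (l a b c : X → ℝ) :
    ∑ x, l x * (a x + (b x + c x)) = ∑ x, l x * a x + (∑ x, l x * b x + ∑ x, l x * c x) := by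
  simp only [mul_add, Finset.sum_add_distrib]

section OneShot
variable {S S1 S2 U0 U1 U2 X Y Y1 Y2 N0 M0 M1 M2 L1 L2 : Type*} [Fintype S] [Fintype S1]
  [Fintype S2] [Fintype U0]
  [Fintype U1] [Fintype U2] [Fintype X] [Fintype Y] [Fintype N0] [Fintype M0] [Fintype M1]
  [Fintype M2] [Fintype L1] [Fintype L2]

/-- Upper bound on the error probability given `x` is sent for the source pair `(s1, s2)`, when
`(u0, u1)` and `(u0, u2)` are codeword pairs of `s1` and `s2`: either they fail the tests `D1`, `D2`,
or there is a wrong candidate. -/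
def errUB (W : X → Y → ℝ) (ρ1 : Y → Y1) (ρ2 : Y → Y2) (D1 : S1 → U0 → U1 → Y1 → Prop)
    (D2 : S2 → U0 → U2 → Y2 → Prop) (ν : L1 → L2 → M0 → N0) (c : Cb S1 S2 U0 U1 U2 N0 M1 M2)
    (h1 : S1 → L1) (h2 : S2 → L2) (s1 : S1) (s2 : S2) (u0 : U0) (u1 : U1) (u2 : U2) (x : X) : ℝ :=
  (∑ y, W x y * (ind (¬ D1 s1 u0 u1 (ρ1 y)) + ind (¬ D2 s2 u0 u2 (ρ2 y)))) +
    ((∑ y, W x y * wrong1 ν D1 c h1 s1 (ρ1 y)) + ∑ y, W x y * wrong2 ν D2 c h2 s2 (ρ2 y))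

/-- Upper bound on the error probability for the source pair `(s1, s2)` under the best channel
input: a covering penalty plus the likelihood-weighted average of `errUB`. -/
def penalty (lm : U0 → U1 → U2 → X → ℝ) (W : X → Y → ℝ) (ρ1 : Y → Y1) (ρ2 : Y → Y2)
    (D1 : S1 → U0 → U1 → Y1 → Prop)
    (D2 : S2 → U0 → U2 → Y2 → Prop) (ν : L1 → L2 → M0 → N0) (s1 : S1) (s2 : S2)
    (h1 : S1 → L1) (h2 : S2 → L2) (c : Cb S1 S2 U0 U1 U2 N0 M1 M2) : ℝ :=
  4 * ((∑ m0 : M0, ∑ m1 : M1, ∑ m2 : M2, ∑ x,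
      lm (c.1 (ν (h1 s1) (h2 s2) m0)) (cw1 c s1 (ν (h1 s1) (h2 s2) m0) m1)
        (cw2 c s2 (ν (h1 s1) (h2 s2) m0) m2) x) /
      (Fintype.card M0 * Fintype.card M1 * Fintype.card M2 : ℝ) - 1) ^ 2 +
  2 * ((∑ m0 : M0, ∑ m1 : M1, ∑ m2 : M2, ∑ x,
      lm (c.1 (ν (h1 s1) (h2 s2) m0)) (cw1 c s1 (ν (h1 s1) (h2 s2) m0) m1)
        (cw2 c s2 (ν (h1 s1) (h2 s2) m0) m2) x *
      errUB W ρ1 ρ2 D1 D2 ν c h1 h2 s1 s2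
        (c.1 (ν (h1 s1) (h2 s2) m0)) (cw1 c s1 (ν (h1 s1) (h2 s2) m0) m1)
        (cw2 c s2 (ν (h1 s1) (h2 s2) m0) m2) x) /
      (Fintype.card M0 * Fintype.card M1 * Fintype.card M2 : ℝ))

omit [Fintype S] [Fintype U0] [Fintype U1] [Fintype U2] [Fintype N0] in
/-- For fixed hashes and codebook, a deterministic code whose error probability for each source
pair is at most `penalty`. -/
lemma exists_code [Nonempty S1] [Nonempty S2] [Nonempty X] [Nonempty M0] [Nonempty M1] [Nonempty M2]
    (π1 : S → S1) (π2 : S → S2)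
    (lm : S → U0 → U1 → U2 → X → ℝ) (hlm : ∀ s u0 u1 u2 x, 0 ≤ lm s u0 u1 u2 x)
    {W : X → Y → ℝ} (hW : ∀ x, IsPMF (W x)) (ρ1 : Y → Y1) (ρ2 : Y → Y2)
    (D1 : S1 → U0 → U1 → Y1 → Prop) (D2 : S2 → U0 → U2 → Y2 → Prop)
    (ν : L1 → L2 → M0 → N0) (h1 : S1 → L1) (h2 : S2 → L2) (c : Cb S1 S2 U0 U1 U2 N0 M1 M2) :
    ∃ (enc : S → X) (dec1 : Y1 → S1) (dec2 : Y2 → S2), ∀ s,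
      ∑ y, W (enc s) y * ind (¬ (dec1 (ρ1 y) = π1 s ∧ dec2 (ρ2 y) = π2 s)) ≤
      penalty (lm s) W ρ1 ρ2 D1 D2 ν (π1 s) (π2 s) h1 h2 c := by
  obtain ⟨dec1, hd1⟩ := exists_decoder (I := L2 × M0 × M1) fun s i (y : Y1) =>
    D1 s (c.1 (ν (h1 s) i.1 i.2.1)) (cw1 c s (ν (h1 s) i.1 i.2.1) i.2.2) y
  obtain ⟨dec2, hd2⟩ := exists_decoder (I := L1 × M0 × M2) fun s i (y : Y2) =>
    D2 s (c.1 (ν i.1 (h2 s) i.2.1)) (cw2 c s (ν i.1 (h2 s) i.2.1) i.2.2) y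
  set e : S → X → ℝ := fun s x =>
    ∑ y, W x y * ind (¬ (dec1 (ρ1 y) = π1 s ∧ dec2 (ρ2 y) = π2 s)) with he
  have hmin : ∀ s, ∃ x0, ∀ x, e s x0 ≤ e s x := fun s => Finite.exists_min (e s)
  choose enc henc using hmin
  refine ⟨enc, dec1, dec2, fun s => ?_⟩
  have e0 : ∀ x, 0 ≤ e s x := fun x =>
    Finset.sum_nonneg fun y _ => mul_nonneg ((hW x).1 y) (ind_nonneg _)
  have e1 : ∀ x, e s x ≤ 1 := fun x => by
    rw [← (hW x).2]
    exact Finset.sum_le_sum fun y _ => mul_le_of_le_one_right ((hW x).1 y) (ind_le_one _)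
  have p0 : (0 : ℝ) < Fintype.card M0 := by simp [Fintype.card_pos]
  have p1 : (0 : ℝ) < Fintype.card M1 := by simp [Fintype.card_pos]
  have p2 : (0 : ℝ) < Fintype.card M2 := by simp [Fintype.card_pos]
  have key := min_bound (M := M0 × M1 × M2) (e s) (fun m x =>
      lm s (c.1 (ν (h1 (π1 s)) (h2 (π2 s)) m.1)) (cw1 c (π1 s) (ν (h1 (π1 s)) (h2 (π2 s)) m.1) m.2.1)
        (cw2 c (π2 s) (ν (h1 (π1 s)) (h2 (π2 s)) m.1) m.2.2) x)
      (Fintype.card M0 * Fintype.card M1 * Fintype.card M2 : ℝ) (by positivity) e0 e1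
      (fun m x => hlm _ _ _ _ _) (enc s) (henc s)
  refine key.trans ?_
  simp only [Fintype.sum_prod_type, penalty]
  refine add_le_add le_rfl (mul_le_mul_of_nonneg_left (div_le_div_of_nonneg_right ?_
    (by positivity)) (by norm_num))
  refine Finset.sum_le_sum fun m0 _ => Finset.sum_le_sum fun m1 _ => Finset.sum_le_sum fun m2 _ =>
    Finset.sum_le_sum fun x _ => mul_le_mul_of_nonneg_left ?_ (hlm _ _ _ _ _)
  simp only [he, errUB, ← Finset.sum_add_distrib, ← mul_add]
  refine Finset.sum_le_sum fun y _ => mul_le_mul_of_nonneg_left ?_ ((hW x).1 y)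
  have a1 := hd1 (π1 s) (ρ1 y) (h2 (π2 s), m0, m1)
  have a2 := hd2 (π2 s) (ρ2 y) (h1 (π1 s), m0, m2)
  have a3 : ind (¬ (dec1 (ρ1 y) = π1 s ∧ dec2 (ρ2 y) = π2 s)) ≤
      ind (dec1 (ρ1 y) ≠ π1 s) + ind (dec2 (ρ2 y) ≠ π2 s) := by
    by_cases c1 : dec1 (ρ1 y) = π1 s <;> by_cases c2 : dec2 (ρ2 y) = π2 s <;>
      simp [ind, c1, c2]
  unfold wrong1 wrong2
  simp only at a1 a2
  linarith

variable {Q0 : U0 → ℝ} {Q1 : S1 → U0 → U1 → ℝ} {Q2 : S2 → U0 → U2 → ℝ}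

omit [Fintype S] in
/-- Expectation of `penalty` over hashes and codebooks, for one source pair. -/
lemma penalty_bound [Nonempty M0] [Nonempty M1] [Nonempty M2] [Nonempty L1] [Nonempty L2]
    (h0 : IsPMF Q0) (h1 : ∀ s u, IsPMF (Q1 s u)) (h2 : ∀ s u, IsPMF (Q2 s u))
    (ν : L1 → L2 → M0 → N0)
    (hν : ∀ a b c a' b' c', ν a b c = ν a' b' c' → a = a' ∧ b = b' ∧ c = c')
    (s1 : S1) (s2 : S2) (T : U0 → U1 → U2 → Prop) (r : U0 → U1 → U2 → X → ℝ)
    (hr : ∀ u0 u1 u2 x, 0 ≤ r u0 u1 u2 x) (hr1 : ∑ u0, ∑ u1, ∑ u2, ∑ x, r u0 u1 u2 x = 1)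
    {W : X → Y → ℝ} (hW : ∀ x, IsPMF (W x)) (ρ1 : Y → Y1) (ρ2 : Y → Y2)
    (D1 : S1 → U0 → U1 → Y1 → Prop) (D2 : S2 → U0 → U2 → Y2 → Prop)
    {K0 K01 K02 K012 : ℝ} (k0 : 0 ≤ K0) (k01 : 0 ≤ K01) (k02 : 0 ≤ K02) (k012 : 0 ≤ K012)
    (hT0 : ∀ u0 u1 u2, T u0 u1 u2 → ∑ u1, ∑ u2, ∑ x, r u0 u1 u2 x ≤ K0 * Q0 u0)
    (hT01 : ∀ u0 u1 u2, T u0 u1 u2 → ∑ u2, ∑ x, r u0 u1 u2 x ≤ K01 * (Q0 u0 * Q1 s1 u0 u1))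
    (hT02 : ∀ u0 u1 u2, T u0 u1 u2 → ∑ u1, ∑ x, r u0 u1 u2 x ≤ K02 * (Q0 u0 * Q2 s2 u0 u2))
    (hT012 : ∀ u0 u1 u2, T u0 u1 u2 →
      ∑ x, r u0 u1 u2 x ≤ K012 * (Q0 u0 * Q1 s1 u0 u1 * Q2 s2 u0 u2))
    {A1 B1 A2 B2 : ℝ} (a1 : 0 ≤ A1) (b1 : 0 ≤ B1) (a2 : 0 ≤ A2) (b2 : 0 ≤ B2)
    (hA1 : ∀ y, (∑ s', Ex Q0 fun v0 => Ex (Q1 s' v0) fun v1 => ind (D1 s' v0 v1 y)) ≤ A1)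
    (hB1 : ∀ u0 y, (∑ s', Ex (Q1 s' u0) fun v1 => ind (D1 s' u0 v1 y)) ≤ B1)
    (hA2 : ∀ y, (∑ s', Ex Q0 fun v0 => Ex (Q2 s' v0) fun v1 => ind (D2 s' v0 v1 y)) ≤ A2)
    (hB2 : ∀ u0 y, (∑ s', Ex (Q2 s' u0) fun v1 => ind (D2 s' u0 v1 y)) ≤ B2) :
    (Ex (wpi fun (_ : S1) (_ : L1) => (1 / Fintype.card L1 : ℝ)) fun g1 =>
      Ex (wpi fun (_ : S2) (_ : L2) => (1 / Fintype.card L2 : ℝ)) fun g2 =>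
      Ex (wC Q0 Q1 Q2 : Cb S1 S2 U0 U1 U2 N0 M1 M2 → ℝ) fun c =>
      penalty (lam Q0 (Q1 s1) (Q2 s2) T r) W ρ1 ρ2 D1 D2 ν s1 s2 g1 g2 c) ≤
    4 * (2 * (∑ u0, ∑ u1, ∑ u2, ∑ x, r u0 u1 u2 x * ind (¬ T u0 u1 u2))
        + K0 / Fintype.card M0 + K01 / (Fintype.card M0 * Fintype.card M1)
        + K02 / (Fintype.card M0 * Fintype.card M2)
        + K012 / (Fintype.card M0 * Fintype.card M1 * Fintype.card M2)) +
    2 * ((∑ u0, ∑ u1, ∑ u2, ∑ x, r u0 u1 u2 x *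
          ∑ y, W x y * (ind (¬ D1 s1 u0 u1 (ρ1 y)) + ind (¬ D2 s2 u0 u2 (ρ2 y)))) +
      (((Fintype.card L2 * Fintype.card M0 * Fintype.card M1 : ℝ) * A1 +
        (Fintype.card M1 / Fintype.card L1 : ℝ) * B1) +
      ((Fintype.card L1 * Fintype.card M0 * Fintype.card M2 : ℝ) * A2 +
        (Fintype.card M2 / Fintype.card L2 : ℝ) * B2))) := by
  have hu1 : IsPMF (wpi fun (_ : S1) (_ : L1) => (1 / Fintype.card L1 : ℝ)) :=
    IsPMF.wpi fun _ => ⟨fun _ => by positivity, by simp⟩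
  have hu2 : IsPMF (wpi fun (_ : S2) (_ : L2) => (1 / Fintype.card L2 : ℝ)) :=
    IsPMF.wpi fun _ => ⟨fun _ => by positivity, by simp⟩
  have p0 : (0 : ℝ) < Fintype.card M0 := by simp [Fintype.card_pos]
  have p1 : (0 : ℝ) < Fintype.card M1 := by simp [Fintype.card_pos]
  have p2 : (0 : ℝ) < Fintype.card M2 := by simp [Fintype.card_pos]
  simp only [penalty, Ex_add, Ex_mul_left]
  refine add_le_add (mul_le_mul_of_nonneg_left ?_ (by norm_num))
    (mul_le_mul_of_nonneg_left ?_ (by norm_num))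
  · calc _ ≤ Ex (wpi fun (_ : S1) (_ : L1) => (1 / Fintype.card L1 : ℝ)) fun g1 =>
          Ex (wpi fun (_ : S2) (_ : L2) => (1 / Fintype.card L2 : ℝ)) fun g2 => _ :=
        Ex_mono hu1.1 fun g1 => Ex_mono hu2.1 fun g2 =>
          cover_target h0 h1 h2 (M1 := M1) (M2 := M2) (fun m0 => ν (g1 s1) (g2 s2) m0)
            (fun m m' h => (hν _ _ _ _ _ _ h).2.2) s1 s2 T r hr hr1 k0 k01 k02 k012
            hT0 hT01 hT02 hT012
      _ = _ := by
        rw [Ex_congr fun g1 => Ex_const hu2 _, Ex_const hu1]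
  · simp only [div_eq_mul_inv _ ((Fintype.card M0 * Fintype.card M1 * Fintype.card M2 : ℝ)),
      Ex_mul_right, Ex_sum]
    rw [mul_inv_le_iff₀ (by positivity)]
    have hsum : ∀ R : ℝ, R * (Fintype.card M0 * Fintype.card M1 * Fintype.card M2 : ℝ) =
        ∑ m0 : M0, ∑ m1 : M1, ∑ m2 : M2, R := by
      intro R
      simp only [Finset.sum_const, Finset.card_univ, nsmul_eq_mul]
      ring
    rw [hsum]
    refine Finset.sum_le_sum fun m0 _ => Finset.sum_le_sum fun m1 _ =>
      Finset.sum_le_sum fun m2 _ => ?_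
    · simp only [← Ex_sum]
      simp only [errUB, sum_mul_add3, Ex_add]
      refine add_le_add ?_ (add_le_add ?_ ?_)
      · have e1 := fun n : N0 => Ex_wC_one h0 h1 h2 s1 s2 n m1 m2 (fun u0 u1 u2 =>
          ∑ x, lam Q0 (Q1 s1) (Q2 s2) T r u0 u1 u2 x *
            ∑ y, W x y * (ind (¬ D1 s1 u0 u1 (ρ1 y)) + ind (¬ D2 s2 u0 u2 (ρ2 y))))
        simp only [e1]
        rw [Ex_congr fun g1 => Ex_const hu2 _, Ex_const hu1]
        exact Ex_lam_le hr hT012 _ fun u0 u1 u2 x => Finset.sum_nonneg fun y _ =>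
          mul_nonneg ((hW x).1 y) (add_nonneg (ind_nonneg _) (ind_nonneg _))
      · have := fun g2 : S2 → L2 => wrong1_bound h0 h1 h2 s1 s2 hr hr1 hT012 hW ν hν ρ1 D1 a1 b1
          hA1 hB1 (g2 s2) m0 m1 m2
        rw [Ex_comm]
        refine (Ex_mono hu2.1 this).trans ?_
        rw [Ex_const hu2]
      · have := fun g1 : S1 → L1 => wrong2_bound h0 h1 h2 s1 s2 hr hr1 hT012 hW ν hν ρ2 D2 a2 b2
          hA2 hB2 (g1 s1) m0 m1 m2
        refine (Ex_mono hu1.1 this).trans ?_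
        rw [Ex_const hu1]

/-- One-shot coding theorem: a code whose error probability is controlled by the probabilities of
the atypical sets and by the sizes of the index sets. -/
theorem one_shot [Nonempty S1] [Nonempty S2] [Nonempty X]
    [Nonempty M0] [Nonempty M1] [Nonempty M2] [Nonempty L1] [Nonempty L2]
    (π1 : S → S1) (π2 : S → S2) {q : S → ℝ} (hq : IsPMF q)
    (h0 : IsPMF Q0) (h1 : ∀ s u, IsPMF (Q1 s u)) (h2 : ∀ s u, IsPMF (Q2 s u))
    (T : S → U0 → U1 → U2 → Prop) (r : S → U0 → U1 → U2 → X → ℝ)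
    (hr : ∀ s u0 u1 u2 x, 0 ≤ r s u0 u1 u2 x) (hr1 : ∀ s, ∑ u0, ∑ u1, ∑ u2, ∑ x, r s u0 u1 u2 x = 1)
    {W : X → Y → ℝ} (hW : ∀ x, IsPMF (W x)) (ρ1 : Y → Y1) (ρ2 : Y → Y2)
    (D1 : S1 → U0 → U1 → Y1 → Prop) (D2 : S2 → U0 → U2 → Y2 → Prop)
    {K0 K01 K02 K012 : ℝ} (k0 : 0 ≤ K0) (k01 : 0 ≤ K01) (k02 : 0 ≤ K02) (k012 : 0 ≤ K012)
    (hT0 : ∀ s u0 u1 u2, T s u0 u1 u2 → ∑ u1, ∑ u2, ∑ x, r s u0 u1 u2 x ≤ K0 * Q0 u0)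
    (hT01 : ∀ s u0 u1 u2, T s u0 u1 u2 →
      ∑ u2, ∑ x, r s u0 u1 u2 x ≤ K01 * (Q0 u0 * Q1 (π1 s) u0 u1))
    (hT02 : ∀ s u0 u1 u2, T s u0 u1 u2 →
      ∑ u1, ∑ x, r s u0 u1 u2 x ≤ K02 * (Q0 u0 * Q2 (π2 s) u0 u2))
    (hT012 : ∀ s u0 u1 u2, T s u0 u1 u2 →
      ∑ x, r s u0 u1 u2 x ≤ K012 * (Q0 u0 * Q1 (π1 s) u0 u1 * Q2 (π2 s) u0 u2))
    {A1 B1 A2 B2 : ℝ} (a1 : 0 ≤ A1) (b1 : 0 ≤ B1) (a2 : 0 ≤ A2) (b2 : 0 ≤ B2)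
    (hA1 : ∀ y, (∑ s', Ex Q0 fun v0 => Ex (Q1 s' v0) fun v1 => ind (D1 s' v0 v1 y)) ≤ A1)
    (hB1 : ∀ u0 y, (∑ s', Ex (Q1 s' u0) fun v1 => ind (D1 s' u0 v1 y)) ≤ B1)
    (hA2 : ∀ y, (∑ s', Ex Q0 fun v0 => Ex (Q2 s' v0) fun v1 => ind (D2 s' v0 v1 y)) ≤ A2)
    (hB2 : ∀ u0 y, (∑ s', Ex (Q2 s' u0) fun v1 => ind (D2 s' u0 v1 y)) ≤ B2) :
    ∃ (enc : S → X) (dec1 : Y1 → S1) (dec2 : Y2 → S2),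
      (∑ s, q s * ∑ y, W (enc s) y * ind (¬ (dec1 (ρ1 y) = π1 s ∧ dec2 (ρ2 y) = π2 s))) ≤
    4 * (2 * (∑ s, q s * ∑ u0, ∑ u1, ∑ u2, ∑ x, r s u0 u1 u2 x * ind (¬ T s u0 u1 u2))
        + K0 / Fintype.card M0 + K01 / (Fintype.card M0 * Fintype.card M1)
        + K02 / (Fintype.card M0 * Fintype.card M2)
        + K012 / (Fintype.card M0 * Fintype.card M1 * Fintype.card M2)) +
    2 * ((∑ s, q s * ∑ u0, ∑ u1, ∑ u2, ∑ x, r s u0 u1 u2 x *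
          ∑ y, W x y * (ind (¬ D1 (π1 s) u0 u1 (ρ1 y)) + ind (¬ D2 (π2 s) u0 u2 (ρ2 y)))) +
      (((Fintype.card L2 * Fintype.card M0 * Fintype.card M1 : ℝ) * A1 +
        (Fintype.card M1 / Fintype.card L1 : ℝ) * B1) +
      ((Fintype.card L1 * Fintype.card M0 * Fintype.card M2 : ℝ) * A2 +
        (Fintype.card M2 / Fintype.card L2 : ℝ) * B2))) := by
  have hu1 : IsPMF (wpi fun (_ : S1) (_ : L1) => (1 / Fintype.card L1 : ℝ)) :=
    IsPMF.wpi fun _ => ⟨fun _ => by positivity, by simp⟩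
  have hu2 : IsPMF (wpi fun (_ : S2) (_ : L2) => (1 / Fintype.card L2 : ℝ)) :=
    IsPMF.wpi fun _ => ⟨fun _ => by positivity, by simp⟩
  obtain ⟨N0, _, ν, hν⟩ : ∃ (N0 : Type _) (_ : Fintype N0) (ν : L1 → L2 → M0 → N0),
      ∀ a b c a' b' c', ν a b c = ν a' b' c' → a = a' ∧ b = b' ∧ c = c' :=
    ⟨L1 × L2 × M0, inferInstance, fun a b c => (a, b, c), by simp⟩
  set lm := fun s => lam Q0 (Q1 (π1 s)) (Q2 (π2 s)) (T s) (r s) with hlm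
  set bd := fun s => 4 * (2 * (∑ u0, ∑ u1, ∑ u2, ∑ x, r s u0 u1 u2 x * ind (¬ T s u0 u1 u2))
        + K0 / Fintype.card M0 + K01 / (Fintype.card M0 * Fintype.card M1)
        + K02 / (Fintype.card M0 * Fintype.card M2)
        + K012 / (Fintype.card M0 * Fintype.card M1 * Fintype.card M2)) +
    2 * ((∑ u0, ∑ u1, ∑ u2, ∑ x, r s u0 u1 u2 x *
          ∑ y, W x y * (ind (¬ D1 (π1 s) u0 u1 (ρ1 y)) + ind (¬ D2 (π2 s) u0 u2 (ρ2 y)))) +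
      (((Fintype.card L2 * Fintype.card M0 * Fintype.card M1 : ℝ) * A1 +
        (Fintype.card M1 / Fintype.card L1 : ℝ) * B1) +
      ((Fintype.card L1 * Fintype.card M0 * Fintype.card M2 : ℝ) * A2 +
        (Fintype.card M2 / Fintype.card L2 : ℝ) * B2))) with hbd
  have main : (Ex (wpi fun (_ : S1) (_ : L1) => (1 / Fintype.card L1 : ℝ)) fun g1 =>
      Ex (wpi fun (_ : S2) (_ : L2) => (1 / Fintype.card L2 : ℝ)) fun g2 =>
      Ex (wC Q0 Q1 Q2 : Cb S1 S2 U0 U1 U2 N0 M1 M2 → ℝ) fun c =>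
      ∑ s, q s * penalty (lm s) W ρ1 ρ2 D1 D2 ν (π1 s) (π2 s) g1 g2 c) ≤ ∑ s, q s * bd s := by
    simp only [Ex_sum, Ex_mul_left]
    exact Finset.sum_le_sum fun s _ => mul_le_mul_of_nonneg_left
      (penalty_bound h0 h1 h2 ν hν (π1 s) (π2 s) (T s) (r s) (hr s) (hr1 s) hW ρ1 ρ2 D1 D2
        k0 k01 k02 k012 (hT0 s) (hT01 s) (hT02 s) (hT012 s) a1 b1 a2 b2 hA1 hB1 hA2 hB2) (hq.1 s)
  obtain ⟨g1, hg1⟩ := Ex_exists hu1 main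
  obtain ⟨g2, hg2⟩ := Ex_exists hu2 hg1
  obtain ⟨c, hc⟩ := Ex_exists (isPMF_wC h0 h1 h2) hg2
  obtain ⟨enc, dec1, dec2, hcode⟩ := exists_code π1 π2 lm
    (fun s => lam_nonneg h0.1 (fun u => (h1 _ u).1) (fun u => (h2 _ u).1) (hr s))
    hW ρ1 ρ2 D1 D2 ν g1 g2 c
  refine ⟨enc, dec1, dec2, ?_⟩
  refine (Finset.sum_le_sum fun s _ => mul_le_mul_of_nonneg_left (hcode s) (hq.1 s)).trans
    (hc.trans (le_of_eq ?_))
  simp only [hbd, mul_add, Finset.sum_add_distrib, mul_left_comm (q _) (2 : ℝ),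
    mul_left_comm (q _) (4 : ℝ), ← Finset.mul_sum, ← Finset.sum_mul, hq.2, one_mul]

end OneShot
end CSBC

/-! ### Distributions and the law of large numbers -/

namespace CSBC

section Dist
variable {Ω A B : Type*} [Fintype Ω] [Fintype A] [Fintype B]

lemma dist_eq_Ex (p : Ω → ℝ) (X : Ω → A) (a : A) : dist p X a = Ex p fun ω => ind (X ω = a) := by
  simp only [dist, Ex, ind, mul_ite, mul_one, mul_zero]

lemma dist_nonneg {p : Ω → ℝ} (hp : ∀ ω, 0 ≤ p ω) (X : Ω → A) (a : A) : 0 ≤ dist p X a := by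
  rw [dist_eq_Ex]
  exact Ex_nonneg hp fun _ => ind_nonneg _

lemma dist_pos {p : Ω → ℝ} (hp : ∀ ω, 0 ≤ p ω) (X : Ω → A) {ω : Ω} (h : p ω ≠ 0) :
    0 < dist p X (X ω) := by
  rw [dist_eq_Ex]
  refine Finset.sum_pos' (fun ω _ => mul_nonneg (hp ω) (ind_nonneg _)) ⟨ω, Finset.mem_univ _, ?_⟩
  beta_reduce
  rw [ind_true rfl, mul_one]
  exact lt_of_le_of_ne (hp ω) h.symm

lemma sum_ind_eq' (a : A) (F : A → ℝ) : ∑ x, F x * ind (x = a) = F a := by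
  rw [Finset.sum_eq_single a]
  · rw [ind_true rfl, mul_one]
  · intro b _ hb
    rw [ind_false hb, mul_zero]
  · simp

lemma Ex_dist (p : Ω → ℝ) (X : Ω → A) (F : A → ℝ) : Ex (dist p X) F = Ex p fun ω => F (X ω) := by
  unfold Ex
  simp only [dist_eq_Ex, Ex, Finset.sum_mul]
  rw [Finset.sum_comm]
  refine Finset.sum_congr rfl fun ω _ => ?_
  rw [Finset.sum_eq_single (X ω)]
  · rw [ind_true rfl, mul_one]
  · intro b _ hb
    rw [ind_false hb.symm]; ring
  · simp

lemma isPMF_dist {p : Ω → ℝ} (hp : IsPMF p) (X : Ω → A) : IsPMF (dist p X) := by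
  refine ⟨dist_nonneg hp.1 X, ?_⟩
  have := Ex_dist p X (fun _ => 1)
  rw [Ex_const hp] at this
  simpa [Ex] using this

lemma dist_marg (p : Ω → ℝ) (X : Ω → A) (Y : Ω → B) (b : B) :
    ∑ a, dist p (fun ω => (X ω, Y ω)) (a, b) = dist p Y b := by
  simp only [dist_eq_Ex, ← Ex_sum, Prod.mk.injEq, ind_and, ← Finset.sum_mul, sum_ind_eq, one_mul]

lemma Ex_log_dist (p : Ω → ℝ) (X : Ω → A) :
    Ex p (fun ω => Real.log (dist p X (X ω))) = - H p X := by
  rw [← Ex_dist p X fun a => Real.log (dist p X a), H, neg_neg]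
  rfl

lemma sum_prod_pi {n : ℕ} (f : Fin n → A → ℝ) : ∑ x : Fin n → A, ∏ i, f i (x i) = ∏ i, ∑ a, f i a :=
  sum_wpi f

end Dist

section LLN
variable {Ω : Type*} [Fintype Ω] {p : Ω → ℝ}

lemma second_moment (hp : IsPMF p) (g : Ω → ℝ) (hg : Ex p g = 0) (n : ℕ) :
    Ex (wpi fun _ : Fin n => p) (fun c => (∑ i, g (c i)) ^ 2) = n * Ex p fun ω => g ω ^ 2 := by
  have e : ∀ c : Fin n → Ω, (∑ i, g (c i)) ^ 2 = ∑ i, ∑ j, g (c i) * g (c j) := by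
    intro c
    rw [sq, Finset.sum_mul_sum]
  rw [Ex_congr e]
  simp only [Ex_sum]
  have : ∀ i j : Fin n, Ex (wpi fun _ : Fin n => p) (fun c => g (c i) * g (c j)) =
      if i = j then Ex p fun ω => g ω ^ 2 else 0 := by
    intro i j
    split_ifs with h
    · subst h
      rw [wpi_one (fun _ => hp) i fun a => g a * g a]
      simp only [sq]
    · rw [wpi_two (fun _ => hp) h fun a b => g a * g b]
      simp only [Ex_mul_left, hg, mul_zero]
      exact Ex_const hp 0
  simp only [this]
  simp

/-- Weak law of large numbers for log-likelihood ratios. -/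
lemma lln (hp : IsPMF p) {φ ψ : Ω → ℝ} (hφ : ∀ ω, p ω ≠ 0 → 0 < φ ω) (hψ : ∀ ω, p ω ≠ 0 → 0 < ψ ω)
    {c : ℝ} (hc : Ex p (fun ω => Real.log (φ ω) - Real.log (ψ ω)) < c) :
    Tendsto (fun n : ℕ => Ex (wpi fun _ : Fin n => p) fun ω =>
      ind (¬ ∏ i, φ (ω i) ≤ Real.exp (n * c) * ∏ i, ψ (ω i))) atTop (nhds 0) := by
  set μ := Ex p (fun ω => Real.log (φ ω) - Real.log (ψ ω)) with hμ
  set g : Ω → ℝ := fun ω => (Real.log (φ ω) - Real.log (ψ ω)) + (-μ) with hg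
  have hg0 : Ex p g = 0 := by
    rw [hg, Ex_add, Ex_const hp, ← hμ]; ring
  have hδ : 0 < c - μ := sub_pos.2 hc
  have key : ∀ n : ℕ, 0 < n → (Ex (wpi fun _ : Fin n => p) fun ω =>
      ind (¬ ∏ i, φ (ω i) ≤ Real.exp (n * c) * ∏ i, ψ (ω i))) ≤
      (Ex p fun ω => g ω ^ 2) / (c - μ) ^ 2 / n := by
    intro n hn
    have hn' : (0 : ℝ) < n := by exact_mod_cast hn
    have hs : (Ex p fun ω => g ω ^ 2) / (c - μ) ^ 2 / n =
        Ex (wpi fun _ : Fin n => p) fun ω => (1 / (n * (c - μ)) ^ 2) * (∑ i, g (ω i)) ^ 2 := by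
      rw [Ex_mul_left, second_moment hp g hg0]
      field_simp
    rw [hs]
    refine Finset.sum_le_sum fun ω _ => ?_
    by_cases h0 : wpi (fun _ : Fin n => p) ω = 0
    · rw [h0]; simp
    refine mul_le_mul_of_nonneg_left ?_ (Finset.prod_nonneg fun i _ => hp.1 _)
    beta_reduce
    have hi : ∀ i, p (ω i) ≠ 0 := fun i hi => h0 (Finset.prod_eq_zero (Finset.mem_univ i) hi)
    by_cases hP : ∏ i, φ (ω i) ≤ Real.exp (n * c) * ∏ i, ψ (ω i)
    · rw [ind_false (not_not.2 hP)]; positivity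
    rw [ind_true hP]
    have hφp : 0 < ∏ i, φ (ω i) := Finset.prod_pos fun i _ => hφ _ (hi i)
    have hψp : 0 < ∏ i, ψ (ω i) := Finset.prod_pos fun i _ => hψ _ (hi i)
    push Not at hP
    have h1 := Real.log_lt_log (by positivity) hP
    rw [Real.log_mul (by positivity) hψp.ne', Real.log_exp,
      Real.log_prod fun i _ => (hφ _ (hi i)).ne', Real.log_prod fun i _ => (hψ _ (hi i)).ne'] at h1
    have h2 : n * (c - μ) ≤ ∑ i, g (ω i) := by
      simp only [hg, Finset.sum_add_distrib, Finset.sum_sub_distrib, Finset.sum_const,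
        Finset.card_univ, Fintype.card_fin, nsmul_eq_mul]
      linarith
    rw [one_div, inv_mul_eq_div, le_div_iff₀ (by positivity), one_mul]
    exact pow_le_pow_left₀ (by positivity) h2 2
  refine tendsto_of_tendsto_of_tendsto_of_le_of_le' tendsto_const_nhds
    (tendsto_const_nhds.div_atTop tendsto_natCast_atTop_atTop :
      Tendsto (fun n : ℕ => (Ex p fun ω => g ω ^ 2) / (c - μ) ^ 2 / (n : ℝ)) atTop (nhds 0)) ?_ ?_
  · exact Eventually.of_forall fun n => Ex_nonneg
      (fun ω => Finset.prod_nonneg fun i _ => hp.1 _) fun ω => ind_nonneg _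
  · filter_upwards [eventually_gt_atTop 0] with n hn using key n hn

lemma tendsto_exp_neg {a : ℝ} (ha : a < 0) :
    Tendsto (fun n : ℕ => Real.exp (n * a)) atTop (nhds 0) :=
  Real.tendsto_exp_atBot.comp
    ((tendsto_natCast_atTop_atTop (R := ℝ)).atTop_mul_const_of_neg ha)

/-- Size of an index set of rate `R` at block length `n`. -/
def sz (n : ℕ) (R : ℝ) : ℕ := ⌈Real.exp (n * R)⌉₊

lemma le_sz (n : ℕ) (R : ℝ) : Real.exp (n * R) ≤ sz n R := Nat.le_ceil _

lemma sz_pos (n : ℕ) (R : ℝ) : 0 < sz n R := Nat.ceil_pos.2 (Real.exp_pos _)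

lemma sz_le (n : ℕ) {R : ℝ} (hR : 0 ≤ R) : (sz n R : ℝ) ≤ 2 * Real.exp (n * R) := by
  have h1 := Nat.ceil_lt_add_one (Real.exp_pos (n * R)).le
  have h2 : 1 ≤ Real.exp (n * R) := Real.one_le_exp (by positivity)
  unfold sz
  linarith

end LLN
end CSBC

/-! ### Conditional laws and the decoding test -/

namespace CSBC

lemma ind_not_and (P Q : Prop) : ind (¬ (P ∧ Q)) ≤ ind (¬ P) + ind (¬ Q) := by
  by_cases hP : P <;> by_cases hQ : Q <;> simp [ind, hP, hQ]

section Kap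
variable {Ω A B C D : Type*} [Fintype Ω] [Fintype A] [Fintype B] [Fintype C] [Fintype D]

/-- The conditional pmf of `U` given `(S, V)`; where the conditioning event has probability zero
it is set to the unconditional law of `U`, so that it is a pmf for all arguments. -/
def kap (p : Ω → ℝ) (S : Ω → A) (V : Ω → B) (U : Ω → C) (s : A) (v : B) (u : C) : ℝ :=
  if dist p (fun ω => (S ω, V ω)) (s, v) = 0 then dist p U u
  else dist p (fun ω => (U ω, S ω, V ω)) (u, s, v) / dist p (fun ω => (S ω, V ω)) (s, v)

variable {p : Ω → ℝ} (hp : IsPMF p) (S : Ω → A) (V : Ω → B) (U : Ω → C) (Y : Ω → D)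
include hp

lemma kap_pmf (s : A) (v : B) : IsPMF (kap p S V U s v) := by
  by_cases h : dist p (fun ω => (S ω, V ω)) (s, v) = 0
  · have : kap p S V U s v = dist p U := by
      funext u; exact if_pos h
    rw [this]
    exact isPMF_dist hp U
  · have : kap p S V U s v = fun u =>
        dist p (fun ω => (U ω, S ω, V ω)) (u, s, v) / dist p (fun ω => (S ω, V ω)) (s, v) := by
      funext u; exact if_neg h
    rw [this]
    refine ⟨fun u => div_nonneg (dist_nonneg hp.1 _ _) (dist_nonneg hp.1 _ _), ?_⟩
    rw [← Finset.sum_div, dist_marg p U (fun ω => (S ω, V ω)), div_self h]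

lemma kap_supp {ω : Ω} (h : p ω ≠ 0) : kap p S V U (S ω) (V ω) (U ω) =
    dist p (fun ω => (U ω, S ω, V ω)) (U ω, S ω, V ω) / dist p (fun ω => (S ω, V ω)) (S ω, V ω) :=
  if_neg (dist_pos hp.1 (fun ω => (S ω, V ω)) h).ne'

lemma kap_pos {ω : Ω} (h : p ω ≠ 0) : 0 < kap p S V U (S ω) (V ω) (U ω) := by
  rw [kap_supp hp S V U h]
  exact div_pos (dist_pos hp.1 (fun ω => (U ω, S ω, V ω)) h)
    (dist_pos hp.1 (fun ω => (S ω, V ω)) h)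

omit hp in
lemma Ex_congr_supp {F G : Ω → ℝ} (h : ∀ ω, p ω ≠ 0 → F ω = G ω) : Ex p F = Ex p G := by
  refine Finset.sum_congr rfl fun ω _ => ?_
  by_cases h0 : p ω = 0
  · rw [h0, zero_mul, zero_mul]
  · rw [h ω h0]

omit hp in
lemma Ex_sub (F G : Ω → ℝ) : Ex p (fun ω => F ω - G ω) = Ex p F - Ex p G := by
  simp [Ex, mul_sub, Finset.sum_sub_distrib]

lemma Ex_log_kap : Ex p (fun ω => Real.log (kap p S V U (S ω) (V ω) (U ω))) =
    - H p (fun ω => (U ω, S ω, V ω)) + H p (fun ω => (S ω, V ω)) := by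
  have := Ex_log_dist p (fun ω => (U ω, S ω, V ω))
  have h2 := Ex_log_dist p (fun ω => (S ω, V ω))
  rw [← this, ← neg_neg (H p _), ← h2, ← sub_eq_add_neg, ← Ex_sub]
  refine Ex_congr_supp fun ω h => ?_
  rw [kap_supp hp S V U h, Real.log_div
    (dist_pos hp.1 (fun ω => (U ω, S ω, V ω)) h).ne' (dist_pos hp.1 (fun ω => (S ω, V ω)) h).ne']

/-- The decoding test at block length `n`: the candidate source block `s` and codewords `v`, `u`
have positive joint probability with the output `y`, and this probability exceeds the one for `y`
independent of the drawn pair `(v, u)` by the factor `exp (n a)`, and the one for `u` drawn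
independently of `y` given `v` by the factor `exp (n b)`. -/
def Dn (p : Ω → ℝ) (S : Ω → A) (V : Ω → B) (U : Ω → C) (Y : Ω → D) (n : ℕ) (a b : ℝ)
    (s : Fin n → A) (v : Fin n → B) (u : Fin n → C) (y : Fin n → D) : Prop :=
  0 < ∏ i, dist p (fun ω => (U ω, S ω, V ω, Y ω)) (u i, s i, v i, y i) ∧
  ∏ i, (dist p V (v i) * kap p S V U (s i) (v i) (u i) * dist p Y (y i)) ≤ Real.exp (n * (-a)) *
    ∏ i, dist p (fun ω => (U ω, S ω, V ω, Y ω)) (u i, s i, v i, y i) ∧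
  ∏ i, (kap p S V U (s i) (v i) (u i) * dist p (fun ω => (V ω, Y ω)) (v i, y i)) ≤
    Real.exp (n * (-b)) * ∏ i, dist p (fun ω => (U ω, S ω, V ω, Y ω)) (u i, s i, v i, y i)

/-- Wrong blocks that share the codeword `v` with the transmitted block pass the test rarely, by
the second ratio condition. -/
lemma Dn_B (n : ℕ) (a b : ℝ) (v : Fin n → B) (y : Fin n → D) :
    (∑ s, Ex (fun u : Fin n → C => ∏ i, kap p S V U (s i) (v i) (u i)) fun u =>
      ind (Dn p S V U Y n a b s v u y)) ≤ Real.exp (n * (-b)) := by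
  have hm : ∀ v y, ∑ s, ∑ u, dist p (fun ω => (U ω, S ω, V ω, Y ω)) (u, s, v, y) =
      dist p (fun ω => (V ω, Y ω)) (v, y) := by
    intro v y
    rw [← dist_marg p S]
    refine Finset.sum_congr rfl fun s _ => ?_
    rw [← dist_marg p U]
  have hP : ∀ u s v y, 0 ≤ dist p (fun ω => (U ω, S ω, V ω, Y ω)) (u, s, v, y) :=
    fun u s v y => dist_nonneg hp.1 _ _
  by_cases h0 : ∏ i, dist p (fun ω => (V ω, Y ω)) (v i, y i) = 0
  · have : ∀ s u, ¬ Dn p S V U Y n a b s v u y := by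
      rintro s u ⟨h1, -⟩
      obtain ⟨i, -, hi⟩ := Finset.prod_eq_zero_iff.1 h0
      rw [← hm, Finset.sum_eq_zero_iff_of_nonneg
        fun s _ => Finset.sum_nonneg fun u _ => hP _ _ _ _] at hi
      have h2 := (Finset.sum_eq_zero_iff_of_nonneg fun u _ => hP _ _ _ _).1
        (hi (s i) (Finset.mem_univ _)) (u i) (Finset.mem_univ _)
      exact h1.ne' (Finset.prod_eq_zero (Finset.mem_univ i) h2)
    simp only [Ex, ind_false (this _ _), mul_zero, Finset.sum_const_zero]
    positivity
  have hpos : 0 < ∏ i, dist p (fun ω => (V ω, Y ω)) (v i, y i) :=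
    lt_of_le_of_ne (Finset.prod_nonneg fun i _ => dist_nonneg hp.1 _ _) (Ne.symm h0)
  refine le_of_mul_le_mul_right ?_ hpos
  have e : ∏ i, dist p (fun ω => (V ω, Y ω)) (v i, y i) = ∑ s : Fin n → A, ∑ u : Fin n → C,
      ∏ i, dist p (fun ω => (U ω, S ω, V ω, Y ω)) (u i, s i, v i, y i) := by
    simp only [← hm, ← sum_prod_pi]
  conv_rhs => rw [e]
  simp only [Ex, Finset.sum_mul, Finset.mul_sum]
  refine Finset.sum_le_sum fun s _ => Finset.sum_le_sum fun u _ => ?_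
  by_cases hD : Dn p S V U Y n a b s v u y
  · rw [ind_true hD, mul_one, ← Finset.prod_mul_distrib]
    exact hD.2.2
  · rw [ind_false hD, mul_zero, zero_mul]
    exact mul_nonneg (Real.exp_pos _).le (Finset.prod_nonneg fun i _ => hP _ _ _ _)

/-- Wrong blocks with an independent codeword `v` pass the test rarely, by the first ratio
condition. -/
lemma Dn_A (n : ℕ) (a b : ℝ) (y : Fin n → D) :
    (∑ s, Ex (fun v : Fin n → B => ∏ i, dist p V (v i)) fun v =>
      Ex (fun u : Fin n → C => ∏ i, kap p S V U (s i) (v i) (u i)) fun u =>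
      ind (Dn p S V U Y n a b s v u y)) ≤ Real.exp (n * (-a)) := by
  have hm : ∀ y, ∑ s, ∑ v, ∑ u, dist p (fun ω => (U ω, S ω, V ω, Y ω)) (u, s, v, y) =
      dist p Y y := by
    intro y
    rw [Finset.sum_comm, ← dist_marg p V]
    refine Finset.sum_congr rfl fun v _ => ?_
    rw [← dist_marg p S]
    refine Finset.sum_congr rfl fun s _ => ?_
    rw [← dist_marg p U]
  have hP : ∀ u s v y, 0 ≤ dist p (fun ω => (U ω, S ω, V ω, Y ω)) (u, s, v, y) :=
    fun u s v y => dist_nonneg hp.1 _ _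
  by_cases h0 : ∏ i, dist p Y (y i) = 0
  · have : ∀ s v u, ¬ Dn p S V U Y n a b s v u y := by
      rintro s v u ⟨h1, -⟩
      obtain ⟨i, -, hi⟩ := Finset.prod_eq_zero_iff.1 h0
      rw [← hm, Finset.sum_eq_zero_iff_of_nonneg fun s _ => Finset.sum_nonneg fun v _ =>
        Finset.sum_nonneg fun u _ => hP _ _ _ _] at hi
      have h3 := (Finset.sum_eq_zero_iff_of_nonneg fun v _ => Finset.sum_nonneg fun u _ =>
        hP _ _ _ _).1 (hi (s i) (Finset.mem_univ _)) (v i) (Finset.mem_univ _)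
      have h2 := (Finset.sum_eq_zero_iff_of_nonneg fun u _ => hP _ _ _ _).1
        h3 (u i) (Finset.mem_univ _)
      exact h1.ne' (Finset.prod_eq_zero (Finset.mem_univ i) h2)
    simp only [Ex, ind_false (this _ _ _), mul_zero, Finset.sum_const_zero]
    positivity
  have hpos : 0 < ∏ i, dist p Y (y i) :=
    lt_of_le_of_ne (Finset.prod_nonneg fun i _ => dist_nonneg hp.1 _ _) (Ne.symm h0)
  refine le_of_mul_le_mul_right ?_ hpos
  have e : ∏ i, dist p Y (y i) = ∑ s : Fin n → A, ∑ v : Fin n → B, ∑ u : Fin n → C,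
      ∏ i, dist p (fun ω => (U ω, S ω, V ω, Y ω)) (u i, s i, v i, y i) := by
    simp only [← hm, ← sum_prod_pi]
  conv_rhs => rw [e]
  simp only [Ex, Finset.sum_mul, Finset.mul_sum]
  refine Finset.sum_le_sum fun s _ => Finset.sum_le_sum fun v _ => Finset.sum_le_sum fun u _ => ?_
  by_cases hD : Dn p S V U Y n a b s v u y
  · rw [ind_true hD, mul_one, ← Finset.prod_mul_distrib, ← Finset.prod_mul_distrib]
    exact hD.2.1
  · rw [ind_false hD, mul_zero, mul_zero, zero_mul]
    exact mul_nonneg (Real.exp_pos _).le (Finset.prod_nonneg fun i _ => hP _ _ _ _)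

omit [Fintype Ω] hp in
lemma wpi_nonneg (hp : ∀ ω, 0 ≤ p ω) (n : ℕ) (ω : Fin n → Ω) : 0 ≤ wpi (fun _ => p) ω :=
  Finset.prod_nonneg fun _ _ => hp _

/-- The true codewords pass the decoding test with probability tending to one. -/
lemma Dn_tendsto {a b : ℝ}
    (ha : a < - H p (fun ω => (U ω, S ω, V ω, Y ω)) + H p V + H p (fun ω => (U ω, S ω, V ω))
      - H p (fun ω => (S ω, V ω)) + H p Y)
    (hb : b < - H p (fun ω => (U ω, S ω, V ω, Y ω)) + H p (fun ω => (V ω, Y ω))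
      + H p (fun ω => (U ω, S ω, V ω)) - H p (fun ω => (S ω, V ω))) :
    Tendsto (fun n : ℕ => Ex (wpi fun _ : Fin n => p) fun ω =>
      ind (¬ Dn p S V U Y n a b (fun i => S (ω i)) (fun i => V (ω i)) (fun i => U (ω i))
        (fun i => Y (ω i)))) atTop (nhds 0) := by
  have pP : ∀ ω, p ω ≠ 0 → 0 < dist p (fun ω => (U ω, S ω, V ω, Y ω)) (U ω, S ω, V ω, Y ω) :=
    fun ω h => dist_pos hp.1 (fun ω => (U ω, S ω, V ω, Y ω)) h
  have pV : ∀ ω, p ω ≠ 0 → 0 < dist p V (V ω) := fun ω h => dist_pos hp.1 V h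
  have pY : ∀ ω, p ω ≠ 0 → 0 < dist p Y (Y ω) := fun ω h => dist_pos hp.1 Y h
  have pVY : ∀ ω, p ω ≠ 0 → 0 < dist p (fun ω => (V ω, Y ω)) (V ω, Y ω) :=
    fun ω h => dist_pos hp.1 (fun ω => (V ω, Y ω)) h
  have pk : ∀ ω, p ω ≠ 0 → 0 < kap p S V U (S ω) (V ω) (U ω) := fun ω h => kap_pos hp S V U h
  have eP := Ex_log_dist p (fun ω => (U ω, S ω, V ω, Y ω))
  have eV := Ex_log_dist p V
  have eY := Ex_log_dist p Y
  have eVY := Ex_log_dist p (fun ω => (V ω, Y ω))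
  have ek := Ex_log_kap hp S V U
  have t1 := lln hp (φ := fun ω => dist p V (V ω) * kap p S V U (S ω) (V ω) (U ω) * dist p Y (Y ω))
    (ψ := fun ω => dist p (fun ω => (U ω, S ω, V ω, Y ω)) (U ω, S ω, V ω, Y ω)) (c := -a)
    (fun ω h => mul_pos (mul_pos (pV ω h) (pk ω h)) (pY ω h)) pP (by
      rw [Ex_congr_supp (G := fun ω => Real.log (dist p V (V ω)) +
        (Real.log (kap p S V U (S ω) (V ω) (U ω)) + (Real.log (dist p Y (Y ω)) -
          Real.log (dist p (fun ω => (U ω, S ω, V ω, Y ω)) (U ω, S ω, V ω, Y ω))))),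
        Ex_add, Ex_add, Ex_sub, eP, eV, eY, ek]
      · linarith
      · intro ω h
        rw [Real.log_mul (mul_pos (pV ω h) (pk ω h)).ne' (pY ω h).ne',
          Real.log_mul (pV ω h).ne' (pk ω h).ne']
        ring)
  have t2 := lln hp (φ := fun ω => kap p S V U (S ω) (V ω) (U ω) *
      dist p (fun ω => (V ω, Y ω)) (V ω, Y ω))
    (ψ := fun ω => dist p (fun ω => (U ω, S ω, V ω, Y ω)) (U ω, S ω, V ω, Y ω)) (c := -b)
    (fun ω h => mul_pos (pk ω h) (pVY ω h)) pP (by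
      rw [Ex_congr_supp (G := fun ω =>
        (Real.log (kap p S V U (S ω) (V ω) (U ω)) + (Real.log (dist p (fun ω => (V ω, Y ω))
          (V ω, Y ω)) -
          Real.log (dist p (fun ω => (U ω, S ω, V ω, Y ω)) (U ω, S ω, V ω, Y ω))))),
        Ex_add, Ex_sub, eP, eVY, ek]
      · linarith
      · intro ω h
        rw [Real.log_mul (pk ω h).ne' (pVY ω h).ne']
        ring)
  refine tendsto_of_tendsto_of_tendsto_of_le_of_le tendsto_const_nhds
    (add_zero (0 : ℝ) ▸ t1.add t2) (fun n => Ex_nonneg (wpi_nonneg hp.1 n) fun ω => ind_nonneg _) ?_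
  intro n
  beta_reduce
  rw [← Ex_add]
  refine Finset.sum_le_sum fun ω _ => ?_
  by_cases h0 : wpi (fun _ : Fin n => p) ω = 0
  · rw [h0, zero_mul, zero_mul]
  have hi : ∀ i, p (ω i) ≠ 0 := fun i hi => h0 (Finset.prod_eq_zero (Finset.mem_univ i) hi)
  refine mul_le_mul_of_nonneg_left ?_ (wpi_nonneg hp.1 n ω)
  have hpp : 0 < ∏ i, dist p (fun ω => (U ω, S ω, V ω, Y ω))
    (U (ω i), S (ω i), V (ω i), Y (ω i)) := Finset.prod_pos fun i _ => pP _ (hi i)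
  beta_reduce
  refine le_trans (ind_mono fun hD hc => ?_) (ind_not_and _ _)
  exact hD ⟨hpp, hc.1, hc.2⟩

end Kap
end CSBC

/-! ### The covering test -/

namespace CSBC

section Cover
variable {Ω A B : Type*} [Fintype Ω] [Fintype A] [Fintype B] {p : Ω → ℝ}

/-- If `φ` is a conditional law of `Z` given `S`, the likelihood ratio of `φ` against `ψ` is at most
`exp (n c)` with probability tending to one. -/
lemma cover_lln (hp : IsPMF p) (S : Ω → A) (Z : Ω → B) {φ : A → B → ℝ}
    (hφ : ∀ s z, dist p (fun ω => (S ω, Z ω)) (s, z) = dist p S s * φ s z) {ψ : Ω → ℝ}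
    (hψ : ∀ ω, p ω ≠ 0 → 0 < ψ ω) {c : ℝ}
    (hc : - H p (fun ω => (S ω, Z ω)) + H p S - Ex p (fun ω => Real.log (ψ ω)) < c) :
    Tendsto (fun n : ℕ => Ex (wpi fun _ : Fin n => p) fun ω =>
      ind (¬ ∏ i, φ (S (ω i)) (Z (ω i)) ≤ Real.exp (n * c) * ∏ i, ψ (ω i))) atTop (nhds 0) := by
  have pos : ∀ ω, p ω ≠ 0 → 0 < φ (S ω) (Z ω) := by
    intro ω h
    have h1 := dist_pos hp.1 (fun ω => (S ω, Z ω)) h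
    beta_reduce at h1
    rw [hφ] at h1
    exact pos_of_mul_pos_right h1 (dist_nonneg hp.1 _ _)
  refine lln hp (φ := fun ω => φ (S ω) (Z ω)) pos hψ ?_
  have e1 := Ex_log_dist p (fun ω => (S ω, Z ω))
  have e2 := Ex_log_dist p S
  have e3 : Ex p (fun ω => Real.log (φ (S ω) (Z ω))) =
      Ex p (fun ω => Real.log (dist p (fun ω => (S ω, Z ω)) (S ω, Z ω)) -
        Real.log (dist p S (S ω))) := by
    refine Ex_congr_supp fun ω h => ?_
    rw [hφ, Real.log_mul (dist_pos hp.1 S h).ne' (pos ω h).ne']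
    ring
  rw [Ex_sub] at e3 ⊢
  linarith

end Cover

section NLetter
variable {Ω σ1 σ2 U0 U1 U2 X Y1 Y2 : Type*} [Fintype Ω] [Fintype σ1] [Fintype σ2] [Fintype U0]
  [Fintype U1] [Fintype U2] [Fintype X] [Fintype Y1] [Fintype Y2] {p : Ω → ℝ} (hp : IsPMF p)
  {q : σ1 × σ2 → ℝ} (hq : IsPMF q) {r : σ1 × σ2 → U0 × U1 × U2 × X → ℝ} (hr : ∀ s, IsPMF (r s))
  {W : X → Y1 × Y2 → ℝ} (hW : ∀ x, IsPMF (W x))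
  (S : Ω → σ1 × σ2) (V0 : Ω → U0) (V1 : Ω → U1) (V2 : Ω → U2) (Y : Ω → Y1 × Y2)

/-- The covering test at block length `n`: the conditional likelihoods of the auxiliary sequences
given the source block exceed those of independently drawn codewords by at most the factors
`exp (n c0)`, ..., `exp (n c012)`. -/
def Tn (p : Ω → ℝ) (r : σ1 × σ2 → U0 × U1 × U2 × X → ℝ) (S : Ω → σ1 × σ2) (V0 : Ω → U0)
    (V1 : Ω → U1) (V2 : Ω → U2) (n : ℕ) (c0 c01 c02 c012 : ℝ) (s : Fin n → σ1 × σ2)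
    (u0 : Fin n → U0) (u1 : Fin n → U1) (u2 : Fin n → U2) : Prop :=
  (∏ i, ∑ u1, ∑ u2, ∑ x, r (s i) (u0 i, u1, u2, x) ≤ Real.exp (n * c0) * ∏ i, dist p V0 (u0 i)) ∧
  (∏ i, ∑ u2, ∑ x, r (s i) (u0 i, u1 i, u2, x) ≤ Real.exp (n * c01) *
    ∏ i, (dist p V0 (u0 i) * kap p (fun ω => (S ω).1) V0 V1 (s i).1 (u0 i) (u1 i))) ∧
  (∏ i, ∑ u1, ∑ x, r (s i) (u0 i, u1, u2 i, x) ≤ Real.exp (n * c02) *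
    ∏ i, (dist p V0 (u0 i) * kap p (fun ω => (S ω).2) V0 V2 (s i).2 (u0 i) (u2 i))) ∧
  (∏ i, ∑ x, r (s i) (u0 i, u1 i, u2 i, x) ≤ Real.exp (n * c012) *
    ∏ i, (dist p V0 (u0 i) * kap p (fun ω => (S ω).1) V0 V1 (s i).1 (u0 i) (u1 i) *
      kap p (fun ω => (S ω).2) V0 V2 (s i).2 (u0 i) (u2 i)))

include hp in
/-- The target law passes the covering test with probability tending to one. -/
lemma Tn_tendsto
    (hS : ∀ s, dist p S s = q s)
    (hmarg : ∀ s u0 u1 u2, dist p (fun ω => (S ω, V0 ω, V1 ω, V2 ω)) (s, u0, u1, u2) =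
      q s * ∑ x, r s (u0, u1, u2, x)) {c0 c01 c02 c012 : ℝ}
    (h0 : - H p (fun ω => (S ω, V0 ω)) + H p S + H p V0 < c0)
    (h01 : - H p (fun ω => (S ω, V0 ω, V1 ω)) + H p S + H p V0
      + H p (fun ω => (V1 ω, (S ω).1, V0 ω)) - H p (fun ω => ((S ω).1, V0 ω)) < c01)
    (h02 : - H p (fun ω => (S ω, V0 ω, V2 ω)) + H p S + H p V0
      + H p (fun ω => (V2 ω, (S ω).2, V0 ω)) - H p (fun ω => ((S ω).2, V0 ω)) < c02)
    (h012 : - H p (fun ω => (S ω, V0 ω, V1 ω, V2 ω)) + H p S + H p V0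
      + H p (fun ω => (V1 ω, (S ω).1, V0 ω)) - H p (fun ω => ((S ω).1, V0 ω))
      + H p (fun ω => (V2 ω, (S ω).2, V0 ω)) - H p (fun ω => ((S ω).2, V0 ω)) < c012) :
    Tendsto (fun n : ℕ => Ex (wpi fun _ : Fin n => p) fun ω =>
      ind (¬ Tn p r S V0 V1 V2 n c0 c01 c02 c012 (fun i => S (ω i)) (fun i => V0 (ω i))
        (fun i => V1 (ω i)) (fun i => V2 (ω i)))) atTop (nhds 0) := by
  have m01 : ∀ s u0 u1, dist p (fun ω => (S ω, V0 ω, V1 ω)) (s, u0, u1) =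
      q s * ∑ u2, ∑ x, r s (u0, u1, u2, x) := by
    intro s u0 u1
    rw [Finset.mul_sum]
    simp only [← hmarg, dist_eq_Ex, ← Ex_sum, Prod.mk.injEq, ind_and, ← Finset.mul_sum, sum_ind_eq,
      mul_one]
  have m02 : ∀ s u0 u2, dist p (fun ω => (S ω, V0 ω, V2 ω)) (s, u0, u2) =
      q s * ∑ u1, ∑ x, r s (u0, u1, u2, x) := by
    intro s u0 u1
    rw [Finset.mul_sum]
    simp only [← hmarg, dist_eq_Ex, ← Ex_sum, Prod.mk.injEq, ind_and, ← Finset.mul_sum,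
      ← Finset.sum_mul, sum_ind_eq, one_mul]
  have m0 : ∀ s u0, dist p (fun ω => (S ω, V0 ω)) (s, u0) =
      q s * ∑ u1, ∑ u2, ∑ x, r s (u0, u1, u2, x) := by
    intro s u0
    rw [Finset.mul_sum]
    simp only [← m01, dist_eq_Ex, ← Ex_sum, Prod.mk.injEq, ind_and, ← Finset.mul_sum, sum_ind_eq,
      mul_one]
  have pV : ∀ ω, p ω ≠ 0 → 0 < dist p V0 (V0 ω) := fun ω h => dist_pos hp.1 V0 h
  have pk1 : ∀ ω, p ω ≠ 0 → 0 < kap p (fun ω => (S ω).1) V0 V1 (S ω).1 (V0 ω) (V1 ω) :=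
    fun ω h => kap_pos hp (fun ω => (S ω).1) V0 V1 h
  have pk2 : ∀ ω, p ω ≠ 0 → 0 < kap p (fun ω => (S ω).2) V0 V2 (S ω).2 (V0 ω) (V2 ω) :=
    fun ω h => kap_pos hp (fun ω => (S ω).2) V0 V2 h
  have eV := Ex_log_dist p V0
  have ek1 := Ex_log_kap hp (fun ω => (S ω).1) V0 V1
  have ek2 := Ex_log_kap hp (fun ω => (S ω).2) V0 V2
  have t0 := cover_lln hp S V0 (φ := fun s u0 => ∑ u1, ∑ u2, ∑ x, r s (u0, u1, u2, x))
    (fun s z => by rw [m0, hS]) pV (c := c0) (by rw [eV]; linarith)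
  have t01 := cover_lln hp S (fun ω => (V0 ω, V1 ω))
    (φ := fun s u => ∑ u2, ∑ x, r s (u.1, u.2, u2, x))
    (ψ := fun ω => dist p V0 (V0 ω) * kap p (fun ω => (S ω).1) V0 V1 (S ω).1 (V0 ω) (V1 ω))
    (fun s z => by rw [m01 s z.1 z.2, hS]) (fun ω h => mul_pos (pV ω h) (pk1 ω h)) (c := c01) (by
      rw [Ex_congr_supp (fun ω h => Real.log_mul (pV ω h).ne' (pk1 ω h).ne'), Ex_add, eV, ek1]
      linarith)
  have t02 := cover_lln hp S (fun ω => (V0 ω, V2 ω))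
    (φ := fun s u => ∑ u1, ∑ x, r s (u.1, u1, u.2, x))
    (ψ := fun ω => dist p V0 (V0 ω) * kap p (fun ω => (S ω).2) V0 V2 (S ω).2 (V0 ω) (V2 ω))
    (fun s z => by rw [m02 s z.1 z.2, hS]) (fun ω h => mul_pos (pV ω h) (pk2 ω h)) (c := c02) (by
      rw [Ex_congr_supp (fun ω h => Real.log_mul (pV ω h).ne' (pk2 ω h).ne'), Ex_add, eV, ek2]
      linarith)
  have t012 := cover_lln hp S (fun ω => (V0 ω, V1 ω, V2 ω))
    (φ := fun s u => ∑ x, r s (u.1, u.2.1, u.2.2, x))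
    (ψ := fun ω => dist p V0 (V0 ω) * kap p (fun ω => (S ω).1) V0 V1 (S ω).1 (V0 ω) (V1 ω) *
      kap p (fun ω => (S ω).2) V0 V2 (S ω).2 (V0 ω) (V2 ω))
    (fun s z => by rw [hmarg s z.1 z.2.1 z.2.2, hS])
    (fun ω h => mul_pos (mul_pos (pV ω h) (pk1 ω h)) (pk2 ω h)) (c := c012) (by
      rw [Ex_congr_supp (fun ω h => Real.log_mul (mul_pos (pV ω h) (pk1 ω h)).ne' (pk2 ω h).ne'),
        Ex_add, Ex_congr_supp (fun ω h => Real.log_mul (pV ω h).ne' (pk1 ω h).ne'), Ex_add,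
        eV, ek1, ek2]
      linarith)
  have tt := t0.add (t01.add (t02.add t012))
  simp only [add_zero] at tt
  refine tendsto_of_tendsto_of_tendsto_of_le_of_le tendsto_const_nhds tt
    (fun n => Ex_nonneg (wpi_nonneg hp.1 n) fun ω => ind_nonneg _) ?_
  intro n
  beta_reduce
  rw [← Ex_add, ← Ex_add, ← Ex_add]
  refine Ex_mono (wpi_nonneg hp.1 n) fun ω => ?_
  refine (ind_not_and _ _).trans (add_le_add_right ?_ _)
  refine (ind_not_and _ _).trans (add_le_add_right ?_ _)
  exact ind_not_and _ _

end NLetter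
end CSBC

/-! ### Block codes of given rates -/

namespace CSBC

section NLetter
variable {Ω σ1 σ2 U0 U1 U2 X Y1 Y2 : Type*} [Fintype Ω] [Fintype σ1] [Fintype σ2] [Fintype U0]
  [Fintype U1] [Fintype U2] [Fintype X] [Fintype Y1] [Fintype Y2] {p : Ω → ℝ} (hp : IsPMF p)
  {q : σ1 × σ2 → ℝ} (hq : IsPMF q) {r : σ1 × σ2 → U0 × U1 × U2 × X → ℝ} (hr : ∀ s, IsPMF (r s))
  {W : X → Y1 × Y2 → ℝ} (hW : ∀ x, IsPMF (W x))
  (S : Ω → σ1 × σ2) (V0 : Ω → U0) (V1 : Ω → U1) (V2 : Ω → U2) (Y : Ω → Y1 × Y2)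

lemma sz_ratio (n : ℕ) {R : ℝ} (hR : 0 ≤ R) (ρ : ℝ) :
    (sz n R : ℝ) / sz n ρ ≤ 2 * Real.exp (n * (R - ρ)) := by
  rw [mul_sub, Real.exp_sub, ← mul_div_assoc]
  exact div_le_div₀ (by positivity) (sz_le n hR) (Real.exp_pos _) (le_sz n ρ)

lemma sz_mul3 (n : ℕ) {R R' R'' : ℝ} (hR : 0 ≤ R) (hR' : 0 ≤ R') (hR'' : 0 ≤ R'') :
    (sz n R : ℝ) * sz n R' * sz n R'' ≤ 8 * Real.exp (n * (R + R' + R'')) := by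
  have : 8 * Real.exp (n * (R + R' + R'')) =
      (2 * Real.exp (n * R)) * (2 * Real.exp (n * R')) * (2 * Real.exp (n * R'')) := by
    rw [mul_add, mul_add, Real.exp_add, Real.exp_add]; ring
  rw [this]
  gcongr <;> exact sz_le n ‹_›

include hp hq hr hW in
/-- The one-shot bound applied to `n`-letter product distributions, with index sets of the given
rates. The hypothesis `hconv` says that `p` is the joint law built from `q`, `r` and `W`. -/
lemma n_letter [Nonempty σ1] [Nonempty σ2] [Nonempty X] (n : ℕ)
    (hconv : ∀ F : (Fin n → σ1 × σ2) → (Fin n → U0) → (Fin n → U1) → (Fin n → U2) →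
        (Fin n → Y1 × Y2) → ℝ,
      ∑ s : Fin n → σ1 × σ2, (∏ i, q (s i)) * ∑ u0 : Fin n → U0, ∑ u1 : Fin n → U1,
        ∑ u2 : Fin n → U2, ∑ x : Fin n → X, (∏ i, r (s i) (u0 i, u1 i, u2 i, x i)) *
          ∑ y : Fin n → Y1 × Y2, (∏ i, W (x i) (y i)) * F s u0 u1 u2 y =
      Ex (wpi fun _ : Fin n => p) fun ω => F (fun i => S (ω i)) (fun i => V0 (ω i))
        (fun i => V1 (ω i)) (fun i => V2 (ω i)) (fun i => Y (ω i)))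
    {R0 R1 R2 ρ1 ρ2 : ℝ} (r0 : 0 ≤ R0) (r1 : 0 ≤ R1) (r2 : 0 ≤ R2) (l1 : 0 ≤ ρ1) (l2 : 0 ≤ ρ2)
    (c0 c01 c02 c012 a1 b1 a2 b2 : ℝ) :
    ∃ (enc : (Fin n → σ1 × σ2) → Fin n → X) (dec1 : (Fin n → Y1) → Fin n → σ1)
      (dec2 : (Fin n → Y2) → Fin n → σ2), errProb q W n enc dec1 dec2 ≤
      4 * (2 * (Ex (wpi fun _ : Fin n => p) fun ω =>
          ind (¬ Tn p r S V0 V1 V2 n c0 c01 c02 c012 (fun i => S (ω i)) (fun i => V0 (ω i))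
            (fun i => V1 (ω i)) (fun i => V2 (ω i))))
        + Real.exp (n * (c0 - R0)) + Real.exp (n * (c01 - (R0 + R1)))
        + Real.exp (n * (c02 - (R0 + R2))) + Real.exp (n * (c012 - (R0 + R1 + R2)))) +
      2 * (((Ex (wpi fun _ : Fin n => p) fun ω =>
          ind (¬ Dn p (fun ω => (S ω).1) V0 V1 (fun ω => (Y ω).1) n a1 b1 (fun i => (S (ω i)).1)
            (fun i => V0 (ω i)) (fun i => V1 (ω i)) (fun i => (Y (ω i)).1))) +
        (Ex (wpi fun _ : Fin n => p) fun ω =>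
          ind (¬ Dn p (fun ω => (S ω).2) V0 V2 (fun ω => (Y ω).2) n a2 b2 (fun i => (S (ω i)).2)
            (fun i => V0 (ω i)) (fun i => V2 (ω i)) (fun i => (Y (ω i)).2)))) +
        ((8 * Real.exp (n * (ρ2 + R0 + R1 - a1)) + 2 * Real.exp (n * (R1 - ρ1 - b1))) +
        (8 * Real.exp (n * (ρ1 + R0 + R2 - a2)) + 2 * Real.exp (n * (R2 - ρ2 - b2))))) := by
  have : ∀ R : ℝ, Nonempty (Fin (sz n R)) := fun R => ⟨⟨0, sz_pos n R⟩⟩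
  obtain ⟨enc, dec1, dec2, h⟩ := one_shot (M0 := Fin (sz n R0)) (M1 := Fin (sz n R1))
    (M2 := Fin (sz n R2)) (L1 := Fin (sz n ρ1)) (L2 := Fin (sz n ρ2))
    (π1 := fun (s : Fin n → σ1 × σ2) i => (s i).1) (π2 := fun s i => (s i).2)
    (q := fun s => ∏ i, q (s i)) (IsPMF.wpi fun _ => hq)
    (Q0 := fun u0 : Fin n → U0 => ∏ i, dist p V0 (u0 i)) (IsPMF.wpi fun _ => isPMF_dist hp V0)
    (Q1 := fun (s : Fin n → σ1) (u0 : Fin n → U0) (u1 : Fin n → U1) =>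
      ∏ i, kap p (fun ω => (S ω).1) V0 V1 (s i) (u0 i) (u1 i))
    (fun s u => IsPMF.wpi fun i => kap_pmf hp _ V0 V1 (s i) (u i))
    (Q2 := fun (s : Fin n → σ2) (u0 : Fin n → U0) (u2 : Fin n → U2) =>
      ∏ i, kap p (fun ω => (S ω).2) V0 V2 (s i) (u0 i) (u2 i))
    (fun s u => IsPMF.wpi fun i => kap_pmf hp _ V0 V2 (s i) (u i))
    (Tn p r S V0 V1 V2 n c0 c01 c02 c012)
    (fun s u0 u1 u2 (x : Fin n → X) => ∏ i, r (s i) (u0 i, u1 i, u2 i, x i))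
    (fun s u0 u1 u2 x => Finset.prod_nonneg fun i _ => (hr _).1 _)
    (fun s => by
      have : ∀ s, ∑ u0, ∑ u1, ∑ u2, ∑ x, r s (u0, u1, u2, x) = 1 := by
        intro s
        have := (hr s).2
        simpa only [Fintype.sum_prod_type] using this
      calc _ = ∏ i, ∑ u0, ∑ u1, ∑ u2, ∑ x, r (s i) (u0, u1, u2, x) := by
            simp only [← sum_prod_pi]
        _ = 1 := by simp only [this, Finset.prod_const_one])
    (W := fun (x : Fin n → X) (y : Fin n → Y1 × Y2) => ∏ i, W (x i) (y i))
    (fun x => IsPMF.wpi fun i => hW (x i)) (fun y i => (y i).1) (fun y i => (y i).2)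
    (Dn p (fun ω => (S ω).1) V0 V1 (fun ω => (Y ω).1) n a1 b1)
    (Dn p (fun ω => (S ω).2) V0 V2 (fun ω => (Y ω).2) n a2 b2)
    (Real.exp_pos (n * c0)).le (Real.exp_pos (n * c01)).le (Real.exp_pos (n * c02)).le
    (Real.exp_pos (n * c012)).le
    (fun s u0 u1 u2 hT => by
      refine le_trans (le_of_eq ?_) hT.1
      simp only [← sum_prod_pi])
    (fun s u0 u1 u2 hT => by
      have := hT.2.1
      rw [Finset.prod_mul_distrib] at this
      refine le_trans (le_of_eq ?_) this
      simp only [← sum_prod_pi])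
    (fun s u0 u1 u2 hT => by
      have := hT.2.2.1
      rw [Finset.prod_mul_distrib] at this
      refine le_trans (le_of_eq ?_) this
      simp only [← sum_prod_pi])
    (fun s u0 u1 u2 hT => by
      have := hT.2.2.2
      rw [Finset.prod_mul_distrib, Finset.prod_mul_distrib] at this
      refine le_trans (le_of_eq ?_) this
      simp only [← sum_prod_pi])
    (Real.exp_pos (n * (-a1))).le (Real.exp_pos (n * (-b1))).le (Real.exp_pos (n * (-a2))).le
    (Real.exp_pos (n * (-b2))).le
    (fun y => Dn_A hp _ V0 V1 _ n a1 b1 y) (fun u0 y => Dn_B hp _ V0 V1 _ n a1 b1 u0 y)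
    (fun y => Dn_A hp _ V0 V2 _ n a2 b2 y) (fun u0 y => Dn_B hp _ V0 V2 _ n a2 b2 u0 y)
  refine ⟨enc, dec1, dec2, ?_⟩
  have e1 : errProb q W n enc dec1 dec2 = ∑ s : Fin n → σ1 × σ2, (∏ i, q (s i)) *
      ∑ y : Fin n → Y1 × Y2, (∏ i, W (enc s i) (y i)) *
        ind (¬ (dec1 (fun i => (y i).1) = (fun i => (s i).1) ∧
          dec2 (fun i => (y i).2) = (fun i => (s i).2))) := by
    unfold errProb
    refine Finset.sum_congr rfl fun s _ => ?_
    rw [Finset.mul_sum]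
    refine Finset.sum_congr rfl fun y _ => ?_
    rw [mul_assoc]
    congr 2
    split_ifs with hc
    · rw [ind_false (not_not.2 hc)]
    · rw [ind_true hc]
  rw [e1]
  refine h.trans ?_
  simp only [Fintype.card_fin]
  have hT : (∑ s : Fin n → σ1 × σ2, (∏ i, q (s i)) * ∑ u0 : Fin n → U0, ∑ u1 : Fin n → U1,
        ∑ u2 : Fin n → U2, ∑ x : Fin n → X, (∏ i, r (s i) (u0 i, u1 i, u2 i, x i)) *
          ind (¬ Tn p r S V0 V1 V2 n c0 c01 c02 c012 s u0 u1 u2)) =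
      Ex (wpi fun _ : Fin n => p) fun ω =>
          ind (¬ Tn p r S V0 V1 V2 n c0 c01 c02 c012 (fun i => S (ω i)) (fun i => V0 (ω i))
            (fun i => V1 (ω i)) (fun i => V2 (ω i))) := by
    rw [← hconv fun s u0 u1 u2 _ => ind (¬ Tn p r S V0 V1 V2 n c0 c01 c02 c012 s u0 u1 u2)]
    have hy : ∀ x : Fin n → X, ∑ y : Fin n → Y1 × Y2, ∏ i, W (x i) (y i) = 1 := fun x =>
      (IsPMF.wpi fun i => hW (x i)).2
    simp only [← Finset.sum_mul, hy, one_mul]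
  have hD := hconv fun s u0 u1 u2 y =>
    ind (¬ Dn p (fun ω => (S ω).1) V0 V1 (fun ω => (Y ω).1) n a1 b1 (fun i => (s i).1) u0 u1
      (fun i => (y i).1)) +
    ind (¬ Dn p (fun ω => (S ω).2) V0 V2 (fun ω => (Y ω).2) n a2 b2 (fun i => (s i).2) u0 u2
      (fun i => (y i).2))
  rw [Ex_add] at hD
  rw [hT, hD]
  have p0 := Real.exp_pos (n * R0)
  have p1 := Real.exp_pos (n * R1)
  have p2 := Real.exp_pos (n * R2)
  have g0 := le_sz n R0
  have g1 := le_sz n R1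
  have g2 := le_sz n R2
  have k0 : Real.exp (n * c0) / (sz n R0 : ℝ) ≤ Real.exp (n * (c0 - R0)) := by
    rw [mul_sub, Real.exp_sub]
    gcongr
  have k01 : Real.exp (n * c01) / ((sz n R0 : ℝ) * sz n R1) ≤ Real.exp (n * (c01 - (R0 + R1))) := by
    rw [mul_sub, Real.exp_sub, mul_add, Real.exp_add]
    gcongr
  have k02 : Real.exp (n * c02) / ((sz n R0 : ℝ) * sz n R2) ≤ Real.exp (n * (c02 - (R0 + R2))) := by
    rw [mul_sub, Real.exp_sub, mul_add, Real.exp_add]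
    gcongr
  have k012 : Real.exp (n * c012) / ((sz n R0 : ℝ) * sz n R1 * sz n R2) ≤
      Real.exp (n * (c012 - (R0 + R1 + R2))) := by
    rw [mul_sub, Real.exp_sub, mul_add, mul_add, Real.exp_add, Real.exp_add]
    gcongr
  have ex : ∀ x y : ℝ, Real.exp (n * (x - y)) = Real.exp (n * x) * Real.exp (n * (-y)) := by
    intro x y
    rw [← Real.exp_add]; congr 1; ring
  have j1 : ((sz n ρ2 : ℝ) * sz n R0 * sz n R1) * Real.exp (n * (-a1)) ≤
      8 * Real.exp (n * (ρ2 + R0 + R1 - a1)) := by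
    rw [ex (ρ2 + R0 + R1), ← mul_assoc]
    exact mul_le_mul_of_nonneg_right (sz_mul3 n l2 r0 r1) (Real.exp_pos _).le
  have j2 : ((sz n ρ1 : ℝ) * sz n R0 * sz n R2) * Real.exp (n * (-a2)) ≤
      8 * Real.exp (n * (ρ1 + R0 + R2 - a2)) := by
    rw [ex (ρ1 + R0 + R2), ← mul_assoc]
    exact mul_le_mul_of_nonneg_right (sz_mul3 n l1 r0 r2) (Real.exp_pos _).le
  have i1 : ((sz n R1 : ℝ) / sz n ρ1) * Real.exp (n * (-b1)) ≤
      2 * Real.exp (n * (R1 - ρ1 - b1)) := by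
    rw [ex (R1 - ρ1), ← mul_assoc]
    exact mul_le_mul_of_nonneg_right (sz_ratio n r1 ρ1) (Real.exp_pos _).le
  have i2 : ((sz n R2 : ℝ) / sz n ρ2) * Real.exp (n * (-b2)) ≤
      2 * Real.exp (n * (R2 - ρ2 - b2)) := by
    rw [ex (R2 - ρ2), ← mul_assoc]
    exact mul_le_mul_of_nonneg_right (sz_ratio n r2 ρ2) (Real.exp_pos _).le
  linarith

include hp hq hr hW in
/-- Reliable transmission for any choice of codebook rates `R0, R1, R2` and binning rates
`ρ1, ρ2` that satisfies the covering and packing constraints. -/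
theorem reliable_of_rates
    (hconv : ∀ (n : ℕ) (F : (Fin n → σ1 × σ2) → (Fin n → U0) → (Fin n → U1) → (Fin n → U2) →
        (Fin n → Y1 × Y2) → ℝ),
      ∑ s : Fin n → σ1 × σ2, (∏ i, q (s i)) * ∑ u0 : Fin n → U0, ∑ u1 : Fin n → U1,
        ∑ u2 : Fin n → U2, ∑ x : Fin n → X, (∏ i, r (s i) (u0 i, u1 i, u2 i, x i)) *
          ∑ y : Fin n → Y1 × Y2, (∏ i, W (x i) (y i)) * F s u0 u1 u2 y =
      Ex (wpi fun _ : Fin n => p) fun ω => F (fun i => S (ω i)) (fun i => V0 (ω i))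
        (fun i => V1 (ω i)) (fun i => V2 (ω i)) (fun i => Y (ω i)))
    (hS : ∀ s, dist p S s = q s)
    (hmarg : ∀ s u0 u1 u2, dist p (fun ω => (S ω, V0 ω, V1 ω, V2 ω)) (s, u0, u1, u2) =
      q s * ∑ x, r s (u0, u1, u2, x))
    {R0 R1 R2 ρ1 ρ2 : ℝ} (r0 : 0 ≤ R0) (r1 : 0 ≤ R1) (r2 : 0 ≤ R2) (l1 : 0 ≤ ρ1) (l2 : 0 ≤ ρ2)
    (h0 : - H p (fun ω => (S ω, V0 ω)) + H p S + H p V0 < R0)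
    (h01 : - H p (fun ω => (S ω, V0 ω, V1 ω)) + H p S + H p V0
      + H p (fun ω => (V1 ω, (S ω).1, V0 ω)) - H p (fun ω => ((S ω).1, V0 ω)) < R0 + R1)
    (h02 : - H p (fun ω => (S ω, V0 ω, V2 ω)) + H p S + H p V0
      + H p (fun ω => (V2 ω, (S ω).2, V0 ω)) - H p (fun ω => ((S ω).2, V0 ω)) < R0 + R2)
    (h012 : - H p (fun ω => (S ω, V0 ω, V1 ω, V2 ω)) + H p S + H p V0
      + H p (fun ω => (V1 ω, (S ω).1, V0 ω)) - H p (fun ω => ((S ω).1, V0 ω))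
      + H p (fun ω => (V2 ω, (S ω).2, V0 ω)) - H p (fun ω => ((S ω).2, V0 ω)) < R0 + R1 + R2)
    (ha1 : ρ2 + R0 + R1 < - H p (fun ω => (V1 ω, (S ω).1, V0 ω, (Y ω).1)) + H p V0
      + H p (fun ω => (V1 ω, (S ω).1, V0 ω)) - H p (fun ω => ((S ω).1, V0 ω))
      + H p (fun ω => (Y ω).1))
    (hb1 : R1 - ρ1 < - H p (fun ω => (V1 ω, (S ω).1, V0 ω, (Y ω).1))
      + H p (fun ω => (V0 ω, (Y ω).1))
      + H p (fun ω => (V1 ω, (S ω).1, V0 ω)) - H p (fun ω => ((S ω).1, V0 ω)))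
    (ha2 : ρ1 + R0 + R2 < - H p (fun ω => (V2 ω, (S ω).2, V0 ω, (Y ω).2)) + H p V0
      + H p (fun ω => (V2 ω, (S ω).2, V0 ω)) - H p (fun ω => ((S ω).2, V0 ω))
      + H p (fun ω => (Y ω).2))
    (hb2 : R2 - ρ2 < - H p (fun ω => (V2 ω, (S ω).2, V0 ω, (Y ω).2))
      + H p (fun ω => (V0 ω, (Y ω).2))
      + H p (fun ω => (V2 ω, (S ω).2, V0 ω)) - H p (fun ω => ((S ω).2, V0 ω))) :
    Reliable q W := by
  obtain ⟨⟨s1, s2⟩⟩ : Nonempty (σ1 × σ2) := by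
    by_contra hne
    rw [not_nonempty_iff] at hne
    have := hq.2
    simp at this
  have : Nonempty σ1 := ⟨s1⟩
  have : Nonempty σ2 := ⟨s2⟩
  have : Nonempty X := by
    by_contra hne
    rw [not_nonempty_iff] at hne
    have := (hr (s1, s2)).2
    simp at this
  obtain ⟨c0, g0, g0'⟩ := exists_between h0
  obtain ⟨c01, g01, g01'⟩ := exists_between h01
  obtain ⟨c02, g02, g02'⟩ := exists_between h02
  obtain ⟨c012, g012, g012'⟩ := exists_between h012
  obtain ⟨a1, f1, f1'⟩ := exists_between ha1
  obtain ⟨b1, d1, d1'⟩ := exists_between hb1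
  obtain ⟨a2, f2, f2'⟩ := exists_between ha2
  obtain ⟨b2, d2, d2'⟩ := exists_between hb2
  choose enc dec1 dec2 hcode using fun n => n_letter hp hq hr hW S V0 V1 V2 Y n (hconv n)
    r0 r1 r2 l1 l2 c0 c01 c02 c012 a1 b1 a2 b2
  refine ⟨enc, dec1, dec2, ?_⟩
  have tT := Tn_tendsto hp S V0 V1 V2 hS hmarg g0 g01 g02 g012
  have tD1 := Dn_tendsto hp (fun ω => (S ω).1) V0 V1 (fun ω => (Y ω).1) f1' d1'
  have tD2 := Dn_tendsto hp (fun ω => (S ω).2) V0 V2 (fun ω => (Y ω).2) f2' d2'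
  have x0 := tendsto_exp_neg (sub_neg.2 g0')
  have x01 := tendsto_exp_neg (sub_neg.2 g01')
  have x02 := tendsto_exp_neg (sub_neg.2 g02')
  have x012 := tendsto_exp_neg (sub_neg.2 g012')
  have y1 := (tendsto_exp_neg (sub_neg.2 f1)).const_mul 8
  have y2 := (tendsto_exp_neg (sub_neg.2 f2)).const_mul 8
  have z1 := (tendsto_exp_neg (sub_neg.2 d1)).const_mul 2
  have z2 := (tendsto_exp_neg (sub_neg.2 d2)).const_mul 2
  have tt := ((((((tT.const_mul 2).add x0).add x01).add x02).add x012).const_mul 4).add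
    (((tD1.add tD2).add ((y1.add z1).add (y2.add z2))).const_mul 2)
  simp only [add_zero, mul_zero] at tt
  refine tendsto_of_tendsto_of_tendsto_of_le_of_le tendsto_const_nhds tt (fun n => ?_) hcode
  refine Finset.sum_nonneg fun s _ => Finset.sum_nonneg fun y _ => mul_nonneg (mul_nonneg
    (Finset.prod_nonneg fun i _ => hq.1 _) (Finset.prod_nonneg fun i _ => (hW _).1 _)) ?_
  split_ifs <;> norm_num

end NLetter
end CSBC

/-! ### Entropy identities and elimination of the rates -/

namespace CSBC

section Entropy
variable {Ω A B C : Type*} [Fintype Ω] [Fintype A] [Fintype B] [Fintype C] {p : Ω → ℝ}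

/-- Random variables that induce the same partition of the support have the same entropy. -/
lemma H_congr (X : Ω → A) (Y : Ω → B)
    (h : ∀ ω ω', p ω ≠ 0 → p ω' ≠ 0 → (X ω = X ω' ↔ Y ω = Y ω')) : H p X = H p Y := by
  rw [← neg_inj, ← Ex_log_dist, ← Ex_log_dist]
  refine Ex_congr_supp fun ω hω => ?_
  rw [dist_eq_Ex, dist_eq_Ex]
  congr 1
  refine Ex_congr_supp fun ω' hω' => ?_
  rw [propext (h ω' ω hω' hω)]

/-- Entropies of the image of `p` under `ι`; that `p'` is the image is expressed through
expectations. -/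
lemma H_map {Ω' : Type*} [Fintype Ω'] {p' : Ω' → ℝ} (ι : Ω → Ω')
    (h : ∀ F : Ω' → ℝ, Ex p' F = Ex p fun ω => F (ι ω)) (Z : Ω' → A) :
    H p' Z = H p fun ω => Z (ι ω) := by
  have : dist p' Z = dist p fun ω => Z (ι ω) := by
    funext a
    rw [dist_eq_Ex, dist_eq_Ex, h]
  unfold H
  rw [this]

/-- Nonnegativity of conditional mutual information. -/
lemma submod (hp : IsPMF p) (X : Ω → A) (Y : Ω → B) (Z : Ω → C) :
    H p (fun ω => (X ω, Y ω, Z ω)) + H p Z ≤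
      H p (fun ω => (X ω, Z ω)) + H p (fun ω => (Y ω, Z ω)) := by
  have e1 := Ex_log_dist p (fun ω => (X ω, Y ω, Z ω))
  have e2 := Ex_log_dist p Z
  have e3 := Ex_log_dist p (fun ω => (X ω, Z ω))
  have e4 := Ex_log_dist p (fun ω => (Y ω, Z ω))
  let P := dist p (fun ω => (X ω, Y ω, Z ω))
  let PX := dist p (fun ω => (X ω, Z ω))
  let PY := dist p (fun ω => (Y ω, Z ω))
  let PZ := dist p Z
  have hP : ∀ t, 0 ≤ P t := dist_nonneg hp.1 _
  have hPX : ∀ t, 0 ≤ PX t := dist_nonneg hp.1 _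
  have hPY : ∀ t, 0 ≤ PY t := dist_nonneg hp.1 _
  have hPZ : ∀ t, 0 ≤ PZ t := dist_nonneg hp.1 _
  have key : Ex p (fun ω => (Real.log (PX (X ω, Z ω)) + Real.log (PY (Y ω, Z ω))) -
      (Real.log (P (X ω, Y ω, Z ω)) + Real.log (PZ (Z ω)))) ≤
      Ex p fun ω => PX (X ω, Z ω) * PY (Y ω, Z ω) / (P (X ω, Y ω, Z ω) * PZ (Z ω)) - 1 := by
    refine Finset.sum_le_sum fun ω _ => ?_
    by_cases h : p ω = 0
    · rw [h, zero_mul, zero_mul]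
    refine mul_le_mul_of_nonneg_left ?_ (hp.1 ω)
    have q1 : 0 < P (X ω, Y ω, Z ω) := dist_pos hp.1 (fun ω => (X ω, Y ω, Z ω)) h
    have q2 : 0 < PX (X ω, Z ω) := dist_pos hp.1 (fun ω => (X ω, Z ω)) h
    have q3 : 0 < PY (Y ω, Z ω) := dist_pos hp.1 (fun ω => (Y ω, Z ω)) h
    have q4 : 0 < PZ (Z ω) := dist_pos hp.1 Z h
    beta_reduce
    rw [← Real.log_mul q2.ne' q3.ne', ← Real.log_mul q1.ne' q4.ne',
      ← Real.log_div (by positivity) (by positivity)]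
    exact Real.log_le_sub_one_of_pos (by positivity)
  have sum1 : Ex p (fun ω => PX (X ω, Z ω) * PY (Y ω, Z ω) / (P (X ω, Y ω, Z ω) * PZ (Z ω))) ≤
      1 := by
    rw [← Ex_dist p (fun ω => (X ω, Y ω, Z ω)) fun t =>
      PX (t.1, t.2.2) * PY (t.2.1, t.2.2) / (P t * PZ t.2.2)]
    have : Ex (dist p (fun ω => (X ω, Y ω, Z ω)))
        (fun t => PX (t.1, t.2.2) * PY (t.2.1, t.2.2) / (P t * PZ t.2.2)) ≤
        ∑ t : A × B × C, PX (t.1, t.2.2) * PY (t.2.1, t.2.2) / PZ t.2.2 := by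
      refine Finset.sum_le_sum fun t _ => ?_
      change P t * _ ≤ _
      rcases (hP t).eq_or_lt with h | h
      · rw [← h, zero_mul]
        exact div_nonneg (mul_nonneg (hPX _) (hPY _)) (hPZ _)
      · beta_reduce
        rw [← mul_div_assoc, mul_div_mul_left _ _ h.ne']
    refine this.trans ?_
    have e : ∑ t : A × B × C, PX (t.1, t.2.2) * PY (t.2.1, t.2.2) / PZ t.2.2 =
        ∑ c, (∑ a, PX (a, c)) * (∑ b, PY (b, c)) / PZ c := by
      simp only [Fintype.sum_prod_type]
      simp only [Finset.sum_mul_sum, Finset.sum_div]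
      conv_rhs => rw [Finset.sum_comm]
      exact Finset.sum_congr rfl fun a _ => Finset.sum_comm
    rw [e, ← (isPMF_dist hp Z).2]
    refine Finset.sum_le_sum fun c _ => ?_
    have i1 : ∑ a, PX (a, c) = PZ c := dist_marg p X Z c
    have i2 : ∑ b, PY (b, c) = PZ c := dist_marg p Y Z c
    rw [i1, i2, mul_self_div_self]
  rw [Ex_sub, Ex_sub, Ex_add, Ex_add, Ex_const hp] at key
  change (Ex p fun ω => Real.log (P (X ω, Y ω, Z ω))) = _ at e1
  change (Ex p fun ω => Real.log (PZ (Z ω))) = _ at e2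
  change (Ex p fun ω => Real.log (PX (X ω, Z ω))) = _ at e3
  change (Ex p fun ω => Real.log (PY (Y ω, Z ω))) = _ at e4
  linarith

lemma H_pair_le (hp : IsPMF p) (X : Ω → A) (Y : Ω → B) :
    H p (fun ω => (X ω, Y ω)) ≤ H p X + H p Y := by
  have h := submod hp X Y (fun _ => ())
  have h0 : H p (fun _ => ()) = 0 := by
    have : dist p (fun _ => ()) () = 1 := by
      have := (isPMF_dist hp fun _ => ()).2
      simpa using this
    simp [H, this]
  rw [h0, H_congr (fun ω => (X ω, Y ω, ())) (fun ω => (X ω, Y ω)) (by simp),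
    H_congr (fun ω => (X ω, ())) X (by simp), H_congr (fun ω => (Y ω, ())) Y (by simp)] at h
  linarith

end Entropy

/-- Elimination of the rates: the covering and packing constraints are simultaneously satisfiable
with nonnegative rates. In terms of `t = R0 + ρ1 + ρ2` and `xⱼ = Rⱼ - ρⱼ` the packing constraints
read `t + xⱼ < aⱼ` and `xⱼ < bⱼ`, and the covering constraints are weakest when one of `Rⱼ`, `ρⱼ`
vanishes, according to the sign of `xⱼ`. -/
lemma exists_rates {c0 c01 c02 c012 a1 b1 a2 b2 : ℝ} (h0 : 0 ≤ c0) (h1 : c0 ≤ c01) (h2 : c0 ≤ c02)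
    (h3 : c01 ≤ c012) (h4 : c02 ≤ c012) (g1 : c01 < a1) (g2 : c02 < a2) (g3 : c012 < a1 + b2)
    (g4 : c012 < b1 + a2) (g5 : c012 + c0 < a1 + a2) :
    ∃ R0 R1 R2 ρ1 ρ2 : ℝ, 0 ≤ R0 ∧ 0 ≤ R1 ∧ 0 ≤ R2 ∧ 0 ≤ ρ1 ∧ 0 ≤ ρ2 ∧ c0 < R0 ∧ c01 < R0 + R1 ∧
      c02 < R0 + R2 ∧ c012 < R0 + R1 + R2 ∧ ρ2 + R0 + R1 < a1 ∧ R1 - ρ1 < b1 ∧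
      ρ1 + R0 + R2 < a2 ∧ R2 - ρ2 < b2 := by
  obtain ⟨t, ht, ht'⟩ : ∃ t, max (max c0 (c01 - b1)) (max (c02 - b2) (c012 - b1 - b2)) < t ∧
      t < a1 + a2 - c012 := by
    refine exists_between ?_
    simp only [max_lt_iff]
    refine ⟨⟨?_, ?_⟩, ?_, ?_⟩ <;> linarith
  simp only [max_lt_iff] at ht
  obtain ⟨⟨t1, t2⟩, t3, t4⟩ := ht
  obtain ⟨x1, x2, u1, u2, v1, v2, w1, w2, w⟩ : ∃ x1 x2 : ℝ, c01 - t < x1 ∧ c02 - t < x2 ∧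
      x1 < a1 - t ∧ x2 < a2 - t ∧ x1 < b1 ∧ x2 < b2 ∧ c012 - t < x1 + x2 := by
    have m1 : c01 - t < min (a1 - t) b1 := lt_min (by linarith) (by linarith)
    have m2 : c02 - t < min (a2 - t) b2 := lt_min (by linarith) (by linarith)
    have m3 : c012 - t < min (a1 - t) b1 + min (a2 - t) b2 := by
      rcases min_choice (a1 - t) b1 with h | h <;> rcases min_choice (a2 - t) b2 with h' | h' <;>
        rw [h, h'] <;> linarith
    have n1 := min_le_left (a1 - t) b1
    have n2 := min_le_right (a1 - t) b1
    have n3 := min_le_left (a2 - t) b2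
    have n4 := min_le_right (a2 - t) b2
    obtain ⟨ε, e0, e1⟩ : ∃ ε : ℝ, 0 < ε ∧ ε < min (min (min (a1 - t) b1 - (c01 - t))
        (min (a2 - t) b2 - (c02 - t))) ((min (a1 - t) b1 + min (a2 - t) b2 - (c012 - t)) / 2) := by
      refine exists_between ?_
      simp only [lt_min_iff]
      refine ⟨⟨?_, ?_⟩, ?_⟩ <;> linarith
    have e2 := e1.trans_le ((min_le_left _ _).trans (min_le_left _ _))
    have e3 := e1.trans_le ((min_le_left _ _).trans (min_le_right _ _))
    have e4 := e1.trans_le (min_le_right _ _)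
    refine ⟨min (a1 - t) b1 - ε, min (a2 - t) b2 - ε, ?_, ?_, ?_, ?_, ?_, ?_, ?_⟩ <;> linarith
  rcases le_total 0 x1 with s1 | s1 <;> rcases le_total 0 x2 with s2 | s2
  · exact ⟨t, x1, x2, 0, 0, by constructorm* _ ∧ _ <;> linarith⟩
  · exact ⟨t + x2, x1, 0, 0, -x2, by constructorm* _ ∧ _ <;> linarith⟩
  · exact ⟨t + x1, 0, x2, -x1, 0, by constructorm* _ ∧ _ <;> linarith⟩
  · exact ⟨t + x1 + x2, 0, 0, -x1, -x2, by constructorm* _ ∧ _ <;> linarith⟩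

end CSBC

/-! ### The joint law of sources, auxiliary variables and channel -/

namespace CSBC

section Joint
variable {σ1 σ2 U0 U1 U2 X Y1 Y2 : Type*} [Fintype σ1] [Fintype σ2] [Fintype U0]
  [Fintype U1] [Fintype U2] [Fintype X] [Fintype Y1] [Fintype Y2]
  {q : σ1 × σ2 → ℝ} (hq : IsPMF q) {r : σ1 × σ2 → U0 × U1 × U2 × X → ℝ} (hr : ∀ s, IsPMF (r s))
  {W : X → Y1 × Y2 → ℝ} (hW : ∀ x, IsPMF (W x))

lemma Ex_jointLaw (F : σ1 × σ2 × U0 × U1 × U2 × X × Y1 × Y2 → ℝ) :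
    Ex (jointLaw q r W) F = ∑ s, q s * ∑ u0, ∑ u1, ∑ u2, ∑ x, r s (u0, u1, u2, x) *
      ∑ y, W x y * F (s.1, s.2, u0, u1, u2, x, y.1, y.2) := by
  simp only [Ex, jointLaw, Fintype.sum_prod_type, Finset.mul_sum, mul_assoc]

include hq hr hW in
lemma isPMF_jointLaw : IsPMF (jointLaw q r W) := by
  refine ⟨fun ω => mul_nonneg (mul_nonneg (hq.1 _) ((hr _).1 _)) ((hW _).1 _), ?_⟩
  have h := Ex_jointLaw (q := q) (r := r) (W := W) fun _ => 1
  have h1 : ∀ s, ∑ u0, ∑ u1, ∑ u2, ∑ x, r s (u0, u1, u2, x) = 1 := by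
    intro s
    have := (hr s).2
    simpa only [Fintype.sum_prod_type] using this
  simp only [mul_one, (hW _).2, h1, hq.2] at h
  simpa [Ex] using h

/-- Sequences of tuples are tuples of sequences. -/
def unzip (σ1 σ2 U0 U1 U2 X Y1 Y2 : Type*) (n : ℕ) :
    ((Fin n → σ1 × σ2) × (Fin n → U0) × (Fin n → U1) × (Fin n → U2) × (Fin n → X) ×
      (Fin n → Y1 × Y2)) ≃ (Fin n → σ1 × σ2 × U0 × U1 × U2 × X × Y1 × Y2) where
  toFun t := fun i => ((t.1 i).1, (t.1 i).2, t.2.1 i, t.2.2.1 i, t.2.2.2.1 i, t.2.2.2.2.1 i,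
    (t.2.2.2.2.2 i).1, (t.2.2.2.2.2 i).2)
  invFun ω := (fun i => ((ω i).1, (ω i).2.1), fun i => (ω i).2.2.1, fun i => (ω i).2.2.2.1,
    fun i => (ω i).2.2.2.2.1, fun i => (ω i).2.2.2.2.2.1,
    fun i => ((ω i).2.2.2.2.2.2.1, (ω i).2.2.2.2.2.2.2))
  left_inv _ := rfl
  right_inv _ := rfl

/-- Expectations under the `n`-fold product of the joint law, written as iterated sums over the
source, the auxiliary sequences, the input and the outputs. -/
lemma jointLaw_conv (n : ℕ) (F : (Fin n → σ1 × σ2) → (Fin n → U0) → (Fin n → U1) →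
      (Fin n → U2) → (Fin n → Y1 × Y2) → ℝ) :
      ∑ s : Fin n → σ1 × σ2, (∏ i, q (s i)) * ∑ u0 : Fin n → U0, ∑ u1 : Fin n → U1,
        ∑ u2 : Fin n → U2, ∑ x : Fin n → X, (∏ i, r (s i) (u0 i, u1 i, u2 i, x i)) *
          ∑ y : Fin n → Y1 × Y2, (∏ i, W (x i) (y i)) * F s u0 u1 u2 y =
      Ex (wpi fun _ : Fin n => jointLaw q r W) fun ω => F (fun i => ((ω i).1, (ω i).2.1))
        (fun i => (ω i).2.2.1) (fun i => (ω i).2.2.2.1) (fun i => (ω i).2.2.2.2.1)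
        (fun i => ((ω i).2.2.2.2.2.2.1, (ω i).2.2.2.2.2.2.2)) := by
  unfold Ex
  rw [← (unzip σ1 σ2 U0 U1 U2 X Y1 Y2 n).sum_comp]
  rw [Fintype.sum_prod_type]
  refine Finset.sum_congr rfl fun s _ => ?_
  rw [Fintype.sum_prod_type, Finset.mul_sum]
  refine Finset.sum_congr rfl fun u0 _ => ?_
  rw [Fintype.sum_prod_type, Finset.mul_sum]
  refine Finset.sum_congr rfl fun u1 _ => ?_
  rw [Fintype.sum_prod_type, Finset.mul_sum]
  refine Finset.sum_congr rfl fun u2 _ => ?_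
  rw [Fintype.sum_prod_type, Finset.mul_sum]
  refine Finset.sum_congr rfl fun x _ => ?_
  rw [← mul_assoc, Finset.mul_sum]
  refine Finset.sum_congr rfl fun y _ => ?_
  simp only [unzip, Equiv.coe_fn_mk, wpi, jointLaw, Finset.prod_mul_distrib, Prod.mk.eta]
  ring

include hW in
lemma jointLaw_marg (s : σ1 × σ2) (u0 : U0) (u1 : U1) (u2 : U2) :
    dist (jointLaw q r W) (fun ω => ((ω.1, ω.2.1), ω.2.2.1, ω.2.2.2.1, ω.2.2.2.2.1))
      (s, u0, u1, u2) = q s * ∑ x, r s (u0, u1, u2, x) := by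
  rw [dist_eq_Ex, Ex_jointLaw]
  simp only [← Finset.sum_mul, (hW _).2, one_mul, Prod.mk.eta]
  rw [Fintype.sum_eq_single s, Fintype.sum_eq_single u0, Fintype.sum_eq_single u1,
    Fintype.sum_eq_single u2]
  · rw [ind_true rfl, mul_one]
  all_goals
    intro z hz
    simp [ind, hz]

include hr hW in
lemma jointLaw_src (s : σ1 × σ2) :
    dist (jointLaw q r W) (fun ω => (ω.1, ω.2.1)) s = q s := by
  have h1 : ∀ s, ∑ u0, ∑ u1, ∑ u2, ∑ x, r s (u0, u1, u2, x) = 1 := by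
    intro s
    have := (hr s).2
    simpa only [Fintype.sum_prod_type] using this
  rw [dist_eq_Ex, Ex_jointLaw]
  simp only [← Finset.sum_mul, (hW _).2, one_mul, Prod.mk.eta, h1]
  exact sum_ind_eq' s q

include hq hr hW in
/-- The coding theorem without common function: five inequalities in the entropies of the joint
law suffice for reliable transmission. -/
theorem reliable_of_five {p : σ1 × σ2 × U0 × U1 × U2 × X × Y1 × Y2 → ℝ} (hpe : p = jointLaw q r W)
    (g1 : - H p (fun ω => ((ω.1, ω.2.1), ω.2.2.1, ω.2.2.2.1)) + H p (fun ω => (ω.1, ω.2.1)) <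
      - H p (fun ω => (ω.2.2.2.1, ω.1, ω.2.2.1, ω.2.2.2.2.2.2.1))
      + H p (fun ω => ω.2.2.2.2.2.2.1))
    (g2 : - H p (fun ω => ((ω.1, ω.2.1), ω.2.2.1, ω.2.2.2.2.1)) + H p (fun ω => (ω.1, ω.2.1)) <
      - H p (fun ω => (ω.2.2.2.2.1, ω.2.1, ω.2.2.1, ω.2.2.2.2.2.2.2))
      + H p (fun ω => ω.2.2.2.2.2.2.2))
    (g3 : - H p (fun ω => ((ω.1, ω.2.1), ω.2.2.1, ω.2.2.2.1, ω.2.2.2.2.1))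
        + H p (fun ω => (ω.1, ω.2.1)) <
      - H p (fun ω => (ω.2.2.2.1, ω.1, ω.2.2.1, ω.2.2.2.2.2.2.1))
      + H p (fun ω => ω.2.2.2.2.2.2.1)
      - H p (fun ω => (ω.2.2.2.2.1, ω.2.1, ω.2.2.1, ω.2.2.2.2.2.2.2))
      + H p (fun ω => (ω.2.2.1, ω.2.2.2.2.2.2.2)))
    (g4 : - H p (fun ω => ((ω.1, ω.2.1), ω.2.2.1, ω.2.2.2.1, ω.2.2.2.2.1))
        + H p (fun ω => (ω.1, ω.2.1)) <
      - H p (fun ω => (ω.2.2.2.1, ω.1, ω.2.2.1, ω.2.2.2.2.2.2.1))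
      + H p (fun ω => (ω.2.2.1, ω.2.2.2.2.2.2.1))
      - H p (fun ω => (ω.2.2.2.2.1, ω.2.1, ω.2.2.1, ω.2.2.2.2.2.2.2))
      + H p (fun ω => ω.2.2.2.2.2.2.2))
    (g5 : - H p (fun ω => ((ω.1, ω.2.1), ω.2.2.1, ω.2.2.2.1, ω.2.2.2.2.1))
        + 2 * H p (fun ω => (ω.1, ω.2.1)) - H p (fun ω => ((ω.1, ω.2.1), ω.2.2.1)) <
      - H p (fun ω => (ω.2.2.2.1, ω.1, ω.2.2.1, ω.2.2.2.2.2.2.1))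
      + H p (fun ω => ω.2.2.2.2.2.2.1)
      - H p (fun ω => (ω.2.2.2.2.1, ω.2.1, ω.2.2.1, ω.2.2.2.2.2.2.2))
      + H p (fun ω => ω.2.2.2.2.2.2.2)) :
    Reliable q W := by
  have hp : IsPMF p := hpe ▸ isPMF_jointLaw hq hr hW
  have m0 := H_pair_le hp (fun ω => (ω.1, ω.2.1)) (fun ω => ω.2.2.1)
  have m1 := submod hp (fun ω => ω.2.1) (fun ω => ω.2.2.2.1) (fun ω => (ω.1, ω.2.2.1))
  have m2 := submod hp (fun ω => ω.1) (fun ω => ω.2.2.2.2.1) (fun ω => (ω.2.1, ω.2.2.1))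
  have m3 := submod hp (fun ω => (ω.1, ω.2.2.2.1)) (fun ω => ω.2.2.2.2.1)
    (fun ω => (ω.2.1, ω.2.2.1))
  have m4 := submod hp (fun ω => (ω.2.1, ω.2.2.2.2.1)) (fun ω => ω.2.2.2.1)
    (fun ω => (ω.1, ω.2.2.1))
  rw [H_congr (p := p) (fun ω => (ω.2.1, ω.2.2.2.1, ω.1, ω.2.2.1))
      (fun ω => ((ω.1, ω.2.1), ω.2.2.1, ω.2.2.2.1)) (by intros; simp only [Prod.mk.injEq]; tauto),
    H_congr (p := p) (fun ω => (ω.2.1, ω.1, ω.2.2.1))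
      (fun ω => ((ω.1, ω.2.1), ω.2.2.1)) (by intros; simp only [Prod.mk.injEq]; tauto)] at m1
  rw [H_congr (p := p) (fun ω => (ω.1, ω.2.2.2.2.1, ω.2.1, ω.2.2.1))
      (fun ω => ((ω.1, ω.2.1), ω.2.2.1, ω.2.2.2.2.1)) (by intros; simp only [Prod.mk.injEq]; tauto),
    H_congr (p := p) (fun ω => (ω.1, ω.2.1, ω.2.2.1))
      (fun ω => ((ω.1, ω.2.1), ω.2.2.1)) (by intros; simp only [Prod.mk.injEq]; tauto)] at m2
  rw [H_congr (p := p) (fun ω => ((ω.1, ω.2.2.2.1), ω.2.2.2.2.1, ω.2.1, ω.2.2.1))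
      (fun ω => ((ω.1, ω.2.1), ω.2.2.1, ω.2.2.2.1, ω.2.2.2.2.1))
      (by intros; simp only [Prod.mk.injEq]; tauto),
    H_congr (p := p) (fun ω => ((ω.1, ω.2.2.2.1), ω.2.1, ω.2.2.1))
      (fun ω => ((ω.1, ω.2.1), ω.2.2.1, ω.2.2.2.1))
      (by intros; simp only [Prod.mk.injEq]; tauto)] at m3
  rw [H_congr (p := p) (fun ω => ((ω.2.1, ω.2.2.2.2.1), ω.2.2.2.1, ω.1, ω.2.2.1))
      (fun ω => ((ω.1, ω.2.1), ω.2.2.1, ω.2.2.2.1, ω.2.2.2.2.1))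
      (by intros; simp only [Prod.mk.injEq]; tauto),
    H_congr (p := p) (fun ω => ((ω.2.1, ω.2.2.2.2.1), ω.1, ω.2.2.1))
      (fun ω => ((ω.1, ω.2.1), ω.2.2.1, ω.2.2.2.2.1))
      (by intros; simp only [Prod.mk.injEq]; tauto)] at m4
  obtain ⟨R0, R1, R2, ρ1, ρ2, r0, r1, r2, l1, l2, e1, e2, e3, e4, e5, e6, e7, e8⟩ := exists_rates
    (c0 := - H p (fun ω => ((ω.1, ω.2.1), ω.2.2.1)) + H p (fun ω => (ω.1, ω.2.1))
      + H p (fun ω => ω.2.2.1))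
    (c01 := - H p (fun ω => ((ω.1, ω.2.1), ω.2.2.1, ω.2.2.2.1)) + H p (fun ω => (ω.1, ω.2.1))
      + H p (fun ω => ω.2.2.1) + H p (fun ω => (ω.2.2.2.1, ω.1, ω.2.2.1))
      - H p (fun ω => (ω.1, ω.2.2.1)))
    (c02 := - H p (fun ω => ((ω.1, ω.2.1), ω.2.2.1, ω.2.2.2.2.1)) + H p (fun ω => (ω.1, ω.2.1))
      + H p (fun ω => ω.2.2.1) + H p (fun ω => (ω.2.2.2.2.1, ω.2.1, ω.2.2.1))
      - H p (fun ω => (ω.2.1, ω.2.2.1)))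
    (c012 := - H p (fun ω => ((ω.1, ω.2.1), ω.2.2.1, ω.2.2.2.1, ω.2.2.2.2.1))
      + H p (fun ω => (ω.1, ω.2.1)) + H p (fun ω => ω.2.2.1)
      + H p (fun ω => (ω.2.2.2.1, ω.1, ω.2.2.1)) - H p (fun ω => (ω.1, ω.2.2.1))
      + H p (fun ω => (ω.2.2.2.2.1, ω.2.1, ω.2.2.1)) - H p (fun ω => (ω.2.1, ω.2.2.1)))
    (a1 := - H p (fun ω => (ω.2.2.2.1, ω.1, ω.2.2.1, ω.2.2.2.2.2.2.1)) + H p (fun ω => ω.2.2.1)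
      + H p (fun ω => (ω.2.2.2.1, ω.1, ω.2.2.1)) - H p (fun ω => (ω.1, ω.2.2.1))
      + H p (fun ω => ω.2.2.2.2.2.2.1))
    (b1 := - H p (fun ω => (ω.2.2.2.1, ω.1, ω.2.2.1, ω.2.2.2.2.2.2.1))
      + H p (fun ω => (ω.2.2.1, ω.2.2.2.2.2.2.1))
      + H p (fun ω => (ω.2.2.2.1, ω.1, ω.2.2.1)) - H p (fun ω => (ω.1, ω.2.2.1)))
    (a2 := - H p (fun ω => (ω.2.2.2.2.1, ω.2.1, ω.2.2.1, ω.2.2.2.2.2.2.2)) + H p (fun ω => ω.2.2.1)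
      + H p (fun ω => (ω.2.2.2.2.1, ω.2.1, ω.2.2.1)) - H p (fun ω => (ω.2.1, ω.2.2.1))
      + H p (fun ω => ω.2.2.2.2.2.2.2))
    (b2 := - H p (fun ω => (ω.2.2.2.2.1, ω.2.1, ω.2.2.1, ω.2.2.2.2.2.2.2))
      + H p (fun ω => (ω.2.2.1, ω.2.2.2.2.2.2.2))
      + H p (fun ω => (ω.2.2.2.2.1, ω.2.1, ω.2.2.1)) - H p (fun ω => (ω.2.1, ω.2.2.1)))
    (by linarith) (by linarith) (by linarith) (by linarith) (by linarith) (by linarith)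
    (by linarith) (by linarith) (by linarith) (by linarith)
  refine reliable_of_rates hp hq hr hW (fun ω => (ω.1, ω.2.1)) (fun ω => ω.2.2.1)
    (fun ω => ω.2.2.2.1) (fun ω => ω.2.2.2.2.1) (fun ω => (ω.2.2.2.2.2.2.1, ω.2.2.2.2.2.2.2))
    ?_ ?_ ?_ r0 r1 r2 l1 l2 e1 e2 e3 e4 e5 e6 e7 e8
  · rw [hpe]; exact jointLaw_conv
  · rw [hpe]; exact jointLaw_src hr hW
  · rw [hpe]; exact jointLaw_marg hW

end Joint
end CSBC

/-! ### Common function and conclusion -/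

/-- Han–Costa coding theorem.
With `K = f(S1) = g(S2)` a common function of the two sources (almost surely), if
there exist finite auxiliary alphabets and a conditional pmf `p(u0,u1,u2,x|s1,s2)`
such that under the induced joint law the five Han–Costa inequalities hold, then
the sources can be reliably transmitted over the DM-BC `W`. -/
theorem han_costa_coding
    {σ1 σ2 𝒳 𝒴1 𝒴2 Kt : Type} [Fintype σ1] [Fintype σ2] [Fintype 𝒳]
    [Fintype 𝒴1] [Fintype 𝒴2] [Fintype Kt]
    (q : σ1 × σ2 → ℝ) (hq : IsPMF q)
    (W : 𝒳 → 𝒴1 × 𝒴2 → ℝ) (hW : ∀ x, IsPMF (W x))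
    (f : σ1 → Kt) (g : σ2 → Kt)
    (hfg : ∀ s : σ1 × σ2, q s ≠ 0 → f s.1 = g s.2)
    (hyp : ∃ (𝒰0 𝒰1 𝒰2 : Type) (_ : Fintype 𝒰0) (_ : Fintype 𝒰1) (_ : Fintype 𝒰2)
      (r : σ1 × σ2 → 𝒰0 × 𝒰1 × 𝒰2 × 𝒳 → ℝ),
      (∀ s, IsPMF (r s)) ∧
      HCfive (jointLaw q r W)
        (fun ω => ω.1) (fun ω => ω.2.1) (fun ω => ω.2.2.1) (fun ω => ω.2.2.2.1)
        (fun ω => ω.2.2.2.2.1) (fun ω => ω.2.2.2.2.2.2.1) (fun ω => ω.2.2.2.2.2.2.2)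
        (fun ω => f ω.1)) :
    Reliable q W := by
  obtain ⟨𝒰0, 𝒰1, 𝒰2, _, _, _, r, hr, hc⟩ := hyp
  -- The common function is made part of the common auxiliary variable.
  let r' : σ1 × σ2 → (Kt × 𝒰0) × 𝒰1 × 𝒰2 × 𝒳 → ℝ :=
    fun s u => r s (u.1.2, u.2) * ind (u.1.1 = f s.1)
  have hr' : ∀ s, IsPMF (r' s) := by
    intro s
    refine ⟨fun u => mul_nonneg ((hr s).1 _) (ind_nonneg _), ?_⟩
    rw [← (hr s).2]
    simp only [r', Fintype.sum_prod_type]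
    rw [Fintype.sum_eq_single (f s.1)]
    · simp [ind]
    · intro k hk
      simp [ind, hk]
  let ι : σ1 × σ2 × 𝒰0 × 𝒰1 × 𝒰2 × 𝒳 × 𝒴1 × 𝒴2 →
      σ1 × σ2 × (Kt × 𝒰0) × 𝒰1 × 𝒰2 × 𝒳 × 𝒴1 × 𝒴2 :=
    fun ω => (ω.1, ω.2.1, (f ω.1, ω.2.2.1), ω.2.2.2)
  have hι : ∀ F, Ex (jointLaw q r' W) F = Ex (jointLaw q r W) fun ω => F (ι ω) := by
    intro F
    rw [Ex_jointLaw, Ex_jointLaw]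
    refine Finset.sum_congr rfl fun s _ => ?_
    rw [Fintype.sum_prod_type, Fintype.sum_eq_single (f s.1)]
    · simp [ind, r', ι]
    · intro k hk
      simp [ind, hk, r']
  have hmap := fun {A : Type} [Fintype A]
    (Z : σ1 × σ2 × (Kt × 𝒰0) × 𝒰1 × 𝒰2 × 𝒳 × 𝒴1 × 𝒴2 → A) => H_map ι hι Z
  generalize hpe : jointLaw q r W = p at *
  have hK : ∀ ω, p ω ≠ 0 → f ω.1 = g ω.2.1 := by
    intro ω h
    refine hfg (ω.1, ω.2.1) fun h0 => h ?_
    rw [← hpe, jointLaw, h0, zero_mul, zero_mul]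
  obtain ⟨h1, h2, h3, h4, h5⟩ := hc
  -- Each entropy in the hypotheses is brought to the form in which it occurs in `reliable_of_five`,
  -- using that `K` is determined by `S1` and, on the support of `p`, by `S2`.
  unfold I2 CI at h1 h2 h3 h4 h5
  have c1 : H p (fun ω => (ω.2.2.1, ω.2.2.2.1, ω.1)) =
      H p (fun ω => (ω.2.2.2.1, ω.1, (f ω.1, ω.2.2.1))) := by
    exact H_congr _ _ fun ω ω' h h' => by grind
  have c2 : H p (fun ω => ((ω.2.2.1, ω.2.2.2.1, ω.1), ω.2.2.2.2.2.2.1)) =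
      H p (fun ω => (ω.2.2.2.1, ω.1, (f ω.1, ω.2.2.1), ω.2.2.2.2.2.2.1)) := by
    exact H_congr _ _ fun ω ω' h h' => by grind
  have c3 : H p (fun ω => ((ω.2.2.1, ω.2.2.2.1), ω.1)) =
      H p (fun ω => (ω.2.2.2.1, ω.1, (f ω.1, ω.2.2.1))) := by
    exact H_congr _ _ fun ω ω' h h' => by grind
  have c4 : H p (fun ω => (ω.2.1, ω.1)) =
      H p (fun ω => (ω.1, ω.2.1)) := by
    exact H_congr _ _ fun ω ω' h h' => by grind
  have c5 : H p (fun ω => ((ω.2.2.1, ω.2.2.2.1), ω.2.1, ω.1)) =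
      H p (fun ω => ((ω.1, ω.2.1), (f ω.1, ω.2.2.1), ω.2.2.2.1)) := by
    exact H_congr _ _ fun ω ω' h h' => by grind
  have c6 : H p (fun ω => (ω.2.2.1, ω.2.2.2.2.1, ω.2.1)) =
      H p (fun ω => (ω.2.2.2.2.1, ω.2.1, (f ω.1, ω.2.2.1))) := by
    exact H_congr _ _ fun ω ω' h h' => by grind
  have c7 : H p (fun ω => ((ω.2.2.1, ω.2.2.2.2.1, ω.2.1), ω.2.2.2.2.2.2.2)) =
      H p (fun ω => (ω.2.2.2.2.1, ω.2.1, (f ω.1, ω.2.2.1), ω.2.2.2.2.2.2.2)) := by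
    exact H_congr _ _ fun ω ω' h h' => by grind
  have c8 : H p (fun ω => ((ω.2.2.1, ω.2.2.2.2.1), ω.2.1)) =
      H p (fun ω => (ω.2.2.2.2.1, ω.2.1, (f ω.1, ω.2.2.1))) := by
    exact H_congr _ _ fun ω ω' h h' => by grind
  have c9 : H p (fun ω => ((ω.2.2.1, ω.2.2.2.2.1), ω.1, ω.2.1)) =
      H p (fun ω => ((ω.1, ω.2.1), (f ω.1, ω.2.2.1), ω.2.2.2.2.1)) := by
    exact H_congr _ _ fun ω ω' h h' => by grind
  have c10 : H p (fun ω => (f ω.1, ω.2.2.1, ω.2.2.2.1, ω.1)) =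
      H p (fun ω => (ω.2.2.2.1, ω.1, (f ω.1, ω.2.2.1))) := by
    exact H_congr _ _ fun ω ω' h h' => by grind
  have c11 : H p (fun ω => ((f ω.1, ω.2.2.1, ω.2.2.2.1, ω.1), ω.2.2.2.2.2.2.1)) =
      H p (fun ω => (ω.2.2.2.1, ω.1, (f ω.1, ω.2.2.1), ω.2.2.2.2.2.2.1)) := by
    exact H_congr _ _ fun ω ω' h h' => by grind
  have c12 : H p (fun ω => ((ω.2.2.2.2.1, ω.2.1), f ω.1, ω.2.2.1)) =
      H p (fun ω => (ω.2.2.2.2.1, ω.2.1, (f ω.1, ω.2.2.1))) := by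
    exact H_congr _ _ fun ω ω' h h' => by grind
  have c13 : H p (fun ω => (ω.2.2.2.2.2.2.2, f ω.1, ω.2.2.1)) =
      H p (fun ω => ((f ω.1, ω.2.2.1), ω.2.2.2.2.2.2.2)) := by
    exact H_congr _ _ fun ω ω' h h' => by grind
  have c14 : H p (fun ω => ((ω.2.2.2.2.1, ω.2.1), ω.2.2.2.2.2.2.2, f ω.1, ω.2.2.1)) =
      H p (fun ω => (ω.2.2.2.2.1, ω.2.1, (f ω.1, ω.2.2.1), ω.2.2.2.2.2.2.2)) := by
    exact H_congr _ _ fun ω ω' h h' => by grind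
  have c15 : H p (fun ω => ((ω.2.2.2.1, ω.1), f ω.1, ω.2.2.1)) =
      H p (fun ω => (ω.2.2.2.1, ω.1, (f ω.1, ω.2.2.1))) := by
    exact H_congr _ _ fun ω ω' h h' => by grind
  have c16 : H p (fun ω => ((ω.2.2.2.1, ω.1), (ω.2.2.2.2.1, ω.2.1), f ω.1, ω.2.2.1)) =
      H p (fun ω => ((ω.1, ω.2.1), (f ω.1, ω.2.2.1), ω.2.2.2.1, ω.2.2.2.2.1)) := by
    exact H_congr _ _ fun ω ω' h h' => by grind
  have c17 : H p (fun ω => (ω.2.2.2.2.2.2.1, f ω.1, ω.2.2.1)) =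
      H p (fun ω => ((f ω.1, ω.2.2.1), ω.2.2.2.2.2.2.1)) := by
    exact H_congr _ _ fun ω ω' h h' => by grind
  have c18 : H p (fun ω => ((ω.2.2.2.1, ω.1), ω.2.2.2.2.2.2.1, f ω.1, ω.2.2.1)) =
      H p (fun ω => (ω.2.2.2.1, ω.1, (f ω.1, ω.2.2.1), ω.2.2.2.2.2.2.1)) := by
    exact H_congr _ _ fun ω ω' h h' => by grind
  have c19 : H p (fun ω => (f ω.1, ω.2.2.1, ω.2.2.2.2.1, ω.2.1)) =
      H p (fun ω => (ω.2.2.2.2.1, ω.2.1, (f ω.1, ω.2.2.1))) := by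
    exact H_congr _ _ fun ω ω' h h' => by grind
  have c20 : H p (fun ω => ((f ω.1, ω.2.2.1, ω.2.2.2.2.1, ω.2.1), ω.2.2.2.2.2.2.2)) =
      H p (fun ω => (ω.2.2.2.2.1, ω.2.1, (f ω.1, ω.2.2.1), ω.2.2.2.2.2.2.2)) := by
    exact H_congr _ _ fun ω ω' h h' => by grind
  refine reliable_of_five hq hr' hW rfl ?_ ?_ ?_ ?_ ?_ <;> simp only [hmap, ι] <;> linarith
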